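/- Let Assumption M hold, let Ω₁, Ω₂ be the events defined from any constants M₁, M₂, M₃, M₄, M₅ > 0 and s* = s₀+m+k, and define Rem_I = √(nF_θ)(θ̂_{ν=0} − θ) − T_n − √(F_θ/n)·∫₀^{π/2}(sin t)·|Ŝ(t)|·⟨a₀, h(t)⟩ dt and Rem_II = √(nF_θ)(θ̂_{ν=0} − θ) − T_n − √(F_θ/n)·⟨a₀, β̂ − β⟩·∫₀^{π/2}(sin t)·|Ŝ(t)| dt. Then there exists a constant M̄ > 0 depending only on (M₁, M₂, M₄, M₅) such that for every u ∈ ℝ with |u| ≤ √n/M̄: max{ E[1_{Ω₁∩Ω₂}·exp(u·Rem_I/(λ₀√s*))], E[1_{Ω₁∩Ω₂}·exp(u·Rem_II/(λ₀√s*))] } ≤ 2·exp(M̄²u²). -/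

import Mathlib

/-!
The estimator is a function of the Gaussian vector `z₀`, and its bias is
`-⟨z₀, XQ₀ h(0)⟩ / ‖z₀‖²`. The idea is to rotate the component of `z₀` orthogonal to the noise into an
independent copy and to follow `f(t) = ⟨P_ε^⊥ z₀, XQ₀ h(t)⟩` from `t = 0` to `t = π/2`.

Pathwise part. For a fixed realisation in `Ω₁ ∩ Ω₂` the Lasso path is Lipschitz (`kkt_stable`,
`PathHyp.lip`), hence differentiable at almost every `t`, with the derivative given by differentiating the KKT
equations on the active set (`lasso_deriv`, `ae_deriv_path`). The derivative of `f` is, up to normalisation,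
`sin t · |Ŝ(t)| · ⟨a₀, h(t)⟩` plus linear forms, products of linear forms and a centred chi-square in the
Gaussian vector `w(t)` driving the path (`core_bound`, `PathHyp.deriv_bound`). All of these are dominated by one
functional `Tfun`, and integrating over `t` bounds both remainders (`PathHyp.rem_bound`).

Probabilistic part. In coordinates where the rows of the design are standard Gaussian,
`(X(0), w(0)) ↦ (X(t), w(t))` is an isometry (`rotL_map`), so `w(t)` is a standard Gaussian vector independent of
`X(t)`, conditionally on the noise. Given `X(t)`, the functional consists of Gaussian linear and quadratic forms
with fixed coefficients, and its exponential moment is at most `2 exp(338 τ²)` for `τ ≤ √n / 52`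
(`lintegral_exp_Tfun`).

Measurability. The Lasso solutions are arbitrary selections and need not be measurable. The functional
along the path is therefore replaced by the measurable `Psi`, a sum over sign patterns of which almost surely at
most one contributes (`le_Psi`, `lintegral_Psi_le`), because a Gaussian design is almost surely injective
on `2N`-sparse vectors when `2N ≤ n` (`ae_inj`). Jensen's inequality in `t` and convexity over the three terms of the
pathwise bound then give a measurable function `Hdom` that dominates both exponentials on `Ω₁ ∩ Ω₂`
(`exp_rem_le`) and has the right integral (`lintegral_Hdom`); `setIntegral_le_of_dom` transfers the bound to the
possibly nonmeasurable event.
-/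

open MeasureTheory ProbabilityTheory Filter
open scoped ENNReal NNReal

noncomputable section

namespace BZ

/-- Euclidean (ℓ2) norm of a finite real vector. -/
def l2 {m : ℕ} (v : Fin m → ℝ) : ℝ := Real.sqrt (∑ i, (v i) ^ 2)

/-- ℓ1 norm. -/
def l1 {m : ℕ} (v : Fin m → ℝ) : ℝ := ∑ i, |v i|

/-- Euclidean inner product. -/
def dot {m : ℕ} (a b : Fin m → ℝ) : ℝ := ∑ i, a i * b i

/-- Support of a vector, as a finset. -/
def suppF {m : ℕ} (v : Fin m → ℝ) : Finset (Fin m) := Finset.univ.filter fun i => v i ≠ 0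

/-- ℓ0 "norm": number of nonzero coordinates. -/
def l0 {m : ℕ} (v : Fin m → ℝ) : ℕ := (suppF v).card

/-- ℓ∞ norm. -/
def linf {m : ℕ} (v : Fin m → ℝ) : ℝ := sSup (Set.range fun i => |v i|)

/-- Sign function. -/
def sgn (x : ℝ) : ℝ := if 0 < x then 1 else if x < 0 then -1 else 0

/-- Matrix (given as a function) times a vector. -/
def mulVec' {n p : ℕ} (X : Fin n → Fin p → ℝ) (b : Fin p → ℝ) : Fin n → ℝ :=
  fun i => ∑ j, X i j * b j

/-- Transposed matrix times a vector: `Xᵀ r`. -/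
def tmulVec {n p : ℕ} (X : Fin n → Fin p → ℝ) (r : Fin n → ℝ) : Fin p → ℝ :=
  fun j => ∑ i, X i j * r i

/-- Gram matrix `XᵀX`. -/
def gramOf {n p : ℕ} (X : Fin n → Fin p → ℝ) : Matrix (Fin p) (Fin p) ℝ :=
  Matrix.of fun j k => ∑ i, X i j * X i k

/-- The Lasso objective `‖y - Xb‖₂²/(2n) + λ‖b‖₁`. -/
def lassoObj {n p : ℕ} (y : Fin n → ℝ) (X : Fin n → Fin p → ℝ) (lam : ℝ) (b : Fin p → ℝ) : ℝ :=
  (l2 (fun i => y i - mulVec' X b i)) ^ 2 / (2 * n) + lam * l1 b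

/-- `bhat` is a Lasso solution. -/
def IsLasso {n p : ℕ} (y : Fin n → ℝ) (X : Fin n → Fin p → ℝ) (lam : ℝ) (bhat : Fin p → ℝ) :
    Prop :=
  ∀ b : Fin p → ℝ, lassoObj y X lam bhat ≤ lassoObj y X lam b

/-- Quadratic form `vᵀ M v`. -/
def quadForm {m : ℕ} (M : Matrix (Fin m) (Fin m) ℝ) (v : Fin m → ℝ) : ℝ :=
  ∑ i, ∑ j, v i * M i j * v j

/-- Principal submatrix `M_{A,A}` indexed by a finset `A`. -/
def subMat {m : ℕ} (M : Matrix (Fin m) (Fin m) ℝ) (A : Finset (Fin m)) :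
    Matrix {x // x ∈ A} {x // x ∈ A} ℝ := Matrix.of fun i j => M i.1 j.1

/-- Bilinear form `(u_A)ᵀ (M_{A,A})⁻¹ v_A`. -/
def subBilinInv {m : ℕ} (M : Matrix (Fin m) (Fin m) ℝ) (A : Finset (Fin m)) (u v : Fin m → ℝ) :
    ℝ :=
  ∑ i : {x // x ∈ A}, ∑ j : {x // x ∈ A}, u i.1 * (subMat M A)⁻¹ i j * v j.1

/-- Smallest eigenvalue of `M_{A,A}` (Rayleigh quotient formulation). -/
def rayleighMin {m : ℕ} (M : Matrix (Fin m) (Fin m) ℝ) (A : Finset (Fin m)) : ℝ :=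
  sInf {c | ∃ v : Fin m → ℝ, (∀ j ∉ A, v j = 0) ∧ l2 v = 1 ∧ c = quadForm M v}

/-- Largest eigenvalue of `M_{A,A}` (Rayleigh quotient formulation). -/
def rayleighMax {m : ℕ} (M : Matrix (Fin m) (Fin m) ℝ) (A : Finset (Fin m)) : ℝ :=
  sSup {c | ∃ v : Fin m → ℝ, (∀ j ∉ A, v j = 0) ∧ l2 v = 1 ∧ c = quadForm M v}

/-- Sparse minimal eigenvalue `φ_min(m, B; M)`. -/
def phiMin {m : ℕ} (mm : ℕ) (B : Finset (Fin m)) (M : Matrix (Fin m) (Fin m) ℝ) : ℝ :=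
  sInf {c | ∃ A : Finset (Fin m), (A \ B).card = mm ∧ c = rayleighMin M A}

/-- Sparse maximal eigenvalue `φ_max(m, B; M)`. -/
def phiMax {m : ℕ} (mm : ℕ) (B : Finset (Fin m)) (M : Matrix (Fin m) (Fin m) ℝ) : ℝ :=
  sSup {c | ∃ A : Finset (Fin m), (A \ B).card = mm ∧ c = rayleighMax M A}

/-- Sparse condition number `φ_cond(m; B, M)`. -/
def phiCond {m : ℕ} (mm : ℕ) (B : Finset (Fin m)) (M : Matrix (Fin m) (Fin m) ℝ) : ℝ :=
  sSup {c | ∃ A : Finset (Fin m), (A \ B).card ≤ max 1 mm ∧ c = rayleighMax M A / rayleighMin M A}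

/-- Operator (spectral) norm of a square matrix. -/
def opNormM {m : ℕ} (M : Matrix (Fin m) (Fin m) ℝ) : ℝ :=
  sSup {c | ∃ v : Fin m → ℝ, l2 v = 1 ∧ c = l2 (M.mulVec v)}

/-- Operator norm of a rectangular matrix given as a function. -/
def opNormF {n p : ℕ} (M : Fin n → Fin p → ℝ) : ℝ :=
  sSup {c | ∃ v : Fin p → ℝ, l2 v = 1 ∧ c = l2 (mulVec' M v)}

section Prob

variable {Ω : Type*} [MeasureSpace Ω]

/-- `W n = O_P(a n)`. -/
def BigOP (W : ℕ → Ω → ℝ) (a : ℕ → ℝ) : Prop :=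
  ∀ γ : ℝ, 0 < γ → ∃ K : ℝ, ∃ N : ℕ, ∀ n, N ≤ n →
    (volume {ω | K * a n < |W n ω|}).toReal ≤ γ

/-- `W n = o_P(1)`. -/
def LittleOP (W : ℕ → Ω → ℝ) : Prop :=
  ∀ δ : ℝ, 0 < δ → Tendsto (fun n => (volume {ω | δ < |W n ω|}).toReal) atTop (nhds 0)

/-- `W n` is stochastically unbounded. -/
def StochUnbounded (W : ℕ → Ω → ℝ) : Prop :=
  ¬ ∀ γ : ℝ, 0 < γ → ∃ M : ℝ,
      Filter.limsup (fun n => (volume {ω | M < |W n ω|}).toReal) atTop ≤ γ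

/-- Convergence in distribution to the standard normal law (via CDFs). -/
def TendstoNormal (Z : ℕ → Ω → ℝ) : Prop :=
  ∀ t : ℝ, Tendsto (fun n => (volume {ω | Z n ω ≤ t}).toReal) atTop
    (nhds ((gaussianReal 0 1 (Set.Iic t)).toReal))

/-- `e : Ω → ℝⁿ` is a centered Gaussian vector with covariance `v · I_n`. -/
def IsoGaussVec (nn : ℕ) (v : ℝ) (e : Ω → Fin nn → ℝ) : Prop :=
  Measurable e ∧
    Measure.map e volume = Measure.pi (fun _ : Fin nn => gaussianReal 0 (Real.toNNReal v))

/-- Gaussian noise `N(0, σ² I_n)`. -/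
def GaussNoise (nn : ℕ) (σ : ℝ) (e : Ω → Fin nn → ℝ) : Prop := IsoGaussVec nn (σ ^ 2) e

/-- Design matrix with i.i.d. `N(0, Sig)` rows. -/
def GaussDesign (nn pp : ℕ) (Sig : Matrix (Fin pp) (Fin pp) ℝ)
    (X : Ω → Fin nn → Fin pp → ℝ) : Prop :=
  Measurable X ∧ ∃ A : Matrix (Fin pp) (Fin pp) ℝ, A.transpose * A = Sig ∧
    Measure.map X volume =
      Measure.map (fun (G : Fin nn → Fin pp → ℝ) (i : Fin nn) (j : Fin pp) => ∑ l, G i l * A l j)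
        (Measure.pi fun _ : Fin nn => Measure.pi fun _ : Fin pp => gaussianReal 0 1)

end Prob

/-- `⟨a₀, Σ⁻¹ a₀⟩`. -/
def quadA0 {p : ℕ} (Sig : Matrix (Fin p) (Fin p) ℝ) (a0 : Fin p → ℝ) : ℝ :=
  dot a0 (Matrix.mulVec Sig⁻¹ a0)

/-- `C₀ = ‖Σ^{-1/2} a₀‖₂`. -/
def C0 {p : ℕ} (Sig : Matrix (Fin p) (Fin p) ℝ) (a0 : Fin p → ℝ) : ℝ :=
  Real.sqrt (quadA0 Sig a0)

/-- Fisher information `F_θ = 1/(σ² ⟨a₀, Σ⁻¹ a₀⟩)`. -/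
def Fisher {p : ℕ} (σ : ℝ) (Sig : Matrix (Fin p) (Fin p) ℝ) (a0 : Fin p → ℝ) : ℝ :=
  1 / (σ ^ 2 * quadA0 Sig a0)

/-- Least favorable direction `u₀ = Σ⁻¹a₀/⟨a₀,Σ⁻¹a₀⟩`. -/
def u0vec {p : ℕ} (Sig : Matrix (Fin p) (Fin p) ℝ) (a0 : Fin p → ℝ) : Fin p → ℝ :=
  fun j => Matrix.mulVec Sig⁻¹ a0 j / quadA0 Sig a0

/-- Ideal score vector `z₀ = X u₀`. -/
def z0vec {n p : ℕ} (X : Fin n → Fin p → ℝ) (Sig : Matrix (Fin p) (Fin p) ℝ)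
    (a0 : Fin p → ℝ) : Fin n → ℝ := mulVec' X (u0vec Sig a0)

/-- Residual vector `y - X bhat` where `y = Xβ + ε`. -/
def residOf {n p : ℕ} (X : Fin n → Fin p → ℝ) (e : Fin n → ℝ) (β bhat : Fin p → ℝ) :
    Fin n → ℝ := fun i => mulVec' X β i + e i - mulVec' X bhat i

/-- Degrees-of-freedom adjusted LDPE. -/
def thetaHat {p : ℕ} (nn : ℕ) (a0 bhat : Fin p → ℝ) (z0 r : Fin nn → ℝ) (ν : ℝ) : ℝ :=
  dot a0 bhat + dot z0 r / ((l2 z0) ^ 2 * (1 - ν / nn))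

/-- De-biased estimate based on an estimated score vector `zhat`. -/
def thetaHatZ {p : ℕ} (nn : ℕ) (a0 bhat : Fin p → ℝ) (zhat z r : Fin nn → ℝ) (ν : ℝ) : ℝ :=
  dot a0 bhat + dot zhat r / ((1 - ν / nn) * dot zhat z)

/-- `T_n = √(n F_θ) ⟨z₀, ε⟩ / ‖z₀‖₂²`. -/
def Tstat (nn : ℕ) (F : ℝ) (z0 e : Fin nn → ℝ) : ℝ :=
  Real.sqrt (nn * F) * dot z0 e / (l2 z0) ^ 2

/-- `√(n F_θ)(1 - ν/n)(θ̂_ν - θ)`. -/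
def pivot {p : ℕ} (n : ℕ) (σ : ℝ) (Sig : Matrix (Fin p) (Fin p) ℝ) (a0 β bhat : Fin p → ℝ)
    (Xω : Fin n → Fin p → ℝ) (eω : Fin n → ℝ) (ν : ℝ) : ℝ :=
  Real.sqrt ((n : ℝ) * Fisher σ Sig a0) * (1 - ν / n) *
    (thetaHat n a0 bhat (z0vec Xω Sig a0) (residOf Xω eω β bhat) ν - dot a0 β)

/-- The statistic `T_n` of the model. -/
def TofModel {p : ℕ} (n : ℕ) (σ : ℝ) (Sig : Matrix (Fin p) (Fin p) ℝ) (a0 : Fin p → ℝ)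
    (Xω : Fin n → Fin p → ℝ) (eω : Fin n → ℝ) : ℝ :=
  Tstat n (Fisher σ Sig a0) (z0vec Xω Sig a0) eω

/-- `λ₀ = √((2/n) log(8p/k))`. -/
def lam0 (nn pp kk : ℕ) : ℝ := Real.sqrt ((2 / (nn : ℝ)) * Real.log (8 * (pp : ℝ) / kk))

/-- `λ_univ = √((2/n) log p)`. -/
def lamUniv (nn pp : ℕ) : ℝ := Real.sqrt ((2 / (nn : ℝ)) * Real.log (pp : ℝ))

def tauStar (e1 e2 : ℝ) : ℝ := (1 - e1 - e2) ^ 2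
def tauUp (e1 e2 : ℝ) : ℝ := (1 + e1 + e2) ^ 2

/-- Projection of `v` onto the span of `e`. -/
def projOn {n : ℕ} (e v : Fin n → ℝ) : Fin n → ℝ := fun i => (dot e v / (l2 e) ^ 2) * e i

/-- Projection of `v` onto the orthogonal complement of `e`. -/
def projPerp {n : ℕ} (e v : Fin n → ℝ) : Fin n → ℝ := fun i => v i - projOn e v i

/-- The interpolation path `z₀(t)`. -/
def z0Path {n : ℕ} (e z0 g : Fin n → ℝ) (t : ℝ) : Fin n → ℝ :=
  fun i => projOn e z0 i + Real.cos t * projPerp e z0 i + Real.sin t * projPerp e g i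

/-- `ż₀(t)`. -/
def zdotPath {n : ℕ} (e z0 g : Fin n → ℝ) (t : ℝ) : Fin n → ℝ :=
  fun i => -Real.sin t * projPerp e z0 i + Real.cos t * projPerp e g i

/-- The interpolated design `X(t) = XQ₀ + z₀(t)a₀ᵀ`. -/
def XPath {n p : ℕ} (X : Fin n → Fin p → ℝ) (Sig : Matrix (Fin p) (Fin p) ℝ) (a0 : Fin p → ℝ)
    (e g : Fin n → ℝ) (t : ℝ) : Fin n → Fin p → ℝ :=
  fun i j => (X i j - z0vec X Sig a0 i * a0 j) + z0Path e (z0vec X Sig a0) g t i * a0 j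

/-- Assumption M. -/
structure AssumptionM (nn pp mm kk : ℕ) (ρs η2 η3 e1 e2 e3 e4 σ lam : ℝ)
    (Sig : Matrix (Fin pp) (Fin pp) ℝ) (S : Finset (Fin pp)) : Prop where
  hn : 0 < nn
  hp : 0 < pp
  hm : 0 < mm
  hk : 0 < kk
  hρ : 0 < ρs
  hη2 : η2 ∈ Set.Ioo (0 : ℝ) 1
  hη3 : η3 ∈ Set.Ioo (0 : ℝ) 1
  he1 : 0 < e1
  he2 : 0 < e2
  he3 : 0 < e3
  he4 : 0 < e4
  hσ : 0 < σ
  hdiag : ∀ j, Sig j j ≤ 1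
  hlam : lam = η2⁻¹ * (1 + η3) * σ * lam0 nn pp kk
  hSRC : ((S.card : ℝ) + kk) <
      (1 - η2) ^ 2 * (2 * mm) /
        ((1 + η2) ^ 2 * ((tauUp e1 e2 / tauStar e1 e2) * phiCond (mm + kk) S Sig - 1))
  hphimin : ρs ≤ phiMin (mm + kk) S Sig
  hlam0s : lam0 nn pp kk * Real.sqrt ((S.card : ℝ) + mm + kk) ≤ 1
  hrank : 2 * (mm + kk) + S.card + 1 ≤ min (nn - 1) (pp + 1)
  he12 : e1 + e2 < 1
  he34 : e3 + e4 = e2 ^ 2 / 8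
  hsize1 : S.card + mm + kk + 1 ≤ pp + 1
  hsize2 : ((S.card + mm + kk + 1 : ℕ) : ℝ) ≤ e1 ^ 2 * nn / 2
  hbinom : Real.log (Nat.choose (pp - S.card) (mm + kk)) ≤ e3 * nn

/-- The unknown-Σ construction: `u = e_{j₀}/(a₀)_{j₀}`. -/
def uvecOf {p : ℕ} (a0 : Fin p → ℝ) (j0 : Fin p) : Fin p → ℝ :=
  fun j => if j = j0 then (a0 j0)⁻¹ else 0

/-- `Qb = b - u ⟨a₀, b⟩` where `Q = I - u a₀ᵀ`. -/
def Qvec {p : ℕ} (a0 : Fin p → ℝ) (j0 : Fin p) (b : Fin p → ℝ) : Fin p → ℝ :=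
  fun j => b j - uvecOf a0 j0 j * dot a0 b

/-- `XQ`. -/
def XQmat {n p : ℕ} (X : Fin n → Fin p → ℝ) (a0 : Fin p → ℝ) (j0 : Fin p) :
    Fin n → Fin p → ℝ :=
  fun i j => X i j - mulVec' X (uvecOf a0 j0) i * a0 j

/-- `z = Xu`. -/
def zOf {n p : ℕ} (X : Fin n → Fin p → ℝ) (a0 : Fin p → ℝ) (j0 : Fin p) : Fin n → ℝ :=
  mulVec' X (uvecOf a0 j0)

/-- `γ = -Q u₀`. -/
def gammaOf {p : ℕ} (Sig : Matrix (Fin p) (Fin p) ℝ) (a0 : Fin p → ℝ) (j0 : Fin p) :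
    Fin p → ℝ :=
  fun j => -(Qvec a0 j0 (u0vec Sig a0) j)

/-- Estimated score vector `ẑ = z - XQ γ̂`. -/
def zhatOf {n p : ℕ} (X : Fin n → Fin p → ℝ) (a0 : Fin p → ℝ) (j0 : Fin p)
    (ghat : Fin p → ℝ) : Fin n → ℝ :=
  fun i => zOf X a0 j0 i - mulVec' (XQmat X a0 j0) ghat i

section Events

variable {Ω : Type*}

/-- The event `Ω₁`. -/
def OmegaOne {n p : ℕ} (X : Ω → Fin n → Fin p → ℝ) (Sig : Matrix (Fin p) (Fin p) ℝ)
    (a0 : Fin p → ℝ) (eps g : Ω → Fin n → ℝ) (bpath : ℝ → Ω → Fin p → ℝ) : Set Ω :=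
  {ω | ∃ c : ℝ, 0 < c ∧ ∀ t, 0 ≤ t → ∀ t', 0 ≤ t' →
      c ≤ rayleighMin ((n : ℝ)⁻¹ • gramOf (XPath (X ω) Sig a0 (eps ω) (g ω) t))
            (suppF (bpath t ω) ∪ suppF (bpath t' ω))}

/-- The event `Ω₂`. -/
def OmegaTwo {n p : ℕ} (X : Ω → Fin n → Fin p → ℝ) (Sig : Matrix (Fin p) (Fin p) ℝ)
    (a0 β : Fin p → ℝ) (eps g : Ω → Fin n → ℝ) (bpath bnl : ℝ → Ω → Fin p → ℝ)
    (σ lam0v M1 M2 M3 M4 M5 : ℝ) (sstar s0k : ℕ) : Set Ω :=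
  {ω | ∀ t, 0 ≤ t →
      l2 (mulVec' (XPath (X ω) Sig a0 (eps ω) (g ω) t) (fun j => bpath t ω j - β j))
          ≤ M1 * Real.sqrt ((n : ℝ) * sstar) * σ * lam0v ∧
      l2 (mulVec' (XPath (X ω) Sig a0 (eps ω) (g ω) t) (fun j => bnl t ω j - β j))
          ≤ M1 * Real.sqrt ((n : ℝ) * sstar) * σ * lam0v ∧
      Real.sqrt (quadForm Sig (fun j => bpath t ω j - β j))
          ≤ M2 * Real.sqrt (sstar : ℝ) * σ * lam0v ∧
      ((suppF (bpath t ω)).card ≤ sstar ∧ (sstar : ℝ) ≤ M3 * s0k) ∧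
      (∀ w : Fin p → ℝ,
        subBilinInv ((n : ℝ)⁻¹ • gramOf (XPath (X ω) Sig a0 (eps ω) (g ω) t))
            (suppF (bpath t ω)) w w
          ≤ M4 * subBilinInv Sig (suppF (bpath t ω)) w w) ∧
      max (max (l2 (eps ω) / σ)
            (C0 Sig a0 * l2 (z0Path (eps ω) (z0vec (X ω) Sig a0) (g ω) t)))
          ((n : ℝ) / (C0 Sig a0 * l2 (z0Path (eps ω) (z0vec (X ω) Sig a0) (g ω) t)))
        ≤ M5 * Real.sqrt (n : ℝ)}

/-- `Rem_I`. -/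
def RemI {n p : ℕ} (σ : ℝ) (Sig : Matrix (Fin p) (Fin p) ℝ) (a0 β : Fin p → ℝ)
    (X : Ω → Fin n → Fin p → ℝ) (eps : Ω → Fin n → ℝ) (bpath : ℝ → Ω → Fin p → ℝ) (ω : Ω) :
    ℝ :=
  pivot n σ Sig a0 β (bpath 0 ω) (X ω) (eps ω) 0 - TofModel n σ Sig a0 (X ω) (eps ω)
    - Real.sqrt (Fisher σ Sig a0 / n) *
        ∫ t in (0 : ℝ)..(Real.pi / 2),
          Real.sin t * ((suppF (bpath t ω)).card : ℝ) * dot a0 (fun j => bpath t ω j - β j)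

/-- `Rem_II`. -/
def RemII {n p : ℕ} (σ : ℝ) (Sig : Matrix (Fin p) (Fin p) ℝ) (a0 β : Fin p → ℝ)
    (X : Ω → Fin n → Fin p → ℝ) (eps : Ω → Fin n → ℝ) (bpath : ℝ → Ω → Fin p → ℝ) (ω : Ω) :
    ℝ :=
  pivot n σ Sig a0 β (bpath 0 ω) (X ω) (eps ω) 0 - TofModel n σ Sig a0 (X ω) (eps ω)
    - Real.sqrt (Fisher σ Sig a0 / n) * dot a0 (fun j => bpath 0 ω j - β j) *
        ∫ t in (0 : ℝ)..(Real.pi / 2), Real.sin t * ((suppF (bpath t ω)).card : ℝ)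

end Events

/-- The matrix `D(t)` from the gradient formula of the Lasso path. -/
def DmatOf {n p : ℕ} (Xt : Fin n → Fin p → ℝ) (a0 β : Fin p → ℝ) (e : Fin n → ℝ)
    (bt : Fin p → ℝ) : Fin n → Fin p → ℝ :=
  fun i j =>
    if hj : j ∈ suppF bt then
      ∑ b : {x // x ∈ suppF bt},
        (subMat (gramOf Xt) (suppF bt))⁻¹ ⟨j, hj⟩ b *
          (a0 b.1 * (e i - mulVec' Xt (fun j' => bt j' - β j') i)
            - Xt i b.1 * dot a0 (fun j' => bt j' - β j'))
    else 0

/-- The set `U₀(S̄, Σ̄, η₁, η₂)`. -/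
def U0set {p : ℕ} (S : Finset (Fin p)) (Sig : Matrix (Fin p) (Fin p) ℝ) (η1 η2 : ℝ) :
    Set (Fin p → ℝ) :=
  {u | (∀ j ∉ S, abs (u j * Matrix.mulVec Sig u j + |u j|) ≤ η2 * |u j|) ∧
    Real.sqrt (∑ j ∈ S, (Matrix.mulVec Sig u j) ^ 2) ≤ (1 + η1) * Real.sqrt (S.card : ℝ)}

/-- The Rademacher (symmetric random sign) law on ℝ. -/
def radLaw : Measure ℝ := (2 : ℝ≥0∞)⁻¹ • Measure.dirac 1 + (2 : ℝ≥0∞)⁻¹ • Measure.dirac (-1)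

/-- A mean-zero, unit-variance law on ℝ with subgaussian norm at most `K`. -/
def SubgLaw (μ : Measure ℝ) (K : ℝ) : Prop :=
  IsProbabilityMeasure μ ∧ (∫ x, x ∂μ) = 0 ∧ (∫ x, x ^ 2 ∂μ) = 1 ∧
    (∫ x, Real.exp (x ^ 2 / K ^ 2) ∂μ) ≤ 2

/-- `h` is a norm on `ℝᵖ`. -/
def IsNorm {p : ℕ} (h : (Fin p → ℝ) → ℝ) : Prop :=
  (∀ b, h b = 0 ↔ b = 0) ∧ (∀ (c : ℝ) (b : Fin p → ℝ), h (c • b) = |c| * h b) ∧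
    ∀ a b : Fin p → ℝ, h (a + b) ≤ h a + h b

end BZ

namespace BZ

section proof

open scoped Matrix

/-! ### Standard Gaussian vectors -/

/-- The law `N(0, I)` on `ℝ^ι`. -/
def stdG (ι : Type*) [Fintype ι] : Measure (ι → ℝ) := Measure.pi fun _ => gaussianReal 0 1

/-- The law of an `n × p` matrix with i.i.d. `N(0,1)` entries. -/
def stdGM (n p : ℕ) : Measure (Fin n → Fin p → ℝ) := Measure.pi fun _ => stdG (Fin p)

instance {ι : Type*} [Fintype ι] : IsProbabilityMeasure (stdG ι) := by
  unfold stdG; infer_instance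

instance {n p : ℕ} : IsProbabilityMeasure (stdGM n p) := by
  unfold stdGM; infer_instance

/-- `N(0, I)` is invariant under linear isometries, `T` being given in coordinates. -/
lemma stdG_map_isometry {ι : Type*} [Fintype ι] (T : (ι → ℝ) →ₗ[ℝ] (ι → ℝ))
    (hT : ∀ x, ∑ i, (T x i) ^ 2 = ∑ i, (x i) ^ 2) : (stdG ι).map T = stdG ι := by
  classical
  let e := WithLp.linearEquiv 2 ℝ (ι → ℝ)
  let T' : EuclideanSpace ℝ ι →ₗ[ℝ] EuclideanSpace ℝ ι :=
    e.symm.toLinearMap ∘ₗ T ∘ₗ e.toLinearMap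
  let I : EuclideanSpace ℝ ι →ₗᵢ[ℝ] EuclideanSpace ℝ ι :=
    { toLinearMap := T'
      norm_map' := fun x => by
        rw [EuclideanSpace.norm_eq, EuclideanSpace.norm_eq]
        congr 1
        simpa [T', e] using hT (e x) }
  let J := I.toLinearIsometryEquiv rfl
  have hJ := stdGaussian_map J
  have hmT : Measurable T := T.continuous_of_finiteDimensional.measurable
  have h1 := map_pi_eq_stdGaussian (ι := ι)
  have h2 : (stdG ι).map T = ((stdGaussian (EuclideanSpace ℝ ι)).map J).map (WithLp.ofLp) := by
    rw [← h1, Measure.map_map (by fun_prop) (by fun_prop),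
      Measure.map_map (by fun_prop) (by fun_prop)]
    rfl
  rw [h2, hJ, ← h1, Measure.map_map (by fun_prop) (by fun_prop)]
  exact Measure.map_id

/-- Linear identification of `ℝ^{(n × p) + n}` with pairs (matrix, vector). -/
def pairOf (n p : ℕ) :
    ((Fin n × Fin p) ⊕ Fin n → ℝ) →ₗ[ℝ] (Fin n → Fin p → ℝ) × (Fin n → ℝ) where
  toFun x := (fun i j => x (Sum.inl (i, j)), fun i => x (Sum.inr i))
  map_add' _ _ := rfl
  map_smul' _ _ := rfl

/-- Inverse of `pairOf`. -/
def unpair (n p : ℕ) :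
    (Fin n → Fin p → ℝ) × (Fin n → ℝ) →ₗ[ℝ] ((Fin n × Fin p) ⊕ Fin n → ℝ) where
  toFun y := Sum.elim (fun q => y.1 q.1 q.2) y.2
  map_add' a b := by ext q; cases q <;> rfl
  map_smul' c a := by ext q; cases q <;> rfl

lemma stdG_map_pairOf (n p : ℕ) :
    (stdG ((Fin n × Fin p) ⊕ Fin n)).map (pairOf n p) = (stdGM n p).prod (stdG (Fin n)) := by
  have h1 := (measurePreserving_sumPiEquivProdPi
    (fun _ : (Fin n × Fin p) ⊕ Fin n => gaussianReal 0 1)).map_eq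
  have h2 := Measure.infinitePi_map_curry (fun (_ : Fin n) (_ : Fin p) => gaussianReal 0 1)
  simp only [Measure.infinitePi_eq_pi] at h2
  have h3 : (stdGM n p).prod (stdG (Fin n)) =
      ((Measure.pi fun _ : Fin n × Fin p => gaussianReal 0 1).prod
        (Measure.pi fun _ : Fin n => gaussianReal 0 1)).map
        (Prod.map (MeasurableEquiv.curry (Fin n) (Fin p) ℝ) id) := by
    rw [← Measure.map_prod_map _ _ (by fun_prop) measurable_id, h2, Measure.map_id]
    rfl
  rw [h3, ← h1, Measure.map_map (by fun_prop) (by fun_prop)]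
  rfl

lemma stdGM_map_isometry {n p : ℕ}
    (T : (Fin n → Fin p → ℝ) × (Fin n → ℝ) →ₗ[ℝ] (Fin n → Fin p → ℝ) × (Fin n → ℝ))
    (hT : ∀ y, ∑ i, ∑ j, ((T y).1 i j) ^ 2 + ∑ i, ((T y).2 i) ^ 2
      = ∑ i, ∑ j, (y.1 i j) ^ 2 + ∑ i, (y.2 i) ^ 2) :
    ((stdGM n p).prod (stdG (Fin n))).map T = (stdGM n p).prod (stdG (Fin n)) := by
  have hU := stdG_map_isometry (unpair n p ∘ₗ T ∘ₗ pairOf n p) (fun x => by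
    have := hT (pairOf n p x)
    simp only [Fintype.sum_sum_type, Fintype.sum_prod_type]
    exact this)
  have m1 : Measurable T := T.continuous_of_finiteDimensional.measurable
  have m2 : Measurable (pairOf n p) := (pairOf n p).continuous_of_finiteDimensional.measurable
  have m3 : Measurable (unpair n p) := (unpair n p).continuous_of_finiteDimensional.measurable
  rw [← stdG_map_pairOf, Measure.map_map m1 m2]
  conv_rhs => rw [← hU]
  rw [Measure.map_map m2 (by
    simp only [LinearMap.coe_comp]; exact m3.comp (m1.comp m2))]
  rfl

lemma lintegral_stdG_prod {ι : Type*} [Fintype ι] (f : ι → ℝ → ℝ)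
    (hf : ∀ i, Integrable (f i) (gaussianReal 0 1)) (h0 : ∀ i x, 0 ≤ f i x) :
    ∫⁻ x, ENNReal.ofReal (∏ i, f i (x i)) ∂(stdG ι)
      = ENNReal.ofReal (∏ i, ∫ x, f i x ∂(gaussianReal 0 1)) := by
  rw [← integral_fintype_prod_eq_prod (μ := fun _ : ι => gaussianReal 0 1) (f := f),
    ofReal_integral_eq_lintegral_ofReal]
  · rfl
  · exact Integrable.fintype_prod (μ := fun _ : ι => gaussianReal 0 1) hf
  · exact Filter.Eventually.of_forall fun x => Finset.prod_nonneg fun i _ => h0 i _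

lemma lintegral_exp_lin {ι : Type*} [Fintype ι] (v : ι → ℝ) :
    ∫⁻ x, ENNReal.ofReal (Real.exp (x ⬝ᵥ v)) ∂(stdG ι)
      = ENNReal.ofReal (Real.exp ((v ⬝ᵥ v) / 2)) := by
  have h := lintegral_stdG_prod (fun i x => Real.exp (v i * x))
    (fun i => integrable_exp_mul_gaussianReal (v i)) (fun i x => (Real.exp_pos _).le)
  have h2 : ∀ i, ∫ x, Real.exp (v i * x) ∂(gaussianReal 0 1) = Real.exp ((v i) ^ 2 / 2) := by
    intro i
    have := congrFun (mgf_id_gaussianReal (μ := 0) (v := 1)) (v i)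
    simpa [mgf] using this
  simp only [h2, ← Real.exp_sum] at h
  simpa [dotProduct, Finset.sum_div, mul_comm, pow_two] using h

lemma lintegral_exp_abs_lin {ι : Type*} [Fintype ι] (v : ι → ℝ) (τ : ℝ) (hv : v ⬝ᵥ v ≤ 1) :
    ∫⁻ x, ENNReal.ofReal (Real.exp (τ * |x ⬝ᵥ v|)) ∂(stdG ι)
      ≤ ENNReal.ofReal (2 * Real.exp (τ ^ 2 / 2)) := by
  have key : ∀ c : ℝ, ∫⁻ x, ENNReal.ofReal (Real.exp (c * (x ⬝ᵥ v))) ∂(stdG ι)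
      ≤ ENNReal.ofReal (Real.exp (c ^ 2 / 2)) := by
    intro c
    have := lintegral_exp_lin (c • v)
    simp only [dotProduct_smul, smul_dotProduct, smul_eq_mul] at this
    rw [this]
    apply ENNReal.ofReal_le_ofReal
    apply Real.exp_le_exp.mpr
    nlinarith [mul_nonneg (sq_nonneg c) (sub_nonneg.mpr hv)]
  calc _ ≤ ∫⁻ x, (ENNReal.ofReal (Real.exp (τ * (x ⬝ᵥ v)))
        + ENNReal.ofReal (Real.exp (-τ * (x ⬝ᵥ v)))) ∂(stdG ι) := by
        apply lintegral_mono
        intro x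
        dsimp only
        rcases abs_cases (x ⬝ᵥ v) with h | h
        · rw [h.1]; exact le_self_add
        · rw [h.1]
          refine le_trans (le_of_eq ?_) le_add_self
          congr 2; ring
    _ = _ := lintegral_add_left (by unfold dotProduct; fun_prop) _
    _ ≤ ENNReal.ofReal (Real.exp (τ ^ 2 / 2)) + ENNReal.ofReal (Real.exp ((-τ) ^ 2 / 2)) :=
        add_le_add (key _) (key _)
    _ = _ := by
        rw [← ENNReal.ofReal_add (by positivity) (by positivity)]
        congr 1; rw [neg_sq]; ring

lemma neg_log_bound {x : ℝ} (hx : |x| ≤ 1 / 4) :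
    1 / Real.sqrt (1 - 2 * x) ≤ Real.exp (x + 2 * x ^ 2) := by
  obtain ⟨h1, h2⟩ := abs_le.mp hx
  have hpos : 0 < 1 - 2 * x := by linarith
  rw [div_le_iff₀ (Real.sqrt_pos.mpr hpos)]
  have key : 1 ≤ Real.exp (2 * x + 4 * x ^ 2) * (1 - 2 * x) := by
    rcases le_total 0 x with hx0 | hx0
    · have hq := Real.quadratic_le_exp_of_nonneg (x := 2 * x + 4 * x ^ 2) (by positivity)
      refine le_trans ?_ (mul_le_mul_of_nonneg_right hq hpos.le)
      have e : (1 + (2 * x + 4 * x ^ 2) + (2 * x + 4 * x ^ 2) ^ 2 / 2) * (1 - 2 * x)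
          = 1 + 2 * x ^ 2 * ((1 + 2 * x) * (1 - 4 * x ^ 2) - 4 * x) := by ring
      rw [e]
      have : 0 ≤ (1 + 2 * x) * (1 - 4 * x ^ 2) - 4 * x := by nlinarith
      nlinarith [mul_nonneg (sq_nonneg x) this]
    · have hy1 : |-(2 * x + 4 * x ^ 2)| ≤ 1 := by rw [abs_le]; constructor <;> nlinarith
      have hq := (abs_le.mp (Real.abs_exp_sub_one_sub_id_le hy1)).2
      have hb : Real.exp (-(2 * x + 4 * x ^ 2)) ≤ 1 - 2 * x := by
        have e : (-(2 * x + 4 * x ^ 2)) ^ 2 = 4 * x ^ 2 * (1 + 2 * x) ^ 2 := by ring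
        have : (1 + 2 * x) ^ 2 ≤ 1 := by nlinarith
        nlinarith [mul_le_mul_of_nonneg_left this (sq_nonneg x)]
      calc (1 : ℝ) = Real.exp (2 * x + 4 * x ^ 2) * Real.exp (-(2 * x + 4 * x ^ 2)) := by
            rw [← Real.exp_add]; simp
        _ ≤ _ := mul_le_mul_of_nonneg_left hb (Real.exp_pos _).le
  have h6 : Real.exp (x + 2 * x ^ 2) * Real.sqrt (1 - 2 * x)
      = Real.sqrt (Real.exp (2 * x + 4 * x ^ 2) * (1 - 2 * x)) := by
    rw [Real.sqrt_mul (Real.exp_pos _).le]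
    congr 1
    rw [show 2 * x + 4 * x ^ 2 = (x + 2 * x ^ 2) + (x + 2 * x ^ 2) by ring,
      Real.exp_add (x + 2 * x ^ 2) (x + 2 * x ^ 2), Real.sqrt_mul_self (Real.exp_pos _).le]
  rw [h6]
  exact Real.one_le_sqrt.mpr key

lemma exp_sq_gauss {x : ℝ} (hx : |x| ≤ 1 / 4) :
    Integrable (fun ξ : ℝ => Real.exp (x * (ξ ^ 2 - 1))) (gaussianReal 0 1) ∧
    ∫ ξ, Real.exp (x * (ξ ^ 2 - 1)) ∂(gaussianReal 0 1) ≤ Real.exp (2 * x ^ 2) := by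
  obtain ⟨h1, h2⟩ := abs_le.mp hx
  have hpos : 0 < 1 - 2 * x := by linarith
  have hb : 0 < (1 - 2 * x) / 2 := by linarith
  have e : ∀ ξ : ℝ, (gaussianPDFReal 0 1 ξ) * Real.exp (x * (ξ ^ 2 - 1))
      = ((Real.sqrt (2 * Real.pi))⁻¹ * Real.exp (-x)) *
        Real.exp (-((1 - 2 * x) / 2) * ξ ^ 2) := by
    intro ξ
    simp only [gaussianPDFReal, NNReal.coe_one, mul_one, sub_zero]
    rw [mul_assoc, mul_assoc, ← Real.exp_add, ← Real.exp_add]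
    congr 2; ring
  constructor
  · rw [gaussianReal_of_var_ne_zero _ one_ne_zero,
      integrable_withDensity_iff_integrable_smul' (by fun_prop)
        (Eventually.of_forall fun _ => gaussianPDF_lt_top)]
    simp only [toReal_gaussianPDF, smul_eq_mul, e]
    exact (integrable_exp_neg_mul_sq hb).const_mul _
  · rw [integral_gaussianReal_eq_integral_smul one_ne_zero]
    simp only [smul_eq_mul, e]
    rw [integral_const_mul, integral_gaussian]
    have e2 : (Real.sqrt (2 * Real.pi))⁻¹ * Real.exp (-x) * Real.sqrt (Real.pi / ((1 - 2 * x) / 2))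
        = Real.exp (-x) * (1 / Real.sqrt (1 - 2 * x)) := by
      rw [show Real.pi / ((1 - 2 * x) / 2) = (2 * Real.pi) / (1 - 2 * x) by field_simp,
        Real.sqrt_div (by positivity)]
      have : Real.sqrt (2 * Real.pi) ≠ 0 := by positivity
      field_simp
    rw [e2]
    calc _ ≤ Real.exp (-x) * Real.exp (x + 2 * x ^ 2) :=
          mul_le_mul_of_nonneg_left (neg_log_bound hx) (Real.exp_pos _).le
      _ = _ := by rw [← Real.exp_add]; congr 1; ring

/-- Exponential moment bound for a Gaussian quadratic form whose matrix lies between `0` and `I`: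
after diagonalisation the form is a weighted sum of independent `χ²₁` variables. -/
lemma lintegral_exp_quad {n : ℕ} (B : Matrix (Fin n) (Fin n) ℝ) (hB : Bᵀ = B)
    (h0 : ∀ x, 0 ≤ x ⬝ᵥ B *ᵥ x) (h1 : ∀ x, x ⬝ᵥ B *ᵥ x ≤ x ⬝ᵥ x) (s : ℝ) (hs : |s| ≤ 1 / 4) :
    ∫⁻ x, ENNReal.ofReal (Real.exp (s * (x ⬝ᵥ B *ᵥ x - B.trace))) ∂(stdG (Fin n))
      ≤ ENNReal.ofReal (Real.exp (2 * s ^ 2 * B.trace)) := by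
  classical
  have hH : B.IsHermitian := by
    rw [Matrix.IsHermitian, Matrix.conjTranspose_eq_transpose_of_trivial, hB]
  set ev := hH.eigenvalues with hev
  set U : Matrix (Fin n) (Fin n) ℝ := (hH.eigenvectorUnitary : Matrix (Fin n) (Fin n) ℝ) with hU
  have hUU : Uᵀ * U = 1 := by
    have := Unitary.coe_star_mul_self hH.eigenvectorUnitary
    simpa [Matrix.star_eq_conjTranspose, Matrix.conjTranspose_eq_transpose_of_trivial] using this
  have hsp : B = U * Matrix.diagonal ev * Uᵀ := by
    have := hH.spectral_theorem
    rw [Unitary.conjStarAlgAut_apply] at this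
    simpa [Matrix.star_eq_conjTranspose, Matrix.conjTranspose_eq_transpose_of_trivial,
      Function.comp_def] using this
  have hadj : ∀ x y, (U *ᵥ x) ⬝ᵥ y = x ⬝ᵥ Uᵀ *ᵥ y := by
    intro x y
    rw [Matrix.dotProduct_mulVec, Matrix.vecMul_transpose]
  have hquad : ∀ x, (U *ᵥ x) ⬝ᵥ B *ᵥ (U *ᵥ x) = ∑ i, ev i * (x i) ^ 2 := by
    intro x
    have : (U *ᵥ x) ⬝ᵥ B *ᵥ (U *ᵥ x) = x ⬝ᵥ (Uᵀ * B * U) *ᵥ x := by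
      rw [hadj, Matrix.mulVec_mulVec, Matrix.mulVec_mulVec, Matrix.mul_assoc]
    rw [this, hsp]
    have e2 : Uᵀ * (U * Matrix.diagonal ev * Uᵀ) * U = Matrix.diagonal ev := by
      calc _ = (Uᵀ * U) * Matrix.diagonal ev * (Uᵀ * U) := by simp only [Matrix.mul_assoc]
        _ = _ := by rw [hUU]; simp
    rw [e2]
    simp only [dotProduct, Matrix.mulVec_diagonal]
    exact Finset.sum_congr rfl fun i _ => by ring
  have hnorm : ∀ x, (U *ᵥ x) ⬝ᵥ (U *ᵥ x) = x ⬝ᵥ x := by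
    intro x
    rw [hadj, Matrix.mulVec_mulVec]
    simp [hUU]
  have htr : B.trace = ∑ i, ev i := by
    rw [hsp, Matrix.trace_mul_comm, ← Matrix.mul_assoc, hUU]
    simp [Matrix.trace_diagonal]
  have hev01 : ∀ i, 0 ≤ ev i ∧ ev i ≤ 1 := by
    intro i
    have a := h0 (U *ᵥ Pi.single i 1)
    have b := h1 (U *ᵥ Pi.single i 1)
    rw [hnorm] at b
    rw [hquad] at a b
    have e3 : ∑ j, ev j * ((Pi.single i 1 : Fin n → ℝ) j) ^ 2 = ev i := by
      rw [Finset.sum_eq_single i]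
      · simp
      · intro j _ hj; simp [hj]
      · simp
    rw [e3] at a b
    exact ⟨a, by simpa using b⟩
  have hrot : (stdG (Fin n)).map (Matrix.toLin' U) = stdG (Fin n) :=
    stdG_map_isometry _ fun x => by
      simpa [dotProduct, pow_two] using hnorm x
  have hsm : ∀ i, |s * ev i| ≤ 1 / 4 := fun i => by
    rw [abs_mul, abs_of_nonneg (hev01 i).1]
    nlinarith [abs_nonneg s, (hev01 i).1, (hev01 i).2]
  calc ∫⁻ x, ENNReal.ofReal (Real.exp (s * (x ⬝ᵥ B *ᵥ x - B.trace))) ∂(stdG (Fin n))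
      = ∫⁻ x, ENNReal.ofReal (Real.exp (s * ((U *ᵥ x) ⬝ᵥ B *ᵥ (U *ᵥ x) - B.trace)))
          ∂(stdG (Fin n)) := by
        conv_lhs => rw [← hrot]
        rw [lintegral_map (by unfold dotProduct Matrix.mulVec dotProduct; fun_prop)
          (LinearMap.continuous_of_finiteDimensional _).measurable]
        rfl
    _ = ∫⁻ x, ENNReal.ofReal (∏ i, Real.exp (s * ev i * ((x i) ^ 2 - 1))) ∂(stdG (Fin n)) := by
        congr 1; ext x
        rw [hquad, htr, ← Real.exp_sum, ← Finset.sum_sub_distrib, Finset.mul_sum]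
        congr 3; ext i; ring
    _ = ENNReal.ofReal (∏ i, ∫ ξ, Real.exp (s * ev i * (ξ ^ 2 - 1)) ∂(gaussianReal 0 1)) :=
        lintegral_stdG_prod (fun i ξ => Real.exp (s * ev i * (ξ ^ 2 - 1)))
          (fun i => (exp_sq_gauss (hsm i)).1) (fun i x => (Real.exp_pos _).le)
    _ ≤ ENNReal.ofReal (∏ i, Real.exp (2 * (s * ev i) ^ 2)) := by
        apply ENNReal.ofReal_le_ofReal
        apply Finset.prod_le_prod
        · exact fun i _ => integral_nonneg fun x => (Real.exp_pos _).le
        · exact fun i _ => (exp_sq_gauss (hsm i)).2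
    _ ≤ _ := by
        apply ENNReal.ofReal_le_ofReal
        rw [← Real.exp_sum, htr, Finset.mul_sum]
        apply Real.exp_le_exp.mpr
        apply Finset.sum_le_sum
        intro i _
        have := hev01 i
        nlinarith [mul_nonneg (sq_nonneg s) (mul_nonneg this.1 (sub_nonneg.mpr this.2))]

lemma lintegral_exp_abs_quad {n : ℕ} (B : Matrix (Fin n) (Fin n) ℝ) (hB : Bᵀ = B)
    (h0 : ∀ x, 0 ≤ x ⬝ᵥ B *ᵥ x) (h1 : ∀ x, x ⬝ᵥ B *ᵥ x ≤ x ⬝ᵥ x) (s : ℝ) (hs : |s| ≤ 1 / 4) :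
    ∫⁻ x, ENNReal.ofReal (Real.exp (s * |x ⬝ᵥ B *ᵥ x - B.trace|)) ∂(stdG (Fin n))
      ≤ ENNReal.ofReal (2 * Real.exp (2 * s ^ 2 * B.trace)) := by
  calc _ ≤ ∫⁻ x, (ENNReal.ofReal (Real.exp (s * (x ⬝ᵥ B *ᵥ x - B.trace)))
        + ENNReal.ofReal (Real.exp (-s * (x ⬝ᵥ B *ᵥ x - B.trace)))) ∂(stdG (Fin n)) := by
        apply lintegral_mono
        intro x
        dsimp only
        rcases abs_cases (x ⬝ᵥ B *ᵥ x - B.trace) with h | h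
        · rw [h.1]; exact le_self_add
        · rw [h.1]
          refine le_trans (le_of_eq ?_) le_add_self
          congr 2; ring
    _ = _ := lintegral_add_left (by unfold dotProduct Matrix.mulVec dotProduct; fun_prop) _
    _ ≤ ENNReal.ofReal (Real.exp (2 * s ^ 2 * B.trace)) +
          ENNReal.ofReal (Real.exp (2 * (-s) ^ 2 * B.trace)) :=
        add_le_add (lintegral_exp_quad B hB h0 h1 s hs)
          (lintegral_exp_quad B hB h0 h1 (-s) (by rwa [abs_neg]))
    _ = _ := by
        rw [← ENNReal.ofReal_add (by positivity) (by positivity)]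
        congr 1; rw [neg_sq]; ring

/-- `E exp(s⟨w,v⟩²) ≤ 2` for `‖v‖ ≤ 1` and small `s`: the quadratic bound for the rank-one matrix
`v vᵀ`. -/
lemma lintegral_exp_sq {n : ℕ} (v : Fin n → ℝ) (hv : v ⬝ᵥ v ≤ 1) (s : ℝ) (hs0 : 0 ≤ s)
    (hs : s ≤ 1 / 4) :
    ∫⁻ x, ENNReal.ofReal (Real.exp (s * (x ⬝ᵥ v) ^ 2)) ∂(stdG (Fin n)) ≤ ENNReal.ofReal 2 := by
  have hq : ∀ x, x ⬝ᵥ (Matrix.vecMulVec v v).mulVec x = (x ⬝ᵥ v) ^ 2 := by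
    intro x
    rw [Matrix.vecMulVec_mulVec]
    simp only [op_smul_eq_smul, dotProduct_smul, smul_eq_mul, dotProduct_comm v x]
    ring
  have htr : (Matrix.vecMulVec v v).trace = v ⬝ᵥ v := by
    simp [Matrix.trace_vecMulVec]
  have hv0 : 0 ≤ v ⬝ᵥ v := by
    simp only [dotProduct]; exact Finset.sum_nonneg fun i _ => mul_self_nonneg _
  have h := lintegral_exp_quad (Matrix.vecMulVec v v) (by ext i j; simp [Matrix.vecMulVec, mul_comm])
    (fun x => by rw [hq]; positivity)
    (fun x => by
      rw [hq]
      have : (x ⬝ᵥ v) ^ 2 ≤ (x ⬝ᵥ x) * (v ⬝ᵥ v) := by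
        simpa [dotProduct, pow_two] using Finset.sum_mul_sq_le_sq_mul_sq Finset.univ x v
      have hx0 : 0 ≤ x ⬝ᵥ x := by
        simp only [dotProduct]; exact Finset.sum_nonneg fun i _ => mul_self_nonneg _
      nlinarith) s (by rw [abs_of_nonneg hs0]; exact hs)
  simp only [hq, htr] at h
  have e : ∀ x : Fin n → ℝ, ENNReal.ofReal (Real.exp (s * (x ⬝ᵥ v) ^ 2))
      = ENNReal.ofReal (Real.exp (s * (v ⬝ᵥ v))) *
        ENNReal.ofReal (Real.exp (s * ((x ⬝ᵥ v) ^ 2 - v ⬝ᵥ v))) := by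
    intro x
    rw [← ENNReal.ofReal_mul (Real.exp_pos _).le, ← Real.exp_add]
    congr 2; ring
  simp only [e]
  rw [lintegral_const_mul _ (by unfold dotProduct; fun_prop)]
  refine (mul_le_mul_right h _).trans ?_
  rw [← ENNReal.ofReal_mul (Real.exp_pos _).le, ← Real.exp_add]
  apply ENNReal.ofReal_le_ofReal
  have h3 : s * (v ⬝ᵥ v) + 2 * s ^ 2 * (v ⬝ᵥ v) ≤ Real.log 2 := by
    have := Real.log_two_gt_d9
    nlinarith [mul_nonneg hs0 hv0, mul_nonneg hs0 (sub_nonneg.mpr hv)]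
  calc _ ≤ Real.exp (Real.log 2) := Real.exp_le_exp.mpr h3
    _ = 2 := Real.exp_log (by norm_num)

/-! ### Linear algebra on an active set -/

lemma dot_eq {m : ℕ} (a b : Fin m → ℝ) : dot a b = a ⬝ᵥ b := rfl

lemma mulVec'_eq {n p : ℕ} (X : Fin n → Fin p → ℝ) (b : Fin p → ℝ) :
    mulVec' X b = (Matrix.of X) *ᵥ b := rfl

lemma dp_nonneg {ι : Type*} [Fintype ι] (v : ι → ℝ) : 0 ≤ v ⬝ᵥ v :=
  Finset.sum_nonneg fun i _ => mul_self_nonneg (v i)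

lemma l2_sq {m : ℕ} (v : Fin m → ℝ) : l2 v ^ 2 = v ⬝ᵥ v := by
  rw [l2, Real.sq_sqrt (Finset.sum_nonneg fun i _ => sq_nonneg _)]
  simp [dotProduct, pow_two]

lemma l2_eq_sqrt {m : ℕ} (v : Fin m → ℝ) : l2 v = Real.sqrt (v ⬝ᵥ v) := by
  simp [l2, dotProduct, pow_two]

lemma l2_nonneg {m : ℕ} (v : Fin m → ℝ) : 0 ≤ l2 v := Real.sqrt_nonneg _

lemma l2_eq_zero {m : ℕ} {v : Fin m → ℝ} (h : l2 v = 0) : v = 0 := by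
  have := l2_sq v
  rw [h] at this
  exact dotProduct_self_eq_zero.mp (by simpa using this.symm)

lemma abs_dp_le {m : ℕ} (a b : Fin m → ℝ) : |a ⬝ᵥ b| ≤ l2 a * l2 b := by
  rw [l2_eq_sqrt, l2_eq_sqrt, ← Real.sqrt_mul (dp_nonneg _)]
  apply Real.abs_le_sqrt
  simpa [dotProduct, pow_two] using Finset.sum_mul_sq_le_sq_mul_sq Finset.univ a b

lemma l2_smul {m : ℕ} (c : ℝ) (v : Fin m → ℝ) : l2 (c • v) = |c| * l2 v := by
  rw [l2_eq_sqrt, l2_eq_sqrt, smul_dotProduct, dotProduct_smul, smul_eq_mul, smul_eq_mul,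
    ← mul_assoc, Real.sqrt_mul (mul_self_nonneg _), Real.sqrt_mul_self_eq_abs]

lemma l2_add_le {m : ℕ} (a b : Fin m → ℝ) : l2 (a + b) ≤ l2 a + l2 b := by
  apply abs_le_of_sq_le_sq' _ (add_nonneg (l2_nonneg a) (l2_nonneg b)) |>.2
  have h := (abs_le.mp (abs_dp_le a b)).2
  rw [l2_sq, add_sq, l2_sq, l2_sq, add_dotProduct, dotProduct_add, dotProduct_add,
    dotProduct_comm b a]
  linarith

lemma dp_mulVec {n p : ℕ} (X : Matrix (Fin n) (Fin p) ℝ) (x : Fin p → ℝ) (y : Fin n → ℝ) :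
    (X *ᵥ x) ⬝ᵥ y = x ⬝ᵥ Xᵀ *ᵥ y := by
  rw [Matrix.dotProduct_mulVec, Matrix.vecMul_transpose]

lemma gramOf_eq {n p : ℕ} (X : Fin n → Fin p → ℝ) :
    gramOf X = (Matrix.of X)ᵀ * Matrix.of X := by
  ext j k; simp [gramOf, Matrix.mul_apply]

lemma quadForm_eq {m : ℕ} (M : Matrix (Fin m) (Fin m) ℝ) (v : Fin m → ℝ) :
    quadForm M v = v ⬝ᵥ M *ᵥ v := by
  simp [quadForm, dotProduct, Matrix.mulVec, Finset.mul_sum, mul_assoc]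

/-- The coordinate restriction `ℝ^p → ℝ^A`, as a matrix. -/
def selE {p : ℕ} (A : Finset (Fin p)) : Matrix {x // x ∈ A} (Fin p) ℝ :=
  (1 : Matrix (Fin p) (Fin p) ℝ).submatrix Subtype.val id

/-- The inverse of `H_{A,A}`, extended by zero to a `p × p` matrix. -/
def selN {p : ℕ} (H : Matrix (Fin p) (Fin p) ℝ) (A : Finset (Fin p)) :
    Matrix (Fin p) (Fin p) ℝ :=
  (selE A)ᵀ * (subMat H A)⁻¹ * selE A

lemma selE_apply {p : ℕ} (A : Finset (Fin p)) (i : {x // x ∈ A}) (j : Fin p) :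
    selE A i j = if i.1 = j then 1 else 0 := by
  simp [selE, Matrix.one_apply]

lemma selE_mul {p : ℕ} (A : Finset (Fin p)) (H : Matrix (Fin p) (Fin p) ℝ) :
    selE A * H * (selE A)ᵀ = subMat H A := by
  ext i j
  simp [selE, subMat, Matrix.mul_apply, Matrix.one_apply]

lemma selE_mulVec {p : ℕ} (A : Finset (Fin p)) (u : Fin p → ℝ) (i : {x // x ∈ A}) :
    (selE A *ᵥ u) i = u i.1 := by
  simp [selE, Matrix.mulVec, dotProduct, Matrix.one_apply]

lemma selE_transpose_mulVec {p : ℕ} (A : Finset (Fin p)) (u : Fin p → ℝ)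
    (hu : ∀ j ∉ A, u j = 0) : (selE A)ᵀ *ᵥ (selE A *ᵥ u) = u := by
  ext j
  simp only [Matrix.mulVec_transpose, Matrix.vecMul, dotProduct, selE_mulVec, selE_apply]
  rw [Finset.sum_coe_sort A (fun i => u i * (if i = j then (1 : ℝ) else 0))]
  simp only [mul_ite, mul_one, mul_zero, Finset.sum_ite_eq']
  split_ifs with h
  · rfl
  · exact (hu j h).symm

lemma selE_transpose_mulVec_off {p : ℕ} (A : Finset (Fin p)) (c : {x // x ∈ A} → ℝ) {j : Fin p}
    (hj : j ∉ A) : ((selE A)ᵀ *ᵥ c) j = 0 := by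
  simp only [Matrix.mulVec_transpose, Matrix.vecMul, dotProduct, selE_apply]
  apply Finset.sum_eq_zero
  intro i _
  rw [if_neg (fun h : i.1 = j => hj (h ▸ i.2)), mul_zero]

lemma subMat_transpose {p : ℕ} {H : Matrix (Fin p) (Fin p) ℝ} (hH : Hᵀ = H)
    (A : Finset (Fin p)) : (subMat H A)ᵀ = subMat H A := by
  ext i j
  simpa [subMat] using congrFun (congrFun hH i.1) j.1

lemma selN_transpose {p : ℕ} {H : Matrix (Fin p) (Fin p) ℝ} (hH : Hᵀ = H)
    (A : Finset (Fin p)) : (selN H A)ᵀ = selN H A := by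
  simp [selN, Matrix.transpose_mul, Matrix.transpose_nonsing_inv, subMat_transpose hH,
    Matrix.mul_assoc]

lemma selN_mul_mul {p : ℕ} {H : Matrix (Fin p) (Fin p) ℝ} {A : Finset (Fin p)}
    (hdet : IsUnit (subMat H A).det) : selN H A * H * selN H A = selN H A := by
  have : selN H A * H * selN H A
      = (selE A)ᵀ * (subMat H A)⁻¹ * (selE A * H * (selE A)ᵀ) * (subMat H A)⁻¹ * selE A := by
    simp only [selN, Matrix.mul_assoc]
  rw [this, selE_mul, Matrix.nonsing_inv_mul_cancel_right _ _ hdet]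
  rfl

lemma selN_mulVec_gram {p : ℕ} {H : Matrix (Fin p) (Fin p) ℝ} {A : Finset (Fin p)}
    (hdet : IsUnit (subMat H A).det) {b : Fin p → ℝ} (hb : ∀ j ∉ A, b j = 0) :
    selN H A *ᵥ (H *ᵥ b) = b := by
  have e : selN H A * H * (selE A)ᵀ = (selE A)ᵀ := by
    have : selN H A * H * (selE A)ᵀ
      = (selE A)ᵀ * ((subMat H A)⁻¹ * (selE A * H * (selE A)ᵀ)) := by
      simp only [selN, Matrix.mul_assoc]
    rw [this, selE_mul, Matrix.nonsing_inv_mul _ hdet, Matrix.mul_one]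
  conv_lhs => rw [← selE_transpose_mulVec A b hb]
  rw [Matrix.mulVec_mulVec, Matrix.mulVec_mulVec, e,
    selE_transpose_mulVec A b hb]

lemma selN_mulVec_congr {p : ℕ} {H : Matrix (Fin p) (Fin p) ℝ} {A : Finset (Fin p)}
    {u v : Fin p → ℝ} (h : ∀ j ∈ A, u j = v j) : selN H A *ᵥ u = selN H A *ᵥ v := by
  have : selE A *ᵥ u = selE A *ᵥ v := by
    ext i
    rw [selE_mulVec, selE_mulVec, h _ i.2]
  simp only [selN, ← Matrix.mulVec_mulVec, this]

lemma selN_mulVec_off {p : ℕ} {H : Matrix (Fin p) (Fin p) ℝ} {A : Finset (Fin p)}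
    (u : Fin p → ℝ) {j : Fin p} (hj : j ∉ A) : (selN H A *ᵥ u) j = 0 := by
  rw [selN, Matrix.mul_assoc, ← Matrix.mulVec_mulVec]
  exact selE_transpose_mulVec_off A _ hj

lemma subBilinInv_eq {p : ℕ} (H : Matrix (Fin p) (Fin p) ℝ) (A : Finset (Fin p))
    (u : Fin p → ℝ) : subBilinInv H A u u = u ⬝ᵥ selN H A *ᵥ u := by
  rw [selN, Matrix.mul_assoc, ← Matrix.mulVec_mulVec, Matrix.mulVec_transpose,
    ← Matrix.mulVec_mulVec, dotProduct_comm, ← Matrix.dotProduct_mulVec, dotProduct_comm]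
  simp only [subBilinInv, dotProduct, Matrix.mulVec, selE, Matrix.submatrix_apply,
    Matrix.one_apply, Finset.mul_sum, id, ite_mul, one_mul, zero_mul, Finset.sum_ite_eq,
    Finset.mem_univ, if_true, mul_assoc]

/-- The orthogonal projection on the span of the columns `X_A` (when these are independent). -/
def projX {n p : ℕ} (X : Matrix (Fin n) (Fin p) ℝ) (A : Finset (Fin p)) :
    Matrix (Fin n) (Fin n) ℝ := X * selN (Xᵀ * X) A * Xᵀ

/-- The vector `X_A (X_Aᵀ X_A)⁻¹ a_A`. -/
def vX {n p : ℕ} (X : Matrix (Fin n) (Fin p) ℝ) (A : Finset (Fin p)) (a : Fin p → ℝ) :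
    Fin n → ℝ := X *ᵥ (selN (Xᵀ * X) A *ᵥ a)

lemma gram_transpose {n p : ℕ} (X : Matrix (Fin n) (Fin p) ℝ) : (Xᵀ * X)ᵀ = Xᵀ * X := by
  simp [Matrix.transpose_mul]

lemma projX_transpose {n p : ℕ} (X : Matrix (Fin n) (Fin p) ℝ) (A : Finset (Fin p)) :
    (projX X A)ᵀ = projX X A := by
  simp [projX, Matrix.transpose_mul, selN_transpose (gram_transpose X), Matrix.mul_assoc]

lemma projX_mul_self {n p : ℕ} {X : Matrix (Fin n) (Fin p) ℝ} {A : Finset (Fin p)}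
    (hdet : IsUnit (subMat (Xᵀ * X) A).det) : projX X A * projX X A = projX X A := by
  have : projX X A * projX X A
      = X * (selN (Xᵀ * X) A * (Xᵀ * X) * selN (Xᵀ * X) A) * Xᵀ := by
    simp only [projX, Matrix.mul_assoc]
  rw [this, selN_mul_mul hdet]; rfl

lemma projX_trace {n p : ℕ} {X : Matrix (Fin n) (Fin p) ℝ} {A : Finset (Fin p)}
    (hdet : IsUnit (subMat (Xᵀ * X) A).det) : (projX X A).trace = A.card := by
  have : (projX X A).trace
      = ((subMat (Xᵀ * X) A)⁻¹ * (selE A * (Xᵀ * X) * (selE A)ᵀ)).trace := by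
    rw [projX, Matrix.mul_assoc, Matrix.trace_mul_comm, selN]
    have e : (selE A)ᵀ * (subMat (Xᵀ * X) A)⁻¹ * selE A * Xᵀ * X
      = (selE A)ᵀ * ((subMat (Xᵀ * X) A)⁻¹ * (selE A * (Xᵀ * X))) := by
      simp only [Matrix.mul_assoc]
    rw [e, Matrix.trace_mul_comm (selE A)ᵀ, Matrix.mul_assoc]
  rw [this, selE_mul, Matrix.nonsing_inv_mul _ hdet, Matrix.trace_one]
  simp

lemma proj_quad {n : ℕ} {P : Matrix (Fin n) (Fin n) ℝ} (hs : Pᵀ = P) (hi : P * P = P)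
    (x : Fin n → ℝ) : x ⬝ᵥ P *ᵥ x = (P *ᵥ x) ⬝ᵥ (P *ᵥ x) := by
  rw [dp_mulVec, Matrix.mulVec_mulVec, hs, hi]

lemma proj_quad_le {n : ℕ} {P : Matrix (Fin n) (Fin n) ℝ} (hs : Pᵀ = P) (hi : P * P = P)
    (x : Fin n → ℝ) : x ⬝ᵥ P *ᵥ x ≤ x ⬝ᵥ x := by
  have h := dp_nonneg (x - P *ᵥ x)
  rw [sub_dotProduct, dotProduct_sub, dotProduct_sub, ← proj_quad hs hi,
    dotProduct_comm (P *ᵥ x) x] at h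
  linarith

lemma proj_l2_le {n : ℕ} {P : Matrix (Fin n) (Fin n) ℝ} (hs : Pᵀ = P) (hi : P * P = P)
    (x : Fin n → ℝ) : l2 (P *ᵥ x) ≤ l2 x := by
  rw [l2_eq_sqrt, l2_eq_sqrt, ← proj_quad hs hi]
  exact Real.sqrt_le_sqrt (proj_quad_le hs hi x)

lemma vX_dp_self {n p : ℕ} {X : Matrix (Fin n) (Fin p) ℝ} {A : Finset (Fin p)}
    (hdet : IsUnit (subMat (Xᵀ * X) A).det) (a : Fin p → ℝ) :
    vX X A a ⬝ᵥ vX X A a = a ⬝ᵥ selN (Xᵀ * X) A *ᵥ a := by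
  rw [vX, dp_mulVec, dp_mulVec, Matrix.mulVec_mulVec, Matrix.mulVec_mulVec, Matrix.mulVec_mulVec,
    selN_transpose (gram_transpose X), Matrix.mul_assoc _ Xᵀ X, selN_mul_mul hdet]

lemma posDef_subMat_det {p : ℕ} {Sig : Matrix (Fin p) (Fin p) ℝ} (hS : Sig.PosDef)
    (A : Finset (Fin p)) : IsUnit (subMat Sig A).det := by
  have h : (subMat Sig A).PosDef := hS.submatrix Subtype.val_injective
  exact h.det_pos.ne'.isUnit

lemma posDef_isUnit {p : ℕ} {Sig : Matrix (Fin p) (Fin p) ℝ} (hS : Sig.PosDef) :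
    IsUnit Sig.det := hS.det_pos.ne'.isUnit

lemma posDef_transpose {p : ℕ} {Sig : Matrix (Fin p) (Fin p) ℝ} (hS : Sig.PosDef) :
    Sigᵀ = Sig := by
  have := hS.1
  rwa [Matrix.IsHermitian, Matrix.conjTranspose_eq_transpose_of_trivial] at this

lemma posDef_quad_nonneg {p : ℕ} {Sig : Matrix (Fin p) (Fin p) ℝ} (hS : Sig.PosDef)
    (x : Fin p → ℝ) : 0 ≤ x ⬝ᵥ Sig *ᵥ x := by
  simpa using hS.posSemidef.dotProduct_mulVec_nonneg x

/-- `a_Aᵀ (Σ_{A,A})⁻¹ a_A ≤ aᵀ Σ⁻¹ a`: expand `0 ≤ ‖Σ^{1/2}(Σ⁻¹a - x)‖²` with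
`x_A = (Σ_{A,A})⁻¹a_A`. -/
lemma selN_le_quadA0 {p : ℕ} {Sig : Matrix (Fin p) (Fin p) ℝ} (hS : Sig.PosDef)
    (A : Finset (Fin p)) (a : Fin p → ℝ) : a ⬝ᵥ selN Sig A *ᵥ a ≤ quadA0 Sig a := by
  set x := selN Sig A *ᵥ a with hx
  set u := Sig⁻¹ *ᵥ a with hu
  have hSu : Sig *ᵥ u = a := by
    rw [hu, Matrix.mulVec_mulVec, Matrix.mul_nonsing_inv _ (posDef_isUnit hS), Matrix.one_mulVec]
  have hxx : x ⬝ᵥ Sig *ᵥ x = a ⬝ᵥ x := by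
    rw [hx, dp_mulVec, Matrix.mulVec_mulVec, Matrix.mulVec_mulVec,
      selN_transpose (posDef_transpose hS), selN_mul_mul (posDef_subMat_det hS A)]
  have hux : u ⬝ᵥ Sig *ᵥ x = a ⬝ᵥ x := by
    conv_lhs => rw [← posDef_transpose hS]
    rw [← dp_mulVec, hSu]
  have h := posDef_quad_nonneg hS (u - x)
  rw [Matrix.mulVec_sub, hSu, sub_dotProduct, dotProduct_sub, dotProduct_sub, hxx, hux,
    dotProduct_comm x a] at h
  have : quadA0 Sig a = u ⬝ᵥ a := by rw [dotProduct_comm]; rfl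
  linarith

lemma selN_smul {p : ℕ} {H : Matrix (Fin p) (Fin p) ℝ} {A : Finset (Fin p)}
    (c : ℝ) (hc : c ≠ 0) :
    selN (c • H) A = c⁻¹ • selN H A := by
  have e : subMat (c • H) A = c • subMat H A := rfl
  have e2 : (c • subMat H A)⁻¹ = c⁻¹ • (subMat H A)⁻¹ := by
    by_cases hdet : IsUnit (subMat H A).det
    · have := Matrix.inv_smul' (subMat H A) (Units.mk0 c hc) hdet
      simpa [Units.smul_def] using this
    · rw [Matrix.nonsing_inv_apply_not_isUnit _ hdet, Matrix.nonsing_inv_apply_not_isUnit,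
        smul_zero]
      rw [Matrix.det_smul, IsUnit.mul_iff]
      tauto
  rw [selN, e, e2, selN]
  simp

/-- A positive lower bound on `λ_min((XᵀX/n)_{A,A})` as a coercivity estimate. -/
lemma coercive_of_rayleigh {n p : ℕ} (hn : 0 < n) {X : Fin n → Fin p → ℝ} {A : Finset (Fin p)}
    {c : ℝ} (h : c ≤ rayleighMin ((n : ℝ)⁻¹ • gramOf X) A) (v : Fin p → ℝ)
    (hv : ∀ j ∉ A, v j = 0) :
    c * n * (v ⬝ᵥ v) ≤ (Matrix.of X *ᵥ v) ⬝ᵥ (Matrix.of X *ᵥ v) := by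
  have hq : ∀ x, quadForm ((n : ℝ)⁻¹ • gramOf X) x
      = (n : ℝ)⁻¹ * ((Matrix.of X *ᵥ x) ⬝ᵥ (Matrix.of X *ᵥ x)) := by
    intro x
    rw [quadForm_eq, gramOf_eq, Matrix.smul_mulVec, dotProduct_smul, dp_mulVec,
      Matrix.mulVec_mulVec, smul_eq_mul]
  by_cases hv0 : v = 0
  · subst hv0; simp
  have hl : 0 < l2 v := lt_of_le_of_ne (l2_nonneg v) fun h => hv0 (l2_eq_zero h.symm)
  have hmem : rayleighMin ((n : ℝ)⁻¹ • gramOf X) A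
      ≤ quadForm ((n : ℝ)⁻¹ • gramOf X) ((l2 v)⁻¹ • v) := by
    apply csInf_le
    · refine ⟨0, ?_⟩
      rintro _ ⟨x, _, _, rfl⟩
      rw [hq]
      exact mul_nonneg (by positivity) (dp_nonneg _)
    · refine ⟨_, fun j hj => by simp [hv j hj], ?_, rfl⟩
      rw [l2_smul, abs_of_pos (by positivity)]
      field_simp
  rw [hq, Matrix.mulVec_smul, smul_dotProduct, dotProduct_smul, smul_eq_mul, smul_eq_mul] at hmem
  have h2 := h.trans hmem
  rw [← l2_sq v]
  set q := (Matrix.of X *ᵥ v) ⬝ᵥ (Matrix.of X *ᵥ v)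
  have hn' : (0 : ℝ) < n := by exact_mod_cast hn
  have e : (n : ℝ)⁻¹ * ((l2 v)⁻¹ * ((l2 v)⁻¹ * q)) = q / (n * l2 v ^ 2) := by
    field_simp
  rw [e, le_div_iff₀ (by positivity)] at h2
  linarith

lemma det_of_coercive {n p : ℕ} (X : Matrix (Fin n) (Fin p) ℝ) {A : Finset (Fin p)}
    {c : ℝ} (hc : 0 < c)
    (h : ∀ v : Fin p → ℝ, (∀ j ∉ A, v j = 0) → c * (v ⬝ᵥ v) ≤ (X *ᵥ v) ⬝ᵥ (X *ᵥ v)) :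
    IsUnit (subMat (Xᵀ * X) A).det := by
  rw [isUnit_iff_ne_zero]
  intro h0
  obtain ⟨x, hx0, hx⟩ := Matrix.exists_mulVec_eq_zero_iff.mpr h0
  have hv := h ((selE A)ᵀ *ᵥ x) (fun j hj => selE_transpose_mulVec_off A x hj)
  have e1 : (X *ᵥ ((selE A)ᵀ *ᵥ x)) ⬝ᵥ (X *ᵥ ((selE A)ᵀ *ᵥ x)) = 0 := by
    rw [dp_mulVec, Matrix.mulVec_mulVec, Matrix.mulVec_mulVec, Matrix.mulVec_transpose,
      ← Matrix.dotProduct_mulVec, Matrix.mulVec_mulVec, ← Matrix.mul_assoc, selE_mul, hx,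
      dotProduct_zero]
  rw [e1] at hv
  have h2 : (selE A)ᵀ *ᵥ x = 0 := by
    apply dotProduct_self_eq_zero.mp
    nlinarith [dp_nonneg ((selE A)ᵀ *ᵥ x)]
  apply hx0
  have e2 : selE A *ᵥ ((selE A)ᵀ *ᵥ x) = x := by
    have : selE A * (selE A)ᵀ = 1 := by
      have := selE_mul A (1 : Matrix (Fin p) (Fin p) ℝ)
      rw [Matrix.mul_one] at this
      rw [this]; ext i j
      by_cases hij : i = j
      · subst hij; simp [subMat]
      · have : i.1 ≠ j.1 := fun h => hij (Subtype.ext h)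
        simp only [subMat, Matrix.of_apply, Matrix.one_apply_ne hij, Matrix.one_apply_ne this]
    rw [Matrix.mulVec_mulVec, this, Matrix.one_mulVec]
  rw [← e2, h2, Matrix.mulVec_zero]

/-! ### Optimality conditions of the Lasso -/

/-- The Karush–Kuhn–Tucker conditions of the Lasso with response `y`, in the form
`|X_jᵀ(y - Xb)| ≤ L` and `b_j X_jᵀ(y - Xb) = L |b_j|`, where `L = nλ`. -/
def IsKKT {n p : ℕ} (X : Matrix (Fin n) (Fin p) ℝ) (y : Fin n → ℝ) (L : ℝ) (b : Fin p → ℝ) :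
    Prop :=
  (∀ j, |(Xᵀ *ᵥ (y - X *ᵥ b)) j| ≤ L) ∧ ∀ j, (Xᵀ *ᵥ (y - X *ᵥ b)) j * b j = L * |b j|

lemma dp_sub_smul {n : ℕ} (r c : Fin n → ℝ) (δ : ℝ) :
    (r - δ • c) ⬝ᵥ (r - δ • c) = r ⬝ᵥ r - 2 * δ * (c ⬝ᵥ r) + δ ^ 2 * (c ⬝ᵥ c) := by
  simp only [sub_dotProduct, dotProduct_sub, smul_dotProduct, dotProduct_smul, smul_eq_mul,
    dotProduct_comm r c]
  ring

lemma kkt_of_lasso {n p : ℕ} (hn : 0 < n) {y : Fin n → ℝ} {X : Fin n → Fin p → ℝ} {lam : ℝ}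
    (hl : 0 ≤ lam) {b : Fin p → ℝ} (h : IsLasso y X lam b) : IsKKT (Matrix.of X) y (n * lam) b := by
  have hn' : (0 : ℝ) < n := by exact_mod_cast hn
  have hlam0 : 0 ≤ n * lam := by positivity
  set Y := Matrix.of X with hY
  set r := y - Y *ᵥ b with hr
  -- optimality against the perturbation `b + δ e_j`
  have key : ∀ (j : Fin p), ∃ C : ℝ, 0 ≤ C ∧ ∀ δ : ℝ,
      δ * (Yᵀ *ᵥ r) j ≤ δ ^ 2 * C + n * lam * (|b j + δ| - |b j|) := by
    intro j
    set c : Fin n → ℝ := Y *ᵥ Pi.single j 1 with hc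
    refine ⟨(c ⬝ᵥ c) / 2, by have := dp_nonneg c; positivity, fun δ => ?_⟩
    have h1 := h (b + δ • Pi.single j 1)
    have e0 : (l2 fun i => y i - mulVec' X b i) ^ 2 = r ⬝ᵥ r := l2_sq _
    have e1 : (l2 fun i => y i - mulVec' X (b + δ • Pi.single j 1) i) ^ 2
        = r ⬝ᵥ r - 2 * δ * (Yᵀ *ᵥ r) j + δ ^ 2 * (c ⬝ᵥ c) := by
      have : (fun i => y i - mulVec' X (b + δ • Pi.single j 1) i) = r - δ • c := by
        have : mulVec' X (b + δ • Pi.single j 1) = Y *ᵥ b + δ • c := by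
          rw [mulVec'_eq, Matrix.mulVec_add, Matrix.mulVec_smul]
        rw [this, hr]
        ext i; simp; ring
      rw [this, l2_sq, dp_sub_smul]
      have hcr : c ⬝ᵥ r = (Yᵀ *ᵥ r) j := by
        rw [hc, dp_mulVec]; simp
      rw [hcr]
    have e2 : l1 (b + δ • Pi.single j 1) - l1 b = |b j + δ| - |b j| := by
      rw [l1, l1, ← Finset.sum_sub_distrib, Finset.sum_eq_single j]
      · simp
      · intro k _ hk; simp [hk]
      · simp
    simp only [lassoObj] at h1
    rw [e0, e1] at h1
    have e3 : l1 (b + δ • Pi.single j 1) = l1 b + (|b j + δ| - |b j|) := by linarith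
    rw [e3] at h1
    have h2 := mul_le_mul_of_nonneg_left h1 hn'.le
    field_simp at h2
    nlinarith
  have hle : ∀ A B C : ℝ, 0 ≤ C → (∀ δ : ℝ, 0 < δ → δ ≤ 1 → A ≤ B + δ * C) → A ≤ B := by
    intro A B C hC hh
    refine le_of_forall_pos_le_add fun ε hε => ?_
    have hd : 0 < min 1 (ε / (C + 1)) := lt_min one_pos (by positivity)
    have := hh _ hd (min_le_left _ _)
    have h3 : min 1 (ε / (C + 1)) * C ≤ ε := by
      calc _ ≤ ε / (C + 1) * C := mul_le_mul_of_nonneg_right (min_le_right _ _) hC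
        _ ≤ ε := by rw [div_mul_eq_mul_div, div_le_iff₀ (by positivity)]; nlinarith
    linarith
  have hlam : ∀ j : Fin p, |(Yᵀ *ᵥ r) j| ≤ n * lam := by
    intro j
    obtain ⟨C, hC, hk⟩ := key j
    set G := (Yᵀ *ᵥ r) j
    have hb : ∀ δ : ℝ, |b j + δ| - |b j| ≤ |δ| := fun δ => by
      have := abs_add_le (b j) δ; linarith
    rw [abs_le]
    constructor
    · have := hle (-G) (n * lam) C hC (fun δ hd _ => by
        have a1 := hk (-δ)
        have a2 := mul_le_mul_of_nonneg_left (hb (-δ)) hlam0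
        rw [abs_neg, abs_of_pos hd] at a2
        have a3 : δ * (-G) ≤ δ * (n * lam + δ * C) := by nlinarith
        exact le_of_mul_le_mul_left a3 hd)
      linarith
    · exact hle G (n * lam) C hC (fun δ hd _ => by
        have a1 := hk δ
        have a2 := mul_le_mul_of_nonneg_left (hb δ) hlam0
        rw [abs_of_pos hd] at a2
        have a3 : δ * G ≤ δ * (n * lam + δ * C) := by nlinarith
        exact le_of_mul_le_mul_left a3 hd)
  refine ⟨hlam, fun j => le_antisymm ?_ ?_⟩
  · calc _ ≤ |(Yᵀ *ᵥ r) j * b j| := le_abs_self _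
      _ ≤ _ := by rw [abs_mul]; exact mul_le_mul_of_nonneg_right (hlam j) (abs_nonneg _)
  · obtain ⟨C, hC, hk⟩ := key j
    refine hle _ _ (b j ^ 2 * C) (by positivity) fun η h0 h1 => ?_
    have a1 := hk (-(η * b j))
    have e : |b j + -(η * b j)| - |b j| = -(η * |b j|) := by
      rw [show b j + -(η * b j) = (1 - η) * b j by ring, abs_mul, abs_of_nonneg (by linarith)]
      ring
    rw [e] at a1
    have a3 : η * (n * lam * |b j|) ≤ η * ((Yᵀ *ᵥ r) j * b j + η * (b j ^ 2 * C)) := by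
      nlinarith
    exact le_of_mul_le_mul_left a3 h0

/-- Monotonicity of the subdifferential of `L‖·‖₁`. -/
lemma kkt_mono {n n' p : ℕ} {X : Matrix (Fin n) (Fin p) ℝ} {X' : Matrix (Fin n') (Fin p) ℝ}
    {y : Fin n → ℝ} {y' : Fin n' → ℝ} {L : ℝ} {b b' : Fin p → ℝ} (h : IsKKT X y L b)
    (h' : IsKKT X' y' L b') :
    0 ≤ (b - b') ⬝ᵥ (Xᵀ *ᵥ (y - X *ᵥ b) - X'ᵀ *ᵥ (y' - X' *ᵥ b')) := by
  apply Finset.sum_nonneg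
  intro j _
  simp only [Pi.sub_apply]
  have a := h.2 j
  have a' := h'.2 j
  simp only [Matrix.mulVec_sub] at *
  set G := (Xᵀ *ᵥ y - Xᵀ *ᵥ (X *ᵥ b)) j with hG
  set G' := (X'ᵀ *ᵥ y' - X'ᵀ *ᵥ (X' *ᵥ b')) j with hG'
  have c1 : b j * G' ≤ L * |b j| := by
    calc _ ≤ |b j * G'| := le_abs_self _
      _ = |G'| * |b j| := by rw [abs_mul, mul_comm]
      _ ≤ _ := mul_le_mul_of_nonneg_right (by
          have := h'.1 j; rwa [Matrix.mulVec_sub] at this) (abs_nonneg _)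
  have c2 : b' j * G ≤ L * |b' j| := by
    calc _ ≤ |b' j * G| := le_abs_self _
      _ = |G| * |b' j| := by rw [abs_mul, mul_comm]
      _ ≤ _ := mul_le_mul_of_nonneg_right (by
          have := h.1 j; rwa [Matrix.mulVec_sub] at this) (abs_nonneg _)
  nlinarith

/-- All solutions of the KKT system have the same fitted values. -/
lemma kkt_fit_unique {n p : ℕ} {X : Matrix (Fin n) (Fin p) ℝ} {y : Fin n → ℝ} {L : ℝ}
    {b b' : Fin p → ℝ} (h : IsKKT X y L b) (h' : IsKKT X y L b') : X *ᵥ (b - b') = 0 := by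
  have h1 := kkt_mono h h'
  have e : Xᵀ *ᵥ (y - X *ᵥ b) - Xᵀ *ᵥ (y - X *ᵥ b') = - (Xᵀ *ᵥ (X *ᵥ (b - b'))) := by
    simp only [Matrix.mulVec_sub]; abel
  rw [e, dotProduct_neg, ← dp_mulVec] at h1
  exact dotProduct_self_eq_zero.mp (le_antisymm (by linarith) (dp_nonneg _))

lemma l2_sub_comm {m : ℕ} (a b : Fin m → ℝ) : l2 (a - b) = l2 (b - a) := by
  rw [l2_eq_sqrt, l2_eq_sqrt, ← neg_sub b a, neg_dotProduct, dotProduct_neg, neg_neg]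

/-- Stability of the Lasso under the rank-one perturbation of the design
`W + z aᵀ ↦ W + z' aᵀ`, given coercivity along `b - b'`. -/
lemma kkt_stable {n p : ℕ} {W : Matrix (Fin n) (Fin p) ℝ} {z z' e : Fin n → ℝ}
    {a β b b' : Fin p → ℝ} {L c R B : ℝ} (hc : 0 < c)
    (h : IsKKT (W + Matrix.vecMulVec z a) (e + (W + Matrix.vecMulVec z a) *ᵥ β) L b)
    (h' : IsKKT (W + Matrix.vecMulVec z' a) (e + (W + Matrix.vecMulVec z' a) *ᵥ β) L b')
    (hco : c ^ 2 * ((b - b') ⬝ᵥ (b - b')) ≤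
      ((W + Matrix.vecMulVec z a) *ᵥ (b - b')) ⬝ᵥ ((W + Matrix.vecMulVec z a) *ᵥ (b - b')))
    (hR : l2 ((W + Matrix.vecMulVec z' a) *ᵥ (b' - β)) ≤ R)
    (hB : |a ⬝ᵥ (b' - β)| ≤ B) :
    l2 (b - b') ≤ (l2 a * (l2 e + R) / c + B) / c * l2 (z - z') := by
  set X := W + Matrix.vecMulVec z a with hX
  set X' := W + Matrix.vecMulVec z' a with hX'
  set d := b - b' with hd
  set h'v := b' - β with hh'
  set r' := X' *ᵥ h'v with hr'
  set q := z - z' with hq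
  have hXX : ∀ x, X *ᵥ x - X' *ᵥ x = (a ⬝ᵥ x) • q := by
    intro x
    rw [← Matrix.sub_mulVec, hX, hX', add_sub_add_left_eq_sub, ← Matrix.sub_vecMulVec,
      Matrix.vecMulVec_mulVec, op_smul_eq_smul]
  have e1 : e + X *ᵥ β - X *ᵥ b = e - X *ᵥ (d + h'v) := by
    rw [hd, hh', sub_add_sub_cancel, Matrix.mulVec_sub]; abel
  have e2 : e + X' *ᵥ β - X' *ᵥ b' = e - r' := by
    rw [hr', hh', Matrix.mulVec_sub]; abel
  have h1 := kkt_mono h h'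
  rw [e1, e2, dotProduct_sub, ← dp_mulVec, ← dp_mulVec] at h1
  have e3 : X' *ᵥ d = X *ᵥ d - (a ⬝ᵥ d) • q := by rw [← hXX d]; abel
  have e4 : X *ᵥ h'v = r' + (a ⬝ᵥ h'v) • q := by rw [← hXX h'v]; abel
  rw [← hd, e3, Matrix.mulVec_add, e4] at h1
  set D := X *ᵥ d with hD
  simp only [sub_dotProduct, dotProduct_sub, dotProduct_add, smul_dotProduct, dotProduct_smul,
    smul_eq_mul] at h1
  have h2 : D ⬝ᵥ D ≤ (a ⬝ᵥ d) * (q ⬝ᵥ (e - r')) - (a ⬝ᵥ h'v) * (D ⬝ᵥ q) := by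
    have : q ⬝ᵥ (e - r') = q ⬝ᵥ e - q ⬝ᵥ r' := dotProduct_sub _ _ _
    rw [this]; linarith
  have hx : l2 D ^ 2 = D ⬝ᵥ D := l2_sq D
  have hdx : c * l2 d ≤ l2 D := by
    apply abs_le_of_sq_le_sq' _ (l2_nonneg D) |>.2
    rw [mul_pow, l2_sq, hx]; exact hco
  have hdx' : l2 d ≤ l2 D / c := by rw [le_div_iff₀ hc]; linarith
  have b1 : |a ⬝ᵥ d| ≤ l2 a * (l2 D / c) :=
    (abs_dp_le a d).trans (mul_le_mul_of_nonneg_left hdx' (l2_nonneg a))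
  have b2 : |q ⬝ᵥ (e - r')| ≤ l2 q * (l2 e + R) := by
    refine (abs_dp_le _ _).trans (mul_le_mul_of_nonneg_left ?_ (l2_nonneg q))
    have := l2_add_le e (-r')
    rw [← sub_eq_add_neg] at this
    have e5 : l2 (-r') = l2 r' := by
      rw [← neg_one_smul ℝ r', l2_smul]; simp
    linarith
  have b3 : |D ⬝ᵥ q| ≤ l2 D * l2 q := abs_dp_le _ _
  have hR0 : 0 ≤ R := (l2_nonneg _).trans hR
  have hB0 : 0 ≤ B := (abs_nonneg _).trans hB
  have c1 : (a ⬝ᵥ d) * (q ⬝ᵥ (e - r')) ≤ (l2 a * (l2 D / c)) * (l2 q * (l2 e + R)) := by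
    refine (le_abs_self _).trans ?_
    rw [abs_mul]
    exact mul_le_mul b1 b2 (abs_nonneg _) (by
      have := l2_nonneg a; have := l2_nonneg D; positivity)
  have c2 : -((a ⬝ᵥ h'v) * (D ⬝ᵥ q)) ≤ B * (l2 D * l2 q) := by
    refine (neg_le_abs _).trans ?_
    rw [abs_mul]
    exact mul_le_mul hB b3 (abs_nonneg _) hB0
  have h3 : l2 D * l2 D ≤ l2 D * ((l2 a * (l2 e + R) / c + B) * l2 q) := by
    have : l2 D * ((l2 a * (l2 e + R) / c + B) * l2 q)
      = (l2 a * (l2 D / c)) * (l2 q * (l2 e + R)) + B * (l2 D * l2 q) := by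
      field_simp
    rw [this]; nlinarith
  have h4 : l2 D ≤ (l2 a * (l2 e + R) / c + B) * l2 q := by
    rcases (l2_nonneg D).eq_or_lt with h0 | h0
    · rw [← h0]
      have := l2_nonneg a; have := l2_nonneg e; have := l2_nonneg q; positivity
    · exact le_of_mul_le_mul_left h3 h0
  calc l2 d ≤ l2 D / c := hdx'
    _ ≤ ((l2 a * (l2 e + R) / c + B) * l2 q) / c := by gcongr
    _ = _ := by ring

/-! ### Differentiating the Lasso path -/

lemma hasDerivAt_dp {m : ℕ} {f g : ℝ → Fin m → ℝ} {f' g' : Fin m → ℝ} {t : ℝ}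
    (hf : ∀ i, HasDerivAt (fun s => f s i) (f' i) t)
    (hg : ∀ i, HasDerivAt (fun s => g s i) (g' i) t) :
    HasDerivAt (fun s => f s ⬝ᵥ g s) (f' ⬝ᵥ g t + f t ⬝ᵥ g') t := by
  have := HasDerivAt.fun_sum (u := Finset.univ) fun i _ => (hf i).mul (hg i)
  rw [Finset.sum_add_distrib] at this
  exact this

lemma hasDerivAt_const_mulVec {m k : ℕ} (M : Matrix (Fin m) (Fin k) ℝ) {g : ℝ → Fin k → ℝ}
    {g' : Fin k → ℝ} {t : ℝ} (hg : ∀ i, HasDerivAt (fun s => g s i) (g' i) t) (i : Fin m) :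
    HasDerivAt (fun s => (M *ᵥ g s) i) ((M *ᵥ g') i) t := by
  have := hasDerivAt_dp (f := fun _ => M i) (f' := 0) (fun j => hasDerivAt_const t (M i j)) hg
  simpa [Matrix.mulVec] using this

lemma rankone_mulVec {n p : ℕ} (W : Matrix (Fin n) (Fin p) ℝ) (z : Fin n → ℝ) (a x : Fin p → ℝ) :
    (W + Matrix.vecMulVec z a) *ᵥ x = W *ᵥ x + (a ⬝ᵥ x) • z := by
  rw [Matrix.add_mulVec, Matrix.vecMulVec_mulVec, op_smul_eq_smul]

lemma rankone_transpose_mulVec {n p : ℕ} (W : Matrix (Fin n) (Fin p) ℝ) (z : Fin n → ℝ)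
    (a : Fin p → ℝ) (x : Fin n → ℝ) :
    (W + Matrix.vecMulVec z a)ᵀ *ᵥ x = Wᵀ *ᵥ x + (z ⬝ᵥ x) • a := by
  rw [Matrix.transpose_add, Matrix.transpose_vecMulVec, rankone_mulVec]

/-- The derivative of the Lasso path at a point of differentiability where the inactive coordinates
have zero derivative: the active KKT equations hold in a neighbourhood with constant signs, and are
differentiated. -/
lemma lasso_deriv {n p : ℕ} {W : Matrix (Fin n) (Fin p) ℝ} {z : ℝ → Fin n → ℝ}
    {zd e : Fin n → ℝ} {a β bd : Fin p → ℝ} {b : ℝ → Fin p → ℝ} {L t : ℝ}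
    (hz : ∀ i, HasDerivAt (fun s => z s i) (zd i) t)
    (hb : ∀ j, HasDerivAt (fun s => b s j) (bd j) t)
    (h0 : ∀ j, b t j = 0 → bd j = 0)
    (hk : ∀ᶠ s in nhds t, IsKKT (W + Matrix.vecMulVec (z s) a)
      (e + (W + Matrix.vecMulVec (z s) a) *ᵥ β) L (b s))
    (hdet : IsUnit (subMat ((W + Matrix.vecMulVec (z t) a)ᵀ * (W + Matrix.vecMulVec (z t) a))
      (suppF (b t))).det) :
    bd = selN ((W + Matrix.vecMulVec (z t) a)ᵀ * (W + Matrix.vecMulVec (z t) a)) (suppF (b t)) *ᵥ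
      ((zd ⬝ᵥ (e - (W + Matrix.vecMulVec (z t) a) *ᵥ (b t - β))) • a
        - (a ⬝ᵥ (b t - β)) • ((W + Matrix.vecMulVec (z t) a)ᵀ *ᵥ zd)) := by
  set X := W + Matrix.vecMulVec (z t) a with hX
  have hh : ∀ j, HasDerivAt (fun s => (b s - β) j) (bd j) t := fun j => by
    simpa using (hb j).sub_const (β j)
  set ρ : ℝ → Fin n → ℝ := fun s => e - (W + Matrix.vecMulVec (z s) a) *ᵥ (b s - β) with hρ
  set ρ' : Fin n → ℝ := -((a ⬝ᵥ (b t - β)) • zd + X *ᵥ bd) with hρ'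
  have h1 : ∀ i, HasDerivAt (fun s => ρ s i) (ρ' i) t := by
    intro i
    have ha := hasDerivAt_dp (f := fun _ => a) (f' := 0) (fun j => hasDerivAt_const t (a j)) hh
    have := ((hasDerivAt_const_mulVec W hh i).add (ha.mul (hz i))).const_sub (e i)
    refine (this.congr_deriv ?_).congr_of_eventuallyEq (Eventually.of_forall fun s => ?_)
    · simp only [hρ', hX, rankone_mulVec, Pi.neg_apply, Pi.add_apply, Pi.smul_apply, smul_eq_mul,
        zero_dotProduct]
      ring
    · simp only [hρ, rankone_mulVec, Pi.sub_apply, Pi.add_apply, Pi.smul_apply, smul_eq_mul]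
      rfl
  have h2 : ∀ j, HasDerivAt (fun s => ((W + Matrix.vecMulVec (z s) a)ᵀ *ᵥ ρ s) j)
      ((Xᵀ *ᵥ ρ') j + (zd ⬝ᵥ ρ t) * a j) t := by
    intro j
    have := (hasDerivAt_const_mulVec Wᵀ h1 j).add ((hasDerivAt_dp hz h1).mul_const (a j))
    refine (this.congr_deriv ?_).congr_of_eventuallyEq (Eventually.of_forall fun s => ?_)
    · simp only [hX, rankone_transpose_mulVec, Pi.add_apply, Pi.smul_apply, smul_eq_mul]
      ring
    · simp only [rankone_transpose_mulVec, Pi.add_apply, Pi.smul_apply, smul_eq_mul]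
  have hres : ∀ s, e + (W + Matrix.vecMulVec (z s) a) *ᵥ β
      - (W + Matrix.vecMulVec (z s) a) *ᵥ b s = ρ s := by
    intro s
    simp only [hρ, Matrix.mulVec_sub]; abel
  have h3 : ∀ j ∈ suppF (b t), (Xᵀ *ᵥ ρ') j + (zd ⬝ᵥ ρ t) * a j = 0 := by
    intro j hj
    have hj : b t j ≠ 0 := by simpa [suppF] using hj
    have hc : ContinuousAt (fun s => b s j) t := (hb j).continuousAt
    -- on the active set the gradient coordinate is locally constant
    have hconst : (fun s => ((W + Matrix.vecMulVec (z s) a)ᵀ *ᵥ ρ s) j)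
        =ᶠ[nhds t] fun _ => L * (|b t j| / b t j) := by
      have hs : ∀ᶠ s in nhds t, |b s j| / b s j = |b t j| / b t j ∧ b s j ≠ 0 := by
        rcases lt_or_gt_of_ne hj with hneg | hpos
        · filter_upwards [hc.eventually_lt_const hneg] with s hs
          rw [abs_of_neg hs, abs_of_neg hneg, neg_div, neg_div, div_self hs.ne, div_self hj]
          exact ⟨rfl, hs.ne⟩
        · filter_upwards [hc.eventually_const_lt hpos] with s hs
          rw [abs_of_pos hs, abs_of_pos hpos, div_self hs.ne', div_self hj]
          exact ⟨rfl, hs.ne'⟩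
      filter_upwards [hk, hs] with s hks hss
      have := hks.2 j
      rw [hres] at this
      rw [← hss.1, ← mul_div_assoc, eq_div_iff hss.2]
      exact this
    exact (h2 j).unique ((hasDerivAt_const t _).congr_of_eventuallyEq hconst)
  have h4 : selN (Xᵀ * X) (suppF (b t)) *ᵥ ((Xᵀ * X) *ᵥ bd) = bd :=
    selN_mulVec_gram hdet fun j hj => h0 j (by simpa [suppF] using hj)
  rw [← h4]
  apply selN_mulVec_congr
  intro j hj
  have := h3 j hj
  simp only [hρ', Matrix.mulVec_neg, Matrix.mulVec_add, Matrix.mulVec_smul, Pi.neg_apply,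
    Pi.add_apply, Pi.smul_apply, smul_eq_mul, Matrix.mulVec_mulVec] at this
  simp only [Pi.sub_apply, Pi.smul_apply, smul_eq_mul]
  simp only [hρ] at this
  rw [← hX] at this
  linarith

/-- At almost every `t > 0` a Lipschitz path is differentiable, with zero derivative in the
coordinates that vanish at `t` (since `|b_j|` is also differentiable, with a minimum there). -/
lemma ae_deriv_path {p : ℕ} {b : ℝ → Fin p → ℝ} {K : ℝ≥0} (hb : LipschitzOnWith K b (Set.Ici 0)) :
    ∀ᵐ t : ℝ, 0 < t → ∃ bd : Fin p → ℝ, (∀ j, HasDerivAt (fun s => b s j) (bd j) t) ∧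
      ∀ j, b t j = 0 → bd j = 0 := by
  have hj : ∀ j, LipschitzOnWith K (fun s => b s j) (Set.Ici 0) := fun j =>
    LipschitzOnWith.of_dist_le_mul fun x hx y hy =>
      (dist_le_pi_dist (b x) (b y) j).trans (hb.dist_le_mul x hx y hy)
  have hja : ∀ j, LipschitzOnWith K (fun s => |b s j|) (Set.Ici 0) := fun j =>
    LipschitzOnWith.of_dist_le_mul fun x hx y hy => by
      refine le_trans ?_ ((hj j).dist_le_mul x hx y hy)
      simp only [Real.dist_eq]
      exact abs_abs_sub_abs_le _ _
  have a1 := ae_all_iff.mpr fun j => (hj j).ae_differentiableWithinAt_of_mem_real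
  have a2 := ae_all_iff.mpr fun j => (hja j).ae_differentiableWithinAt_of_mem_real
  filter_upwards [a1, a2] with t h1 h2 ht
  have hn : Set.Ici (0 : ℝ) ∈ nhds t := Ici_mem_nhds ht
  have d1 : ∀ j, DifferentiableAt ℝ (fun s => b s j) t := fun j =>
    (h1 j ht.le).differentiableAt hn
  have d2 : ∀ j, DifferentiableAt ℝ (fun s => |b s j|) t := fun j =>
    (h2 j ht.le).differentiableAt hn
  refine ⟨fun j => deriv (fun s => b s j) t, fun j => (d1 j).hasDerivAt, fun j hj0 => ?_⟩
  have hmin : IsLocalMin (fun s => |b s j|) t := by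
    refine Eventually.of_forall fun s => ?_
    simp only [hj0, abs_zero]
    exact abs_nonneg _
  have hd := (d2 j).hasDerivAt
  rw [hmin.deriv_eq_zero, hasDerivAt_iff_isLittleO] at hd
  have hz : HasDerivAt (fun s => b s j) 0 t := by
    rw [hasDerivAt_iff_isLittleO]
    simp only [hj0, abs_zero, sub_zero, smul_zero] at hd ⊢
    exact (Asymptotics.isLittleO_abs_left).mp hd
  exact hz.deriv

/-! ### The dominating functional and its exponential moment -/

/-- The dominating functional of a Gaussian vector `w`: the linear forms `⟨w, η_j⟩`, their rescaled
squares, and the centred chi-square fluctuation of `w` along the projection `P` of rank `d`. -/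
def Tfun {n : ℕ} (P : Matrix (Fin n) (Fin n) ℝ) (d : ℝ) (η : Fin 6 → Fin n → ℝ) (w : Fin n → ℝ) :
    ℝ :=
  ∑ j, |w ⬝ᵥ η j| + ∑ j, (w ⬝ᵥ η j) ^ 2 / Real.sqrt n + |w ⬝ᵥ P *ᵥ w - d| / Real.sqrt n

lemma Tfun_nonneg {n : ℕ} (P : Matrix (Fin n) (Fin n) ℝ) (d : ℝ) (η : Fin 6 → Fin n → ℝ)
    (w : Fin n → ℝ) : 0 ≤ Tfun P d η w := by
  unfold Tfun; positivity

lemma exp_sum13 (x y : Fin 6 → ℝ) (z : ℝ) :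
    Real.exp (∑ j, x j + ∑ j, y j + z) ≤
      (1 / 13) * (∑ j, Real.exp (13 * x j) + ∑ j, Real.exp (13 * y j) + Real.exp (13 * z)) := by
  have := convexOn_exp.map_sum_le (t := (Finset.univ : Finset (Fin 6 ⊕ Fin 6 ⊕ Unit)))
    (w := fun _ => (1 / 13 : ℝ)) (p := Sum.elim (fun j => 13 * x j)
      (Sum.elim (fun j => 13 * y j) (fun _ => 13 * z))) (by intros; norm_num)
      (by simp) (by simp)
  simp only [Fintype.sum_sum_type, Sum.elim_inl, Sum.elim_inr, smul_eq_mul, Finset.univ_unique,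
    Finset.sum_singleton, ← Finset.mul_sum] at this
  calc _ = _ := by congr 1; ring
    _ ≤ _ := this
    _ = _ := by ring

/-- The functional is sub-exponential: by convexity its exponential is at most the mean of the
exponentials of 13 times each of its 13 terms, and each of these is a Gaussian linear or quadratic
form. The bound `√n / 52` is what keeps `13 τ / √n ≤ 1/4`, and `338 = 2 · 13²`. -/
lemma lintegral_exp_Tfun {n : ℕ} (hn : 0 < n) (P : Matrix (Fin n) (Fin n) ℝ) (d : ℝ)
    (η : Fin 6 → Fin n → ℝ) (hη : ∀ j, η j ⬝ᵥ η j ≤ 1) (hP : Pᵀ = P)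
    (h0 : ∀ x, 0 ≤ x ⬝ᵥ P *ᵥ x) (h1 : ∀ x, x ⬝ᵥ P *ᵥ x ≤ x ⬝ᵥ x) (htr : P.trace = d)
    (hd : d ≤ n) (τ : ℝ) (hτ : 0 ≤ τ) (hτ' : τ ≤ Real.sqrt n / 52) :
    ∫⁻ w, ENNReal.ofReal (Real.exp (τ * Tfun P d η w)) ∂(stdG (Fin n))
      ≤ ENNReal.ofReal (2 * Real.exp (338 * τ ^ 2)) := by
  have hn' : (0 : ℝ) < n := by exact_mod_cast hn
  have hs : 0 < Real.sqrt n := Real.sqrt_pos.2 hn'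
  have hss : Real.sqrt n ^ 2 = n := Real.sq_sqrt hn'.le
  have hsmall : 13 * τ / Real.sqrt n ≤ 1 / 4 := by
    rw [div_le_iff₀ hs]; linarith
  have e1 : ∀ j, ∫⁻ w, ENNReal.ofReal (Real.exp (13 * τ * |w ⬝ᵥ η j|)) ∂(stdG (Fin n))
      ≤ ENNReal.ofReal (2 * Real.exp (338 * τ ^ 2)) := fun j =>
    (lintegral_exp_abs_lin (η j) (13 * τ) (hη j)).trans (by
      apply ENNReal.ofReal_le_ofReal; gcongr; nlinarith [sq_nonneg τ])
  have e2 : ∀ j, ∫⁻ w, ENNReal.ofReal (Real.exp (13 * τ / Real.sqrt n * (w ⬝ᵥ η j) ^ 2))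
      ∂(stdG (Fin n)) ≤ ENNReal.ofReal (2 * Real.exp (338 * τ ^ 2)) := fun j =>
    (lintegral_exp_sq (η j) (hη j) (13 * τ / Real.sqrt n) (by positivity) hsmall).trans (by
      apply ENNReal.ofReal_le_ofReal
      nlinarith [Real.one_le_exp (show 0 ≤ 338 * τ ^ 2 by positivity)])
  have e3 : ∫⁻ w, ENNReal.ofReal (Real.exp (13 * τ / Real.sqrt n * |w ⬝ᵥ P *ᵥ w - d|))
      ∂(stdG (Fin n)) ≤ ENNReal.ofReal (2 * Real.exp (338 * τ ^ 2)) := by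
    have := lintegral_exp_abs_quad P hP h0 h1 (13 * τ / Real.sqrt n)
      (by rw [abs_of_nonneg (by positivity)]; exact hsmall)
    rw [htr] at this
    refine this.trans (ENNReal.ofReal_le_ofReal ?_)
    have : (13 * τ / Real.sqrt n) ^ 2 * d ≤ 169 * τ ^ 2 := by
      rw [div_pow, hss, div_mul_eq_mul_div, div_le_iff₀ hn']
      nlinarith [mul_le_mul_of_nonneg_left hd (sq_nonneg τ)]
    refine mul_le_mul_of_nonneg_left (Real.exp_le_exp.2 ?_) (by norm_num)
    linarith
  set E := ENNReal.ofReal (2 * Real.exp (338 * τ ^ 2))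
  have key : ∀ w : Fin n → ℝ, ENNReal.ofReal (Real.exp (τ * Tfun P d η w)) ≤
      ENNReal.ofReal (1 / 13) * (∑ j, ENNReal.ofReal (Real.exp (13 * τ * |w ⬝ᵥ η j|))
        + ∑ j, ENNReal.ofReal (Real.exp (13 * τ / Real.sqrt n * (w ⬝ᵥ η j) ^ 2))
        + ENNReal.ofReal (Real.exp (13 * τ / Real.sqrt n * |w ⬝ᵥ P *ᵥ w - d|))) := by
    intro w
    have := exp_sum13 (fun j => τ * |w ⬝ᵥ η j|) (fun j => τ * ((w ⬝ᵥ η j) ^ 2 / Real.sqrt n))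
      (τ * (|w ⬝ᵥ P *ᵥ w - d| / Real.sqrt n))
    rw [← ENNReal.ofReal_sum_of_nonneg (fun _ _ => (Real.exp_pos _).le),
      ← ENNReal.ofReal_sum_of_nonneg (fun _ _ => (Real.exp_pos _).le),
      ← ENNReal.ofReal_add (by positivity) (by positivity),
      ← ENNReal.ofReal_add (by positivity) (by positivity), ← ENNReal.ofReal_mul (by norm_num)]
    apply ENNReal.ofReal_le_ofReal
    refine le_trans (le_of_eq ?_) (this.trans (le_of_eq ?_))
    · unfold Tfun; simp only [mul_add, Finset.mul_sum]
    · have r1 : ∀ j, 13 * (τ * |w ⬝ᵥ η j|) = 13 * τ * |w ⬝ᵥ η j| := fun j => by ring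
      have r2 : ∀ j, 13 * (τ * ((w ⬝ᵥ η j) ^ 2 / Real.sqrt n))
          = 13 * τ / Real.sqrt n * (w ⬝ᵥ η j) ^ 2 := fun j => by ring
      have r3 : 13 * (τ * (|w ⬝ᵥ P *ᵥ w - d| / Real.sqrt n))
          = 13 * τ / Real.sqrt n * |w ⬝ᵥ P *ᵥ w - d| := by ring
      simp only [r1, r2, r3]
  refine (lintegral_mono key).trans ?_
  have m1 : ∀ v : Fin n → ℝ, Measurable fun w : Fin n → ℝ => w ⬝ᵥ v := fun v => by
    unfold dotProduct; fun_prop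
  have m2 : Measurable fun w : Fin n → ℝ => w ⬝ᵥ P *ᵥ w := by
    unfold Matrix.mulVec dotProduct; fun_prop
  have ma : ∀ j, Measurable fun w : Fin n → ℝ =>
      ENNReal.ofReal (Real.exp (13 * τ * |w ⬝ᵥ η j|)) := fun j => by
    have := m1 (η j); fun_prop
  have mb : ∀ j, Measurable fun w : Fin n → ℝ =>
      ENNReal.ofReal (Real.exp (13 * τ / Real.sqrt n * (w ⬝ᵥ η j) ^ 2)) := fun j => by
    have := m1 (η j); fun_prop
  have mc : Measurable fun w : Fin n → ℝ =>
      ENNReal.ofReal (Real.exp (13 * τ / Real.sqrt n * |w ⬝ᵥ P *ᵥ w - d|)) := by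
    fun_prop
  rw [lintegral_const_mul _ (by fun_prop), lintegral_add_left (by fun_prop),
    lintegral_add_left (by fun_prop), lintegral_finsetSum _ (fun j _ => ma j),
    lintegral_finsetSum _ (fun j _ => mb j)]
  calc _ ≤ ENNReal.ofReal (1 / 13) * (∑ j : Fin 6, E + ∑ j : Fin 6, E + E) := by
        gcongr with j _ j _
        · exact e1 j
        · exact e2 j
    _ = E := by
        have : (∑ j : Fin 6, E + ∑ j : Fin 6, E + E) = ENNReal.ofReal 13 * E := by
          simp only [Finset.sum_const, Finset.card_univ, Fintype.card_fin, nsmul_eq_mul]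
          rw [show (ENNReal.ofReal 13) = 13 by simp]
          push_cast
          ring
        rw [this, ← mul_assoc, ← ENNReal.ofReal_mul (by norm_num)]
        norm_num

/-! ### Pointwise bound on the derivative along the path -/

/-- The normalisation `x / ‖x‖₂`, equal to `0` at `x = 0`. -/
def uv {n : ℕ} (x : Fin n → ℝ) : Fin n → ℝ := (l2 x)⁻¹ • x

/-- `x - ⟨q, x⟩ q`, the orthogonal projection onto `q^⊥` for a unit vector `q`. -/
def perp {n : ℕ} (q x : Fin n → ℝ) : Fin n → ℝ := x - (q ⬝ᵥ x) • q

lemma l2_smul_uv {n : ℕ} (x : Fin n → ℝ) : l2 x • uv x = x := by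
  unfold uv
  by_cases h : l2 x = 0
  · simp [l2_eq_zero h]
  · rw [smul_smul, mul_inv_cancel₀ h, one_smul]

lemma uv_dp_self {n : ℕ} (x : Fin n → ℝ) : uv x ⬝ᵥ uv x ≤ 1 := by
  unfold uv
  rw [smul_dotProduct, dotProduct_smul, smul_eq_mul, smul_eq_mul]
  by_cases h : l2 x = 0
  · simp [h]
  · rw [← l2_sq]; apply le_of_eq; field_simp

/-- A linear form against `x` is `‖x‖₂` times the normalised one. -/
lemma abs_dp_uv {n : ℕ} (w x : Fin n → ℝ) : |w ⬝ᵥ x| = l2 x * |w ⬝ᵥ uv x| := by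
  conv_lhs => rw [← l2_smul_uv x]
  rw [dotProduct_smul, smul_eq_mul, abs_mul, abs_of_nonneg (l2_nonneg x)]

lemma perp_dp {n : ℕ} (q x y : Fin n → ℝ) : perp q x ⬝ᵥ y = x ⬝ᵥ perp q y := by
  unfold perp
  rw [sub_dotProduct, dotProduct_sub, smul_dotProduct, dotProduct_smul, dotProduct_comm x q,
    smul_eq_mul, smul_eq_mul, mul_comm]

lemma l2_perp_le {n : ℕ} (q x : Fin n → ℝ) (hq : q ⬝ᵥ q ≤ 1) : l2 (perp q x) ≤ l2 x := by
  rw [l2_eq_sqrt, l2_eq_sqrt]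
  apply Real.sqrt_le_sqrt
  have : perp q x ⬝ᵥ perp q x = x ⬝ᵥ x - (2 - q ⬝ᵥ q) * (q ⬝ᵥ x) ^ 2 := by
    unfold perp
    simp only [sub_dotProduct, dotProduct_sub, smul_dotProduct, dotProduct_smul, smul_eq_mul,
      dotProduct_comm x q]
    ring
  rw [this]; nlinarith [sq_nonneg (q ⬝ᵥ x)]

/-- The six directions along which the Gaussian vector enters the remainder: `r` stands for the
prediction error, `v` for `X N a`, `z` for the score vector and `q` for the noise direction. -/
def etaV {n : ℕ} (P : Matrix (Fin n) (Fin n) ℝ) (q r v z : Fin n → ℝ) : Fin 6 → Fin n → ℝ :=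
  ![uv (perp q r), uv (perp q v), uv (perp q (P *ᵥ perp q z)), uv (perp q z), q, uv (P *ᵥ q)]

lemma etaV_dp {n : ℕ} (P : Matrix (Fin n) (Fin n) ℝ) (q r v z : Fin n → ℝ) (hq : q ⬝ᵥ q ≤ 1)
    (j : Fin 6) : etaV P q r v z j ⬝ᵥ etaV P q r v z j ≤ 1 := by
  fin_cases j <;> first | exact uv_dp_self _ | exact hq

section core
variable {n : ℕ} (P : Matrix (Fin n) (Fin n) ℝ) (q r v z zd w : Fin n → ℝ)

lemma Tfun_etaV (d : ℝ) :
    Tfun P d (etaV P q r v z) w =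
      (|w ⬝ᵥ uv (perp q r)| + |w ⬝ᵥ uv (perp q v)| + |w ⬝ᵥ uv (perp q (P *ᵥ perp q z))|
        + |w ⬝ᵥ uv (perp q z)| + |w ⬝ᵥ q| + |w ⬝ᵥ uv (P *ᵥ q)|)
      + ((w ⬝ᵥ uv (perp q r)) ^ 2 / √n + (w ⬝ᵥ uv (perp q v)) ^ 2 / √n
        + (w ⬝ᵥ uv (perp q (P *ᵥ perp q z))) ^ 2 / √n
        + (w ⬝ᵥ uv (perp q z)) ^ 2 / √n + (w ⬝ᵥ q) ^ 2 / √n + (w ⬝ᵥ uv (P *ᵥ q)) ^ 2 / √n)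
      + |w ⬝ᵥ P *ᵥ w - d| / √n := by
  unfold Tfun
  rw [Fin.sum_univ_six, Fin.sum_univ_six]
  rfl

set_option maxHeartbeats 800000 in
/-- Scalar form of `core_bound`: `x1, …, x6` are the absolute values of the six linear forms, `y` is
the centred quadratic form and `S` stands for `√n`. -/
lemma scalar_bound (S L C M1 M2 m4 M5 nv α αd wr wv wPz wz zz y x1 x2 x3 x4 x5 x6 T s c Q : ℝ)
    (hS : 0 < S) (hL : 0 ≤ L) (hC : 0 < C) (hM1 : 0 < M1) (hM2 : 0 < M2) (hm4 : 0 < m4)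
    (hM5 : 0 < M5) (hs : |s| ≤ 1) (hc : |c| ≤ 1)
    (hx1 : 0 ≤ x1) (hx2 : 0 ≤ x2) (hx3 : 0 ≤ x3) (hx4 : 0 ≤ x4) (hx5 : 0 ≤ x5) (hx6 : 0 ≤ x6)
    (hT : T = (x1 + x2 + x3 + x4 + x5 + x6)
      + (x1 ^ 2 / S + x2 ^ 2 / S + x3 ^ 2 / S + x4 ^ 2 / S + x5 ^ 2 / S + x6 ^ 2 / S) + |y| / S)
    (hα : |α| ≤ C * M2 * L) (hnv0 : 0 ≤ nv) (hnv : nv ≤ m4 * C / S)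
    (hwr : |wr| ≤ M1 * S * L * x1) (hwv : |wv| ≤ nv * x2) (hwPz : |wPz| ≤ M5 * S * x3)
    (hwz : |wz| ≤ M5 * S * x4) (hzz0 : 0 ≤ zz) (hzz : zz ≤ (M5 * S) ^ 2)
    (zv : ℝ) (hzv : |zv| ≤ M5 * S * nv)
    (hQ : |Q| ≤ |y| + 2 * (x5 * x6) + x5 ^ 2)
    (hαd : C * αd = - nv ^ 2 * wr - α * wv) :
    |αd| ≤ C * L / S * (m4 ^ 2 * M1 + M2 * m4) * T ∧
    |-(wr * (c * zv - s * wv)) - α * (c * wPz - s * Q) - αd * (c * zz - s * wz)|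
      ≤ C * L * S * (M1 * m4 * (M5 + 1) + M2 * M5 + 2 * M2 + (m4 ^ 2 * M1 + M2 * m4) * (M5 ^ 2 + M5))
        * T ∧
    |wr - α / C * wz| ≤ L * S * (M1 + M2 * M5) * T := by
  have hyS : 0 ≤ |y| / S := by positivity
  have q1 : 0 ≤ x1 ^ 2 / S := by positivity
  have q2 : 0 ≤ x2 ^ 2 / S := by positivity
  have q3 : 0 ≤ x3 ^ 2 / S := by positivity
  have q4 : 0 ≤ x4 ^ 2 / S := by positivity
  have q5 : 0 ≤ x5 ^ 2 / S := by positivity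
  have q6 : 0 ≤ x6 ^ 2 / S := by positivity
  have hT0 : 0 ≤ T := by rw [hT]; positivity
  have hCL : 0 ≤ C * L := by positivity
  -- a product of two linear forms is absorbed by the squares in `T`
  have pr : ∀ a b : ℝ, 0 ≤ a → 0 ≤ b → a * b / S ≤ a ^ 2 / S + b ^ 2 / S := by
    intro a b ha hb
    rw [← add_div]; gcongr; nlinarith [sq_nonneg (a - b), sq_nonneg a, sq_nonneg b]
  have b12 := pr x1 x2 hx1 hx2
  have b14 := pr x1 x4 hx1 hx4
  have b24 := pr x2 x4 hx2 hx4
  have b56 := pr x5 x6 hx5 hx6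
  have t1 : x1 ≤ T := by rw [hT]; linarith
  have t2 : x2 ≤ T := by rw [hT]; linarith
  have t3 : x3 ≤ T := by rw [hT]; linarith
  have t4 : x4 ≤ T := by rw [hT]; linarith
  have t12 : x1 * x2 / S ≤ T := by rw [hT]; linarith
  have t14 : x1 * x4 / S ≤ T := by rw [hT]; linarith
  have t24 : x2 * x4 / S ≤ T := by rw [hT]; linarith
  have t56 : |y| / S + 2 * (x5 * x6 / S) + x5 ^ 2 / S ≤ 2 * T := by
    have : 2 * (x5 * x6 / S) ≤ x5 ^ 2 / S + x6 ^ 2 / S := by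
      rw [← add_div, ← mul_div_assoc]; gcongr; nlinarith [sq_nonneg (x5 - x6)]
    rw [hT]; linarith
  clear hT b12 b14 b24 b56 pr q1 q2 q3 q4 q5 q6
  have hd1 : |C * αd| ≤ C * (C * L / S * (m4 ^ 2 * M1 * x1 + M2 * m4 * x2)) := by
    rw [hαd]
    calc |-nv ^ 2 * wr - α * wv| ≤ nv ^ 2 * |wr| + |α| * |wv| := by
          rw [show -nv ^ 2 * wr - α * wv = -(nv ^ 2 * wr + α * wv) by ring, abs_neg]
          refine (abs_add_le _ _).trans ?_
          rw [abs_mul, abs_mul, abs_of_nonneg (sq_nonneg nv)]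
      _ ≤ (m4 * C / S) ^ 2 * (M1 * S * L * x1) + (C * M2 * L) * (m4 * C / S * x2) := by
          gcongr
          exact hwv.trans (by gcongr)
      _ = _ := by field_simp
  have hd : |αd| ≤ C * L / S * (m4 ^ 2 * M1 * x1 + M2 * m4 * x2) := by
    rw [abs_mul, abs_of_pos hC] at hd1
    exact le_of_mul_le_mul_left hd1 hC
  refine ⟨hd.trans ?_, ?_, ?_⟩
  · rw [mul_assoc (C * L / S), add_mul]
    gcongr
  · have a1 : |wr * (c * zv - s * wv)| ≤ C * L * S * (M1 * m4 * (M5 + 1)) * T := by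
      rw [abs_mul]
      have : |c * zv - s * wv| ≤ m4 * C / S * (M5 * S + x2) := by
        calc |c * zv - s * wv| ≤ |c| * |zv| + |s| * |wv| := by
              refine (abs_sub _ _).trans ?_
              rw [abs_mul, abs_mul]
          _ ≤ 1 * (M5 * S * nv) + 1 * (nv * x2) := by gcongr
          _ = nv * (M5 * S + x2) := by ring
          _ ≤ _ := by gcongr
      calc |wr| * |c * zv - s * wv| ≤ (M1 * S * L * x1) * (m4 * C / S * (M5 * S + x2)) := by gcongr
        _ = C * L * S * (M1 * m4) * (M5 * x1 + x1 * x2 / S) := by field_simp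
        _ ≤ C * L * S * (M1 * m4) * (M5 * T + T) := by
          gcongr
        _ = _ := by ring
    have a2 : |α * (c * wPz - s * Q)| ≤ C * L * S * (M2 * M5 + 2 * M2) * T := by
      rw [abs_mul]
      calc |α| * |c * wPz - s * Q| ≤ (C * M2 * L) * (1 * (M5 * S * x3) + 1 * (|y| + 2 * (x5 * x6) + x5 ^ 2)) := by
            gcongr
            refine (abs_sub _ _).trans ?_
            rw [abs_mul, abs_mul]
            gcongr
        _ = C * L * S * M2 * (M5 * x3 + (|y| / S + 2 * (x5 * x6 / S) + x5 ^ 2 / S)) := by field_simp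
        _ ≤ C * L * S * M2 * (M5 * T + 2 * T) := by
            gcongr
        _ = _ := by ring
    have a3 : |αd * (c * zz - s * wz)| ≤
        C * L * S * ((m4 ^ 2 * M1 + M2 * m4) * (M5 ^ 2 + M5)) * T := by
      rw [abs_mul]
      calc |αd| * |c * zz - s * wz| ≤ (C * L / S * (m4 ^ 2 * M1 * x1 + M2 * m4 * x2)) *
            (1 * (M5 * S) ^ 2 + 1 * (M5 * S * x4)) := by
            gcongr
            refine (abs_sub _ _).trans ?_
            rw [abs_mul, abs_mul, abs_of_nonneg hzz0]
            gcongr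
        _ = C * L * S * ((m4 ^ 2 * M1) * (M5 ^ 2 * x1 + M5 * (x1 * x4 / S))
              + (M2 * m4) * (M5 ^ 2 * x2 + M5 * (x2 * x4 / S))) := by field_simp
        _ ≤ C * L * S * ((m4 ^ 2 * M1) * (M5 ^ 2 * T + M5 * T)
              + (M2 * m4) * (M5 ^ 2 * T + M5 * T)) := by
            gcongr
        _ = _ := by ring
    calc _ ≤ |wr * (c * zv - s * wv)| + |α * (c * wPz - s * Q)| + |αd * (c * zz - s * wz)| := by
          refine (abs_sub _ _).trans ?_
          gcongr
          refine (abs_sub _ _).trans ?_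
          rw [abs_neg]
      _ ≤ _ := by linarith
  · have : |α / C * wz| ≤ M2 * L * (M5 * S * x4) := by
      rw [abs_mul, abs_div, abs_of_pos hC]
      gcongr
      rw [div_le_iff₀ hC]; linarith
    calc _ ≤ |wr| + |α / C * wz| := abs_sub _ _
      _ ≤ M1 * S * L * x1 + M2 * L * (M5 * S * x4) := by gcongr
      _ = L * S * (M1 * x1 + M2 * M5 * x4) := by ring
      _ ≤ L * S * (M1 * T + M2 * M5 * T) := by gcongr
      _ = _ := by ring
end core

/-- The constant of the pointwise derivative bound. -/
def K1 (M1 M2 m4 M5 : ℝ) : ℝ :=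
  M1 * m4 * (M5 + 1) + M2 * M5 + 2 * M2 + (m4 ^ 2 * M1 + M2 * m4) * (M5 ^ 2 + M5)

/-- The pointwise estimate behind the path argument, for a projection `P`, noise direction `q`, residual
`r = Xh`, `v = X_A(X_AᵀX_A)⁻¹a_A`, score vector `z`, its time derivative `zd` and `α = ⟨a, h⟩`. Every term
is linear or quadratic in the driving Gaussian vector `w`; the quadratic form `s α ⟨w, Pw⟩` is the only
one without cancellation, and subtracting `s d α` with `d` the rank of `P` centres it. -/
lemma core_bound {n : ℕ} (hn : 0 < n) {P : Matrix (Fin n) (Fin n) ℝ} (hs : Pᵀ = P)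
    (hi : P * P = P) (q r v z zd w : Fin n → ℝ) (hq : q ⬝ᵥ q ≤ 1)
    (hqq : (q ⬝ᵥ q) • q = q) (C L M1 M2 m4 M5 α αd d s c : ℝ)
    (hL : 0 ≤ L) (hC : 0 < C) (hM1 : 0 < M1) (hM2 : 0 < M2) (hm4 : 0 < m4)
    (hM5 : 0 < M5) (hs1 : |s| ≤ 1) (hc : |c| ≤ 1)
    (hzd : C • zd = perp q w)
    (hα : |α| ≤ C * M2 * L) (hv : l2 v ≤ m4 * C / √n) (hr : l2 r ≤ M1 * √n * L)
    (hz : C * l2 z ≤ M5 * √n)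
    (hαd : αd = -(v ⬝ᵥ v) * (zd ⬝ᵥ r) - α * (v ⬝ᵥ zd)) (e0 : Fin n → ℝ)
    (he0 : e0 = c • perp q z - s • zd) :
    |αd| ≤ C * L / √n * (m4 ^ 2 * M1 + M2 * m4) * Tfun P d (etaV P q r v z) w ∧
    |C ^ 2 * (e0 ⬝ᵥ (-((zd ⬝ᵥ r) • v) - α • P *ᵥ zd) - αd * (e0 ⬝ᵥ z)) - s * d * α|
      ≤ C * L * √n * K1 M1 M2 m4 M5 * Tfun P d (etaV P q r v z) w ∧
    |C * (zd ⬝ᵥ (r - α • z))| ≤ L * √n * (M1 + M2 * M5) * Tfun P d (etaV P q r v z) w := by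
  have hS : 0 < √(n : ℝ) := Real.sqrt_pos.2 (by exact_mod_cast hn)
  have hz' : C * l2 (perp q z) ≤ M5 * √n :=
    (mul_le_mul_of_nonneg_left (l2_perp_le q z hq) hC.le).trans hz
  have hPs : ∀ x y : Fin n → ℝ, (P *ᵥ x) ⬝ᵥ y = x ⬝ᵥ P *ᵥ y := fun x y => by rw [dp_mulVec, hs]
  have hqx : ∀ x, q ⬝ᵥ perp q x = 0 := fun x => by
    have h := congrArg (· ⬝ᵥ x) hqq
    simp only [smul_dotProduct, smul_eq_mul] at h
    unfold perp
    rw [dotProduct_sub, dotProduct_smul, smul_eq_mul]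
    linarith
  have hpp : ∀ x, perp q (perp q x) = perp q x := fun x => by
    conv_lhs => unfold perp
    rw [show q ⬝ᵥ (x - (q ⬝ᵥ x) • q) = 0 from hqx x, zero_smul, sub_zero]; rfl
  set Z := perp q z with hZ
  set w' := perp q w with hw'
  have lin : ∀ x, C * (zd ⬝ᵥ x) = w' ⬝ᵥ x := fun x => by
    rw [← hzd, smul_dotProduct, smul_eq_mul]
  have hwx : ∀ x, |w' ⬝ᵥ x| = l2 (perp q x) * |w ⬝ᵥ uv (perp q x)| := fun x => by
    rw [hw', perp_dp, abs_dp_uv]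
  have hwx' : ∀ x B, l2 x ≤ B → |w' ⬝ᵥ x| ≤ B * |w ⬝ᵥ uv (perp q x)| := fun x B hB => by
    rw [hwx]; gcongr; exact (l2_perp_le q x hq).trans hB
  have key := scalar_bound (√n) L C M1 M2 m4 M5 (l2 v) α αd (w' ⬝ᵥ r) (w' ⬝ᵥ v) (w' ⬝ᵥ P *ᵥ (C • Z))
    (w' ⬝ᵥ (C • Z)) ((C • Z) ⬝ᵥ (C • Z)) (w ⬝ᵥ P *ᵥ w - d)
    (|w ⬝ᵥ uv (perp q r)|) (|w ⬝ᵥ uv (perp q v)|) (|w ⬝ᵥ uv (perp q (P *ᵥ Z))|)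
    (|w ⬝ᵥ uv (perp q z)|) (|w ⬝ᵥ q|) (|w ⬝ᵥ uv (P *ᵥ q)|) (Tfun P d (etaV P q r v z) w) s c
    (w' ⬝ᵥ P *ᵥ w' - d) hS hL hC hM1 hM2 hm4 hM5 hs1 hc (abs_nonneg _) (abs_nonneg _)
    (abs_nonneg _) (abs_nonneg _) (abs_nonneg _) (abs_nonneg _)
    (by rw [Tfun_etaV]; simp only [sq_abs]; rfl) hα (l2_nonneg v) hv (hwx' r _ hr) (hwx' v _ le_rfl)
    (by
      rw [Matrix.mulVec_smul, dotProduct_smul, smul_eq_mul, abs_mul, abs_of_pos hC]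
      have := hwx' (P *ᵥ Z) _ (proj_l2_le hs hi Z)
      calc C * |w' ⬝ᵥ P *ᵥ Z| ≤ C * (l2 Z * |w ⬝ᵥ uv (perp q (P *ᵥ Z))|) := by gcongr
        _ = C * l2 Z * |w ⬝ᵥ uv (perp q (P *ᵥ Z))| := by ring
        _ ≤ _ := by gcongr)
    (by
      rw [dotProduct_smul, smul_eq_mul, abs_mul, abs_of_pos hC, hwx, hZ, hpp, ← hZ, ← mul_assoc]
      gcongr)
    (dp_nonneg _)
    (by
      rw [← l2_sq, l2_smul, abs_of_pos hC]
      have := mul_nonneg hC.le (l2_nonneg Z)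
      gcongr)
    ((C • Z) ⬝ᵥ v)
    (by
      refine (abs_dp_le _ _).trans ?_
      rw [l2_smul, abs_of_pos hC]
      have := l2_nonneg v
      gcongr)
    (by
      have e : w' ⬝ᵥ P *ᵥ w' - d = (w ⬝ᵥ P *ᵥ w - d) - 2 * ((w ⬝ᵥ q) * (w ⬝ᵥ P *ᵥ q))
          + (w ⬝ᵥ q) ^ 2 * (q ⬝ᵥ P *ᵥ q) := by
        have h1 : q ⬝ᵥ P *ᵥ w = w ⬝ᵥ P *ᵥ q := by rw [← hPs, dotProduct_comm]
        rw [hw']; unfold perp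
        rw [Matrix.mulVec_sub, Matrix.mulVec_smul]
        simp only [sub_dotProduct, dotProduct_sub, smul_dotProduct, dotProduct_smul, smul_eq_mul,
          h1, dotProduct_comm q w]
        ring
      have h6 : |w ⬝ᵥ P *ᵥ q| ≤ |w ⬝ᵥ uv (P *ᵥ q)| := by
        rw [abs_dp_uv]
        refine mul_le_of_le_one_left (abs_nonneg _) ((proj_l2_le hs hi q).trans ?_)
        rw [l2_eq_sqrt]; exact Real.sqrt_le_one.2 hq
      have h7 : q ⬝ᵥ P *ᵥ q ≤ 1 := (proj_quad_le hs hi q).trans hq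
      have h8 : 0 ≤ q ⬝ᵥ P *ᵥ q := by rw [proj_quad hs hi]; exact dp_nonneg _
      rw [e]
      refine (abs_add_le _ _).trans ?_
      refine add_le_add ((abs_sub _ _).trans (add_le_add le_rfl ?_)) ?_
      · rw [abs_mul, abs_mul, abs_two]; gcongr
      · rw [abs_mul, abs_of_nonneg (sq_nonneg _), abs_of_nonneg h8, sq_abs]
        exact mul_le_of_le_one_right (sq_nonneg _) h7)
    (by
      rw [hαd, mul_sub, l2_sq]
      have h1 := lin r
      have h2 := lin v
      rw [dotProduct_comm v zd]
      linear_combination (-(v ⬝ᵥ v)) * h1 - α * h2)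
  have hzdq : zd ⬝ᵥ q = 0 := by
    have h := lin q
    rw [dotProduct_comm w' q, hqx] at h
    exact (mul_eq_zero.1 h).resolve_left hC.ne'
  have hZq : Z ⬝ᵥ q = 0 := by rw [dotProduct_comm]; exact hqx z
  have hperp : ∀ x, x ⬝ᵥ q = 0 → x ⬝ᵥ z = x ⬝ᵥ Z := fun x hx => by
    rw [hZ]; unfold perp
    rw [dotProduct_sub, dotProduct_smul, hx, smul_zero, sub_zero]
  obtain ⟨k1, k2, k3⟩ := key
  refine ⟨k1, ?_, ?_⟩
  · refine le_trans (le_of_eq ?_) k2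
    congr 1
    have g1 := lin r
    have g2 := lin v
    have g3 : C * (C * (zd ⬝ᵥ P *ᵥ zd)) = w' ⬝ᵥ P *ᵥ w' := by
      rw [lin, ← hPs, dotProduct_comm, lin, ← hPs, dotProduct_comm]
    have g4 : C * (Z ⬝ᵥ P *ᵥ zd) = w' ⬝ᵥ P *ᵥ Z := by
      rw [← hPs, dotProduct_comm, lin]
    have g5 := lin Z
    rw [he0, hperp _ (by rw [sub_dotProduct, smul_dotProduct, smul_dotProduct, hzdq, hZq]; simp)]
    simp only [sub_dotProduct, dotProduct_sub, smul_dotProduct, dotProduct_smul, smul_eq_mul,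
      dotProduct_neg, Matrix.mulVec_smul, ← g1, ← g2, ← g3, ← g4, ← g5]
    ring
  · refine le_trans (le_of_eq ?_) k3
    congr 1
    rw [dotProduct_sub, dotProduct_smul, mul_sub, lin, hperp zd hzdq, dotProduct_smul, ← lin Z]
    simp only [smul_eq_mul]
    field_simp

/-! ### The interpolation path of a fixed realisation -/

lemma uv_idem {n : ℕ} (x : Fin n → ℝ) : (uv x ⬝ᵥ uv x) • uv x = uv x := by
  by_cases h : l2 x = 0
  · simp [uv, h]
  · have : uv x ⬝ᵥ uv x = 1 := by
      unfold uv
      rw [smul_dotProduct, dotProduct_smul, smul_eq_mul, smul_eq_mul, ← l2_sq]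
      field_simp
    rw [this, one_smul]

lemma projOn_eq {n : ℕ} (e x : Fin n → ℝ) : projOn e x = (uv e ⬝ᵥ x) • uv e := by
  funext i
  simp only [projOn, uv, dot_eq, smul_dotProduct, Pi.smul_apply, smul_eq_mul]
  ring

lemma projPerp_eq {n : ℕ} (e x : Fin n → ℝ) : projPerp e x = perp (uv e) x := by
  funext i
  simp only [projPerp, projOn_eq, perp, Pi.sub_apply]

lemma uv_perp {n : ℕ} (e x : Fin n → ℝ) : uv e ⬝ᵥ perp (uv e) x = 0 := by
  have h := congrArg (· ⬝ᵥ x) (uv_idem e)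
  simp only [smul_dotProduct, smul_eq_mul] at h
  unfold perp
  rw [dotProduct_sub, dotProduct_smul, smul_eq_mul]
  linarith

lemma dp_perp_self {n : ℕ} (e x : Fin n → ℝ) : e ⬝ᵥ perp (uv e) x = 0 := by
  conv_lhs => arg 1; rw [← l2_smul_uv e]
  rw [smul_dotProduct, uv_perp, smul_zero]

lemma perp_add {n : ℕ} (q x y : Fin n → ℝ) : perp q (x + y) = perp q x + perp q y := by
  unfold perp; rw [dotProduct_add, add_smul]; abel

lemma perp_smul {n : ℕ} (q x : Fin n → ℝ) (c : ℝ) : perp q (c • x) = c • perp q x := by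
  unfold perp; rw [dotProduct_smul, smul_sub, smul_smul, smul_eq_mul]

lemma perp_uv {n : ℕ} (e : Fin n → ℝ) : perp (uv e) (uv e) = 0 := by
  unfold perp; rw [uv_idem, sub_self]

lemma perp_perp {n : ℕ} (e x : Fin n → ℝ) : perp (uv e) (perp (uv e) x) = perp (uv e) x := by
  conv_lhs => unfold perp
  rw [show uv e ⬝ᵥ (x - (uv e ⬝ᵥ x) • uv e) = 0 from uv_perp e x, zero_smul, sub_zero]; rfl

lemma z0Path_eq {n : ℕ} (e z0 g : Fin n → ℝ) (t : ℝ) : z0Path e z0 g t =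
    (uv e ⬝ᵥ z0) • uv e + Real.cos t • perp (uv e) z0 + Real.sin t • perp (uv e) g := by
  funext i
  simp only [z0Path, projOn_eq, projPerp_eq, Pi.add_apply, Pi.smul_apply, smul_eq_mul]

lemma zdotPath_eq {n : ℕ} (e z0 g : Fin n → ℝ) (t : ℝ) : zdotPath e z0 g t =
    (-Real.sin t) • perp (uv e) z0 + Real.cos t • perp (uv e) g := by
  funext i
  simp only [zdotPath, projPerp_eq, Pi.add_apply, Pi.smul_apply, smul_eq_mul]

/-- The Gaussian vector driving the path at time `t`: its component orthogonal to `e` is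
`C ż₀(t)`, its component along `e` is that of `C g`. -/
def wPath {n : ℕ} (C : ℝ) (e z0 g : Fin n → ℝ) (t : ℝ) : Fin n → ℝ :=
  C • (projOn e g + zdotPath e z0 g t)

lemma perp_wPath {n : ℕ} (C : ℝ) (e z0 g : Fin n → ℝ) (t : ℝ) :
    C • zdotPath e z0 g t = perp (uv e) (wPath C e z0 g t) := by
  rw [wPath, perp_smul, perp_add, projOn_eq, perp_smul, perp_uv, zdotPath_eq, perp_add, perp_smul,
    perp_smul, perp_perp, perp_perp, smul_zero, zero_add]

lemma perp_z0Path {n : ℕ} (e z0 g : Fin n → ℝ) (t : ℝ) :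
    perp (uv e) (z0Path e z0 g t) =
      Real.cos t • perp (uv e) z0 + Real.sin t • perp (uv e) g := by
  rw [z0Path_eq, perp_add, perp_add, perp_smul, perp_smul, perp_smul, perp_uv, perp_perp,
    perp_perp, smul_zero, zero_add]

lemma perp_z0_eq {n : ℕ} (e z0 g : Fin n → ℝ) (t : ℝ) :
    perp (uv e) z0 = Real.cos t • perp (uv e) (z0Path e z0 g t)
      - Real.sin t • zdotPath e z0 g t := by
  rw [perp_z0Path, zdotPath_eq]
  have h := Real.cos_sq_add_sin_sq t
  funext i
  simp only [Pi.add_apply, Pi.sub_apply, Pi.smul_apply, smul_eq_mul]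
  linear_combination (-(perp (uv e) z0 i)) * h

lemma z0Path_zero {n : ℕ} (e z0 g : Fin n → ℝ) : z0Path e z0 g 0 = z0 := by
  rw [z0Path_eq]; simp [perp]

lemma hasDerivAt_z0Path {n : ℕ} (e z0 g : Fin n → ℝ) (t : ℝ) (i : Fin n) :
    HasDerivAt (fun s => z0Path e z0 g s i) (zdotPath e z0 g t i) t := by
  have := ((hasDerivAt_const t (projOn e z0 i)).add
    ((Real.hasDerivAt_cos t).mul_const (projPerp e z0 i))).add
    ((Real.hasDerivAt_sin t).mul_const (projPerp e g i))
  simp only [zero_add] at this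
  exact this

lemma abs_le_l2 {n : ℕ} (x : Fin n → ℝ) (i : Fin n) : |x i| ≤ l2 x := by
  rw [l2]
  apply Real.abs_le_sqrt
  exact Finset.single_le_sum (f := fun i => x i ^ 2) (fun _ _ => sq_nonneg _) (Finset.mem_univ i)

lemma l2_z0Path_sub {n : ℕ} (e z0 g : Fin n → ℝ) (t t' : ℝ) :
    l2 (z0Path e z0 g t - z0Path e z0 g t') ≤
      (l2 (perp (uv e) z0) + l2 (perp (uv e) g)) * |t - t'| := by
  have : z0Path e z0 g t - z0Path e z0 g t' =
      (Real.cos t - Real.cos t') • perp (uv e) z0 + (Real.sin t - Real.sin t') • perp (uv e) g := by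
    rw [z0Path_eq, z0Path_eq]
    funext i
    simp only [Pi.add_apply, Pi.sub_apply, Pi.smul_apply, smul_eq_mul]
    ring
  rw [this]
  refine (l2_add_le _ _).trans ?_
  rw [l2_smul, l2_smul, add_mul]
  have hc : |Real.cos t - Real.cos t'| ≤ |t - t'| := by
    have := Real.lipschitzWith_cos.dist_le_mul t t'
    simpa [Real.dist_eq] using this
  have hs : |Real.sin t - Real.sin t'| ≤ |t - t'| := by
    have := Real.lipschitzWith_sin.dist_le_mul t t'
    simpa [Real.dist_eq] using this
  have h1 := l2_nonneg (perp (uv e) z0)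
  have h2 := l2_nonneg (perp (uv e) g)
  nlinarith [mul_le_mul_of_nonneg_right hc h1, mul_le_mul_of_nonneg_right hs h2]

/-- The properties of a realisation in `Ω₁ ∩ Ω₂` used by the pathwise argument. The design at time
`t` is `W + z₀(t) aᵀ`; `L` stands for `σ λ₀ √s*` and `m4` for `√M₄`. -/
structure PathHyp {n p : ℕ} (W : Matrix (Fin n) (Fin p) ℝ) (a β : Fin p → ℝ) (e z0 g : Fin n → ℝ)
    (b : ℝ → Fin p → ℝ) (l L C M1 M2 m4 M5 : ℝ) : Prop where
  kkt : ∀ t, IsKKT (W + Matrix.vecMulVec (z0Path e z0 g t) a)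
    (e + (W + Matrix.vecMulVec (z0Path e z0 g t) a) *ᵥ β) l (b t)
  coer : ∃ c : ℝ, 0 < c ∧ ∀ t, 0 ≤ t → ∀ t', 0 ≤ t' → ∀ v : Fin p → ℝ,
    (∀ j ∉ suppF (b t) ∪ suppF (b t'), v j = 0) →
    c ^ 2 * (v ⬝ᵥ v) ≤ ((W + Matrix.vecMulVec (z0Path e z0 g t) a) *ᵥ v) ⬝ᵥ
      ((W + Matrix.vecMulVec (z0Path e z0 g t) a) *ᵥ v)
  hr : ∀ t, 0 ≤ t → l2 ((W + Matrix.vecMulVec (z0Path e z0 g t) a) *ᵥ (b t - β)) ≤ M1 * √n * L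
  hα : ∀ t, 0 ≤ t → |a ⬝ᵥ (b t - β)| ≤ C * M2 * L
  hcard : ∀ t, 0 ≤ t → (suppF (b t)).card ≤ n
  hv : ∀ t, 0 ≤ t → l2 (vX (W + Matrix.vecMulVec (z0Path e z0 g t) a) (suppF (b t)) a)
    ≤ m4 * C / √n
  hz : ∀ t, 0 ≤ t → C * l2 (z0Path e z0 g t) ≤ M5 * √n
  hz' : n / (C * l2 z0) ≤ M5 * √n

/-- The dominating functional evaluated along the path. -/
def TPath {n p : ℕ} (X : Matrix (Fin n) (Fin p) ℝ) (a β : Fin p → ℝ) (e z w : Fin n → ℝ)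
    (A : Finset (Fin p)) (b : Fin p → ℝ) : ℝ :=
  Tfun (projX X A) A.card (etaV (projX X A) (uv e) (X *ᵥ (b - β)) (vX X A a) z) w

section path
variable {n p : ℕ} {W : Matrix (Fin n) (Fin p) ℝ} {a β : Fin p → ℝ} {e z0 g : Fin n → ℝ}
    {b : ℝ → Fin p → ℝ} {l L C M1 M2 m4 M5 : ℝ}

/-- The Lasso path is Lipschitz in `t`: the design moves by a rank-one Lipschitz term, and the coercivity
is uniform in `t`. -/
lemma PathHyp.lip (H : PathHyp W a β e z0 g b l L C M1 M2 m4 M5) :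
    ∃ K : ℝ≥0, LipschitzOnWith K b (Set.Ici 0) := by
  obtain ⟨c, hc, hco⟩ := H.coer
  set K := (l2 a * (l2 e + M1 * √n * L) / c + C * M2 * L) / c with hK
  have hK0 : 0 ≤ K := by
    have h1 : 0 ≤ M1 * √n * L := (l2_nonneg _).trans (H.hr 0 le_rfl)
    have h2 : 0 ≤ C * M2 * L := (abs_nonneg _).trans (H.hα 0 le_rfl)
    have h3 := l2_nonneg a
    have h4 := l2_nonneg e
    positivity
  have hD : 0 ≤ l2 (perp (uv e) z0) + l2 (perp (uv e) g) := add_nonneg (l2_nonneg _) (l2_nonneg _)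
  refine ⟨⟨K * (l2 (perp (uv e) z0) + l2 (perp (uv e) g)), mul_nonneg hK0 hD⟩,
    LipschitzOnWith.of_dist_le_mul fun t ht t' ht' => ?_⟩
  have h := kkt_stable hc (H.kkt t) (H.kkt t') (hco t ht t' ht' (b t - b t') (by
    intro j hj
    simp only [suppF, Finset.mem_union, Finset.mem_filter, Finset.mem_univ, true_and,
      not_or, not_not] at hj
    simp [hj.1, hj.2])) (H.hr t' ht') (H.hα t' ht')
  have h' : l2 (b t - b t') ≤ K * (l2 (perp (uv e) z0) + l2 (perp (uv e) g)) * |t - t'| := by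
    refine h.trans ?_
    rw [mul_assoc K]
    exact mul_le_mul_of_nonneg_left (l2_z0Path_sub e z0 g t t') hK0
  refine (dist_pi_le_iff (by rw [Real.dist_eq]; exact mul_nonneg (mul_nonneg hK0 hD) (abs_nonneg _))).2 fun j => ?_
  rw [Real.dist_eq]
  exact (abs_le_l2 (b t - b t') j).trans h'

lemma PathHyp.det (H : PathHyp W a β e z0 g b l L C M1 M2 m4 M5) {t : ℝ} (ht : 0 ≤ t) :
    IsUnit (subMat ((W + Matrix.vecMulVec (z0Path e z0 g t) a)ᵀ *
      (W + Matrix.vecMulVec (z0Path e z0 g t) a)) (suppF (b t))).det := by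
  obtain ⟨c, hc, hco⟩ := H.coer
  exact det_of_coercive _ (pow_pos hc 2) fun v hv => hco t ht t ht v (by simpa using hv)

/-- At a time of differentiability, the derivative of `⟨a, h(t)⟩`, and that of
`C²⟨P_e^⊥ z₀, W h(t)⟩` centred by `sin t · |Ŝ(t)| · ⟨a, h(t)⟩`, are controlled by the functional. -/
lemma PathHyp.deriv_bound (H : PathHyp W a β e z0 g b l L C M1 M2 m4 M5) (hn : 0 < n)
    (hL : 0 ≤ L) (hC : 0 < C) (hM1 : 0 < M1) (hM2 : 0 < M2) (hm4 : 0 < m4) (hM5 : 0 < M5)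
    {t : ℝ} (ht : 0 < t) {bd : Fin p → ℝ} (hb : ∀ j, HasDerivAt (fun s => b s j) (bd j) t)
    (h0 : ∀ j, b t j = 0 → bd j = 0) :
    |a ⬝ᵥ bd| ≤ C * L / √n * (m4 ^ 2 * M1 + M2 * m4) *
      TPath (W + Matrix.vecMulVec (z0Path e z0 g t) a) a β e (z0Path e z0 g t) (wPath C e z0 g t)
        (suppF (b t)) (b t) ∧
    |C ^ 2 * (perp (uv e) z0 ⬝ᵥ W *ᵥ bd) - Real.sin t * (suppF (b t)).card * (a ⬝ᵥ (b t - β))| ≤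
      C * L * √n * K1 M1 M2 m4 M5 *
      TPath (W + Matrix.vecMulVec (z0Path e z0 g t) a) a β e (z0Path e z0 g t) (wPath C e z0 g t)
        (suppF (b t)) (b t) := by
  have hdet := H.det ht.le
  have hbd := lasso_deriv (hasDerivAt_z0Path e z0 g t) hb h0 (Eventually.of_forall H.kkt) hdet
  set z := z0Path e z0 g t with hz
  set zd := zdotPath e z0 g t with hzd
  set X := W + Matrix.vecMulVec z a with hX
  set A := suppF (b t) with hA
  have hzde : zd ⬝ᵥ e = 0 := by
    rw [hzd, zdotPath_eq, dotProduct_comm, dotProduct_add, dotProduct_smul, dotProduct_smul,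
      dp_perp_self, dp_perp_self, smul_zero, smul_zero, add_zero]
  rw [dotProduct_sub, hzde, zero_sub] at hbd
  set r := X *ᵥ (b t - β) with hr
  set α := a ⬝ᵥ (b t - β) with hα
  set N := selN (Xᵀ * X) A with hN
  have hNt : Nᵀ = N := selN_transpose (gram_transpose X) A
  have hXbd : X *ᵥ bd = -((zd ⬝ᵥ r) • vX X A a) - α • projX X A *ᵥ zd := by
    rw [hbd, Matrix.mulVec_sub, Matrix.mulVec_sub, Matrix.mulVec_smul, Matrix.mulVec_smul,
      Matrix.mulVec_smul, Matrix.mulVec_smul, vX, projX, neg_smul, ← Matrix.mulVec_mulVec,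
      ← Matrix.mulVec_mulVec]
  have habd : a ⬝ᵥ bd = -(vX X A a ⬝ᵥ vX X A a) * (zd ⬝ᵥ r) - α * (vX X A a ⬝ᵥ zd) := by
    rw [vX_dp_self hdet, hbd, Matrix.mulVec_sub, Matrix.mulVec_smul, Matrix.mulVec_smul,
      dotProduct_sub, dotProduct_smul, dotProduct_smul, vX, dp_mulVec, dp_mulVec, hNt]
    simp only [smul_eq_mul]
    ring
  have hWbd : W *ᵥ bd = X *ᵥ bd - (a ⬝ᵥ bd) • z := by
    rw [hX, rankone_mulVec]; abel
  have key := core_bound hn (projX_transpose X A) (projX_mul_self hdet) (uv e) r (vX X A a) z zd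
    (wPath C e z0 g t) (uv_dp_self e) (uv_idem e) C L M1 M2 m4 M5 α (a ⬝ᵥ bd) A.card (Real.sin t)
    (Real.cos t) hL hC hM1 hM2 hm4 hM5 (Real.abs_sin_le_one t) (Real.abs_cos_le_one t)
    (perp_wPath C e z0 g t) (H.hα t ht.le) (H.hv t ht.le) (H.hr t ht.le) (H.hz t ht.le) habd
    (perp (uv e) z0) (perp_z0_eq e z0 g t)
  refine ⟨key.1, ?_⟩
  rw [hWbd, dotProduct_sub, hXbd, dotProduct_smul, smul_eq_mul]
  exact key.2.1

end path

/-- The constant of the pathwise bound. -/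
def KK (M1 M2 m4 M5 : ℝ) : ℝ :=
  M5 ^ 2 * (M1 + M2 * M5) + 2 * M5 ^ 2 * M2 + M5 ^ 2 * K1 M1 M2 m4 M5
    + 2 * (m4 ^ 2 * M1 + M2 * m4) + 3 * M2

section path
variable {n p : ℕ} {W : Matrix (Fin n) (Fin p) ℝ} {a β : Fin p → ℝ} {e z0 g : Fin n → ℝ}
    {b : ℝ → Fin p → ℝ} {l L C M1 M2 m4 M5 : ℝ}

lemma lip_dp {K : ℝ≥0} (hb : LipschitzOnWith K b (Set.Ici 0)) (x : Fin p → ℝ) :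
    ∃ K' : ℝ≥0, LipschitzOnWith K' (fun t => x ⬝ᵥ (b t - β)) (Set.Ici 0) := by
  refine ⟨⟨(∑ j, |x j|) * K, by positivity⟩, LipschitzOnWith.of_dist_le_mul fun t ht t' ht' => ?_⟩
  rw [Real.dist_eq, ← dotProduct_sub]
  have : b t - β - (b t' - β) = b t - b t' := by abel
  rw [this]
  show |∑ j, x j * (b t - b t') j| ≤ (∑ j, |x j|) * K * dist t t'
  refine (Finset.abs_sum_le_sum_abs _ _).trans ?_
  rw [mul_assoc, Finset.sum_mul]
  refine Finset.sum_le_sum fun j _ => ?_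
  rw [abs_mul]
  refine mul_le_mul_of_nonneg_left ?_ (abs_nonneg _)
  have h1 := dist_le_pi_dist (b t) (b t') j
  rw [Real.dist_eq] at h1
  exact h1.trans (hb.dist_le_mul t ht t' ht')

/-- `t ↦ |Ŝ(t)|` is measurable on `[0, π/2]` because the path is continuous there. -/
lemma card_integrable {K : ℝ≥0} (hb : LipschitzOnWith K b (Set.Ici 0)) {N : ℝ}
    (hN : ∀ t, 0 ≤ t → ((suppF (b t)).card : ℝ) ≤ N) {φ : ℝ → ℝ} {B : ℝ}
    (hφ : ContinuousOn φ (Set.Ici 0)) (hB : ∀ t, 0 ≤ t → |φ t| ≤ B) :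
    IntervalIntegrable (fun t => Real.sin t * ((suppF (b t)).card : ℝ) * φ t) volume 0
      (Real.pi / 2) := by
  have hpi : (0 : ℝ) ≤ Real.pi / 2 := by positivity
  have hmax : Continuous fun t : ℝ => max t 0 := by fun_prop
  have hbt : Continuous fun t : ℝ => b (max t 0) :=
    hb.continuousOn.comp_continuous hmax fun t => Set.mem_Ici.2 (le_max_right _ _)
  have hφt : Continuous fun t : ℝ => φ (max t 0) :=
    hφ.comp_continuous hmax fun t => Set.mem_Ici.2 (le_max_right _ _)
  have hcm : Measurable fun t : ℝ => ((suppF (b (max t 0))).card : ℝ) := by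
    have : (fun t : ℝ => ((suppF (b (max t 0))).card : ℝ)) =
        fun t => ∑ j, Set.indicator {x : ℝ | x ≠ 0} (fun _ => (1 : ℝ)) (b (max t 0) j) := by
      funext t
      simp [suppF, Finset.card_filter, Set.indicator_apply]
    rw [this]
    refine Finset.measurable_sum _ fun j _ => ?_
    have h1 : Measurable (Set.indicator {x : ℝ | x ≠ 0} (fun _ => (1 : ℝ))) :=
      measurable_const.indicator (measurableSet_singleton (0 : ℝ)).compl
    exact h1.comp ((continuous_apply j).comp hbt).measurable
  have hm : Measurable fun t : ℝ =>
      Real.sin t * ((suppF (b (max t 0))).card : ℝ) * φ (max t 0) :=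
    (Real.measurable_sin.mul hcm).mul hφt.measurable
  have heq : ∀ t ∈ Set.Ioc 0 (Real.pi / 2),
      Real.sin t * ((suppF (b (max t 0))).card : ℝ) * φ (max t 0)
        = Real.sin t * ((suppF (b t)).card : ℝ) * φ t := by
    intro t ht
    rw [max_eq_left ht.1.le]
  rw [intervalIntegrable_iff_integrableOn_Ioc_of_le hpi]
  refine IntegrableOn.congr_fun ?_ heq measurableSet_Ioc
  refine Measure.integrableOn_of_bounded (M := N * B) (by simp) hm.aestronglyMeasurable ?_
  refine (ae_restrict_iff' measurableSet_Ioc).2 (Eventually.of_forall fun t ht => ?_)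
  rw [heq t ht, Real.norm_eq_abs, abs_mul, abs_mul, Nat.abs_cast]
  have h1 := Real.abs_sin_le_one t
  have h2 := hN t ht.1.le
  have h3 := hB t ht.1.le
  have h4 : (0 : ℝ) ≤ (suppF (b t)).card := Nat.cast_nonneg _
  calc _ ≤ 1 * N * B := by gcongr; exact mul_nonneg zero_le_one (h4.trans h2)
    _ = _ := by ring

/-- The pathwise bound: both remainders, up to a common factor, are dominated by a functional of `z₀`,
the functional at the endpoint `π/2`, and the integral of a function `E` dominated by the functional along
the path. The endpoint `0` of `f(t) = ⟨P_e^⊥ z₀, W h(t)⟩` gives the bias of the estimator, and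
`f(0)` is recovered from `f(π/2)` by integrating the derivative of `f` over `[0, π/2]`. -/
lemma PathHyp.rem_bound (H : PathHyp W a β e z0 g b l L C M1 M2 m4 M5) (hn : 0 < n)
    (hL : 0 < L) (hC : 0 < C) (hM1 : 0 < M1) (hM2 : 0 < M2) (hm4 : 0 < m4) (hM5 : 0 < M5) :
    ∃ E : ℝ → ℝ, IntervalIntegrable E volume 0 (Real.pi / 2) ∧
      (∀ᵐ t : ℝ, 0 < t → E t ≤ KK M1 M2 m4 M5 *
        TPath (W + Matrix.vecMulVec (z0Path e z0 g t) a) a β e (z0Path e z0 g t)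
          (wPath C e z0 g t) (suppF (b t)) (b t)) ∧
      (∀ R : ℝ, (R = ∫ t in (0 : ℝ)..(Real.pi / 2),
            Real.sin t * ((suppF (b t)).card : ℝ) * (a ⬝ᵥ (b t - β))) ∨
          (R = (a ⬝ᵥ (b 0 - β)) * ∫ t in (0 : ℝ)..(Real.pi / 2),
            Real.sin t * ((suppF (b t)).card : ℝ)) →
        |n * (a ⬝ᵥ (b 0 - β) - z0 ⬝ᵥ ((W + Matrix.vecMulVec z0 a) *ᵥ (b 0 - β)) / l2 z0 ^ 2) - R|
          ≤ C * L * √n * (KK M1 M2 m4 M5 * Tfun 1 n (fun _ => uv e) (C • z0)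
            + KK M1 M2 m4 M5 * TPath (W + Matrix.vecMulVec (z0Path e z0 g (Real.pi / 2)) a) a β e
              (z0Path e z0 g (Real.pi / 2)) (wPath C e z0 g (Real.pi / 2))
              (suppF (b (Real.pi / 2))) (b (Real.pi / 2))
            + ∫ t in (0 : ℝ)..(Real.pi / 2), E t)) := by
  have hn' : (0 : ℝ) < n := by exact_mod_cast hn
  have hS : 0 < √(n : ℝ) := Real.sqrt_pos.2 hn'
  have hSS : √(n : ℝ) * √(n : ℝ) = n := Real.mul_self_sqrt hn'.le
  have hpi : (0 : ℝ) ≤ Real.pi / 2 := by positivity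
  have hpi2 : Real.pi / 2 ≤ 2 := by linarith [Real.pi_le_four]
  obtain ⟨K, hlip⟩ := H.lip
  set T0 := Tfun 1 n (fun _ => uv e) (C • z0) with hT0
  set TP : ℝ → ℝ := fun t => TPath (W + Matrix.vecMulVec (z0Path e z0 g t) a) a β e
    (z0Path e z0 g t) (wPath C e z0 g t) (suppF (b t)) (b t) with hTP
  set α : ℝ → ℝ := fun t => a ⬝ᵥ (b t - β) with hαdef
  set x0 := perp (uv e) z0 with hx0
  set f : ℝ → ℝ := fun t => (Wᵀ *ᵥ x0) ⬝ᵥ (b t - β) with hf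
  have hft : ∀ t, f t = x0 ⬝ᵥ W *ᵥ (b t - β) := fun t => by
    rw [hf]; show (Wᵀ *ᵥ x0) ⬝ᵥ (b t - β) = _
    rw [dp_mulVec, Matrix.transpose_transpose]
  have hTP0 : ∀ t, 0 ≤ TP t := fun t => Tfun_nonneg _ _ _ _
  have hT00 : 0 ≤ T0 := Tfun_nonneg _ _ _ _
  obtain ⟨Kα, hlα⟩ := lip_dp (β := β) hlip a
  obtain ⟨Kf, hlf⟩ := lip_dp (β := β) hlip (Wᵀ *ᵥ x0)
  have hsub : ∀ t, 0 ≤ t → Set.uIcc 0 t ⊆ Set.Ici (0 : ℝ) := fun t ht => by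
    rw [Set.uIcc_of_le ht]; exact Set.Icc_subset_Ici_self
  have acf := (hlf.mono (hsub _ hpi)).absolutelyContinuousOnInterval
  have acα := (hlα.mono (hsub _ hpi)).absolutelyContinuousOnInterval
  have If' := acf.intervalIntegrable_deriv
  have Iα' := acα.intervalIntegrable_deriv
  have hcardR : ∀ t, 0 ≤ t → ((suppF (b t)).card : ℝ) ≤ n := fun t ht => by
    exact_mod_cast H.hcard t ht
  have Iα : IntervalIntegrable (fun t => Real.sin t * ((suppF (b t)).card : ℝ) * α t) volume 0
      (Real.pi / 2) := card_integrable hlip hcardR hlα.continuousOn H.hα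
  have I1 : IntervalIntegrable (fun t => Real.sin t * ((suppF (b t)).card : ℝ)) volume 0
      (Real.pi / 2) := by
    have := card_integrable hlip hcardR (φ := fun _ => (1 : ℝ)) (B := 1) continuousOn_const
      (by simp)
    simpa using this
  set I := ∫ t in (0 : ℝ)..(Real.pi / 2), Real.sin t * ((suppF (b t)).card : ℝ) * α t with hI
  set G : ℝ → ℝ := fun t => C ^ 2 * deriv f t - Real.sin t * ((suppF (b t)).card : ℝ) * α t with hG
  have IG : IntervalIntegrable G volume 0 (Real.pi / 2) := (If'.const_mul _).sub Iα
  have hCLS : 0 < C * L * √n := by positivity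
  set E : ℝ → ℝ := fun t => (M5 ^ 2 * |G t| + 2 * n * |deriv α t|) / (C * L * √n) with hE
  have IE : IntervalIntegrable E volume 0 (Real.pi / 2) :=
    ((IG.abs.const_mul _).add (Iα'.abs.const_mul _)).div_const _
  have hK1 : 0 ≤ K1 M1 M2 m4 M5 := by unfold K1; positivity
  have hintE : C * L * √n * ∫ t in (0 : ℝ)..(Real.pi / 2), E t =
      M5 ^ 2 * (∫ t in (0 : ℝ)..(Real.pi / 2), |G t|)
        + 2 * n * ∫ t in (0 : ℝ)..(Real.pi / 2), |deriv α t| := by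
    rw [hE]
    simp only []
    rw [intervalIntegral.integral_div, intervalIntegral.integral_add (IG.abs.const_mul _)
      (Iα'.abs.const_mul _), intervalIntegral.integral_const_mul,
      intervalIntegral.integral_const_mul]
    field_simp
    rfl
  have hGint : 0 ≤ ∫ t in (0 : ℝ)..(Real.pi / 2), |G t| :=
    intervalIntegral.integral_nonneg hpi fun _ _ => abs_nonneg _
  have hDint : 0 ≤ ∫ t in (0 : ℝ)..(Real.pi / 2), |deriv α t| :=
    intervalIntegral.integral_nonneg hpi fun _ _ => abs_nonneg _
  refine ⟨E, IE, ?_, ?_⟩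
  · filter_upwards [ae_deriv_path hlip] with t ht h0t
    obtain ⟨bd, hbd, hbd0⟩ := ht h0t
    obtain ⟨k1, k2⟩ := H.deriv_bound hn hL.le hC hM1 hM2 hm4 hM5 h0t hbd hbd0
    have hdp : ∀ x : Fin p → ℝ, deriv (fun t => x ⬝ᵥ (b t - β)) t = x ⬝ᵥ bd := by
      intro x
      have := hasDerivAt_dp (f := fun _ => x) (g := fun t => b t - β) (f' := 0) (g' := bd) (t := t)
        (fun i => by simpa using hasDerivAt_const t (x i))
        (fun i => by simpa using (hbd i).sub_const (β i))
      rw [this.deriv]; simp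
    have d1 : deriv α t = a ⬝ᵥ bd := hdp a
    have d2 : deriv f t = x0 ⬝ᵥ W *ᵥ bd := by
      rw [show deriv f t = (Wᵀ *ᵥ x0) ⬝ᵥ bd from hdp _, dp_mulVec, Matrix.transpose_transpose]
    rw [← d1] at k1
    rw [← d2] at k2
    show (M5 ^ 2 * |G t| + 2 * n * |deriv α t|) / (C * L * √n) ≤ KK M1 M2 m4 M5 * TP t
    rw [div_le_iff₀ hCLS]
    calc M5 ^ 2 * |G t| + 2 * n * |deriv α t|
        ≤ M5 ^ 2 * (C * L * √n * K1 M1 M2 m4 M5 * TP t)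
          + 2 * n * (C * L / √n * (m4 ^ 2 * M1 + M2 * m4) * TP t) := by gcongr
      _ = (M5 ^ 2 * K1 M1 M2 m4 M5 + 2 * (m4 ^ 2 * M1 + M2 * m4)) * TP t * (C * L * √n) := by
          have : 2 * (n : ℝ) * (C * L / √n * (m4 ^ 2 * M1 + M2 * m4) * TP t)
              = 2 * √n * (C * L * (m4 ^ 2 * M1 + M2 * m4) * TP t) := by
            have h : (n : ℝ) / √n = √n := by rw [div_eq_iff hS.ne', hSS]
            calc _ = 2 * ((n : ℝ) / √n) * (C * L * (m4 ^ 2 * M1 + M2 * m4) * TP t) := by ring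
              _ = _ := by rw [h]
          rw [this]; ring
      _ ≤ _ := by
          gcongr
          · exact hTP0 t
          · unfold KK
            have : 0 ≤ M5 ^ 2 * (M1 + M2 * M5) + 2 * M5 ^ 2 * M2 + 3 * M2 := by positivity
            linarith
  · -- the integrand of the second choice of `R` differs from that of `I` by at most the variation of `α`
    have hRI : ∀ R : ℝ, (R = I ∨ R = α 0 * ∫ t in (0 : ℝ)..(Real.pi / 2),
        Real.sin t * ((suppF (b t)).card : ℝ)) →
        |I - R| ≤ 2 * n * ∫ t in (0 : ℝ)..(Real.pi / 2), |deriv α t| := by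
      rintro R (rfl | rfl)
      · rw [sub_self, abs_zero]; positivity
      · rw [hI, ← intervalIntegral.integral_const_mul, ← intervalIntegral.integral_sub Iα
          (I1.const_mul _)]
        have hb' : ∀ t ∈ Set.uIoc 0 (Real.pi / 2),
            ‖Real.sin t * ((suppF (b t)).card : ℝ) * α t
              - α 0 * (Real.sin t * ((suppF (b t)).card : ℝ))‖
              ≤ n * ∫ t in (0 : ℝ)..(Real.pi / 2), |deriv α t| := by
          intro t ht
          rw [Set.uIoc_of_le hpi] at ht
          have h1 : α t - α 0 = ∫ s in (0 : ℝ)..t, deriv α s :=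
            ((hlα.mono (hsub _ ht.1.le)).absolutelyContinuousOnInterval.integral_deriv_eq_sub).symm
          have h2 : |α t - α 0| ≤ ∫ t in (0 : ℝ)..(Real.pi / 2), |deriv α t| := by
            rw [h1]
            refine (intervalIntegral.abs_integral_le_integral_abs ht.1.le).trans ?_
            exact intervalIntegral.integral_mono_interval le_rfl ht.1.le ht.2
              (Eventually.of_forall fun _ => abs_nonneg _) Iα'.abs
          rw [Real.norm_eq_abs, show Real.sin t * ((suppF (b t)).card : ℝ) * α t
              - α 0 * (Real.sin t * ((suppF (b t)).card : ℝ))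
              = Real.sin t * ((suppF (b t)).card : ℝ) * (α t - α 0) by ring, abs_mul, abs_mul,
            Nat.abs_cast]
          have h3 := Real.abs_sin_le_one t
          have h4 := hcardR t ht.1.le
          calc _ ≤ 1 * n * ∫ t in (0 : ℝ)..(Real.pi / 2), |deriv α t| := by gcongr
            _ = _ := by ring
        have := intervalIntegral.norm_integral_le_of_norm_le_const hb'
        rw [Real.norm_eq_abs, sub_zero, abs_of_nonneg hpi] at this
        refine this.trans ?_
        calc _ ≤ (n * ∫ t in (0 : ℝ)..(Real.pi / 2), |deriv α t|) * 2 := by gcongr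
          _ = _ := by ring
    have hIb : |I| ≤ 2 * (n * (C * M2 * L)) := by
      have hb' : ∀ t ∈ Set.uIoc 0 (Real.pi / 2),
            ‖Real.sin t * ((suppF (b t)).card : ℝ) * α t‖ ≤ n * (C * M2 * L) := by
        intro t ht
        rw [Set.uIoc_of_le hpi] at ht
        rw [Real.norm_eq_abs, abs_mul, abs_mul, Nat.abs_cast]
        have h3 := Real.abs_sin_le_one t
        have h4 := hcardR t ht.1.le
        have h5 : |α t| ≤ C * M2 * L := H.hα t ht.1.le
        calc _ ≤ 1 * n * (C * M2 * L) := by gcongr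
          _ = _ := by ring
      have := intervalIntegral.norm_integral_le_of_norm_le_const hb'
      rw [Real.norm_eq_abs, sub_zero, abs_of_nonneg hpi] at this
      refine this.trans ?_
      calc _ ≤ (n * (C * M2 * L)) * 2 := by gcongr
        _ = _ := by ring
    have hB : |n * (α 0 - z0 ⬝ᵥ ((W + Matrix.vecMulVec z0 a) *ᵥ (b 0 - β)) / l2 z0 ^ 2) - I|
        ≤ C * L * √n * (KK M1 M2 m4 M5 * T0 + KK M1 M2 m4 M5 * TP (Real.pi / 2))
          + M5 ^ 2 * ∫ t in (0 : ℝ)..(Real.pi / 2), |G t| := by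
      by_cases hz0 : l2 z0 = 0
      · -- the degenerate case `z0 = 0`, where division by zero returns zero
        have h1 : |α 0| ≤ C * M2 * L := H.hα 0 le_rfl
        have h2 : √(n : ℝ) ≤ T0 := by
          have hzz := l2_eq_zero hz0
          rw [hT0, hzz]
          simp only [Tfun, smul_zero, zero_dotProduct, abs_zero, Finset.sum_const_zero,
            zero_sub, abs_neg, Nat.abs_cast]
          rw [show (n : ℝ) / √n = √n by rw [div_eq_iff hS.ne', hSS]]
          simp
        rw [hz0]
        have h3 : |(n : ℝ) * (α 0 - z0 ⬝ᵥ ((W + Matrix.vecMulVec z0 a) *ᵥ (b 0 - β)) / 0 ^ 2) - I|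
            ≤ n * (C * M2 * L) + 2 * (n * (C * M2 * L)) := by
          refine (abs_sub _ _).trans (add_le_add ?_ hIb)
          rw [zero_pow two_ne_zero, div_zero, sub_zero, abs_mul, Nat.abs_cast]
          gcongr
        refine h3.trans ?_
        have h4 : (n : ℝ) * (C * M2 * L) + 2 * (n * (C * M2 * L)) ≤ C * L * √n * (3 * M2 * T0) := by
          calc _ = C * L * √n * (3 * M2 * √n) := by linear_combination (-3 * C * M2 * L) * hSS
            _ ≤ _ := by gcongr
        have h5 : C * L * √n * (3 * M2 * T0) ≤ C * L * √n * (KK M1 M2 m4 M5 * T0) := by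
          gcongr
          unfold KK
          have : 0 ≤ M5 ^ 2 * (M1 + M2 * M5) + 2 * M5 ^ 2 * M2 + M5 ^ 2 * K1 M1 M2 m4 M5
            + 2 * (m4 ^ 2 * M1 + M2 * m4) := by positivity
          linarith
        have h6 : 0 ≤ C * L * √n * (KK M1 M2 m4 M5 * TP (Real.pi / 2)) := by
          have := hTP0 (Real.pi / 2)
          unfold KK
          positivity
        have h7 : 0 ≤ M5 ^ 2 * ∫ t in (0 : ℝ)..(Real.pi / 2), |G t| := by positivity
        linarith
      · have hζ : 0 < l2 z0 := lt_of_le_of_ne (l2_nonneg _) (Ne.symm hz0)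
        -- `ρ` compares `C² ‖z0‖²` with its mean `n`
        set ρ := (n : ℝ) / (C ^ 2 * l2 z0 ^ 2) with hρ
        have hρ0 : 0 ≤ ρ := by positivity
        have hρC : ρ * (C ^ 2 * l2 z0 ^ 2) = n := div_mul_cancel₀ _ (by positivity)
        have hρ5 : ρ ≤ M5 ^ 2 := by
          have h := H.hz'
          have h' : (n / (C * l2 z0)) ^ 2 ≤ (M5 * √n) ^ 2 := by gcongr
          rw [mul_pow, Real.sq_sqrt hn'.le] at h'
          have : (n / (C * l2 z0)) ^ 2 = ρ * n := by rw [hρ]; field_simp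
          rw [this] at h'
          exact le_of_mul_le_mul_right h' hn'
        have hρ1 : |ρ - 1| * √n ≤ M5 ^ 2 * T0 := by
          have h1 : |C ^ 2 * l2 z0 ^ 2 - n| / √n ≤ T0 := by
            have : (C • z0) ⬝ᵥ (1 : Matrix (Fin n) (Fin n) ℝ) *ᵥ (C • z0) = C ^ 2 * l2 z0 ^ 2 := by
              rw [Matrix.one_mulVec, smul_dotProduct, dotProduct_smul, l2_sq]
              simp only [smul_eq_mul]; ring
            rw [hT0, Tfun, this]
            have : 0 ≤ ∑ j : Fin 6, |C • z0 ⬝ᵥ uv e| + ∑ j : Fin 6, (C • z0 ⬝ᵥ uv e) ^ 2 / √n := by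
              positivity
            linarith
          have h2 : ρ - 1 = ρ * (-(C ^ 2 * l2 z0 ^ 2 - n)) / n := by
            rw [eq_div_iff hn'.ne']; linear_combination hρC
          rw [h2, abs_div, abs_mul, abs_neg, abs_of_nonneg hρ0, Nat.abs_cast]
          calc _ = ρ * (|C ^ 2 * l2 z0 ^ 2 - n| / √n) * (√n * √n / n) := by field_simp
            _ = ρ * (|C ^ 2 * l2 z0 ^ 2 - n| / √n) := by rw [hSS, div_self hn'.ne', mul_one]
            _ ≤ _ := by gcongr
        have hX0 : ∀ t, 0 ≤ t → l2 (W *ᵥ (b t - β)) ≤ (M1 + M2 * M5) * √n * L := by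
          intro t ht
          have h1 : W *ᵥ (b t - β) = (W + Matrix.vecMulVec (z0Path e z0 g t) a) *ᵥ (b t - β)
              + (-(a ⬝ᵥ (b t - β))) • z0Path e z0 g t := by
            rw [rankone_mulVec, neg_smul]; abel
          rw [h1]
          refine (l2_add_le _ _).trans ?_
          rw [l2_smul, abs_neg]
          have h2 := H.hr t ht
          have h3 := H.hα t ht
          have h4 := H.hz t ht
          have h5 := l2_nonneg (z0Path e z0 g t)
          calc _ ≤ M1 * √n * L + C * M2 * L * l2 (z0Path e z0 g t) := by gcongr
            _ = M1 * √n * L + M2 * L * (C * l2 (z0Path e z0 g t)) := by ring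
            _ ≤ M1 * √n * L + M2 * L * (M5 * √n) := by gcongr
            _ = _ := by ring
        have ha2 : |uv e ⬝ᵥ W *ᵥ (b 0 - β)| ≤ (M1 + M2 * M5) * √n * L := by
          refine (abs_dp_le _ _).trans ?_
          have h1 : l2 (uv e) ≤ 1 := by
            rw [l2_eq_sqrt]; exact Real.sqrt_le_one.2 (uv_dp_self e)
          calc _ ≤ 1 * l2 (W *ᵥ (b 0 - β)) := by gcongr; exact l2_nonneg _
            _ ≤ _ := by rw [one_mul]; exact hX0 0 le_rfl
        have ha1 : |C * (uv e ⬝ᵥ z0)| ≤ T0 := by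
          have h1 : C * (uv e ⬝ᵥ z0) = C • z0 ⬝ᵥ uv e := by
            rw [smul_dotProduct, smul_eq_mul, dotProduct_comm]
          rw [h1, hT0, Tfun]
          simp only [Finset.sum_const, Finset.card_univ, Fintype.card_fin, nsmul_eq_mul]
          have h2 : 0 ≤ (C • z0 ⬝ᵥ uv e) ^ 2 / √n := by positivity
          have h3 : 0 ≤ |C • z0 ⬝ᵥ (1 : Matrix (Fin n) (Fin n) ℝ) *ᵥ (C • z0) - n| / √n := by
            positivity
          have h4 := abs_nonneg (C • z0 ⬝ᵥ uv e)
          push_cast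
          linarith
        have hF : |C * f (Real.pi / 2)| ≤ L * √n * (M1 + M2 * M5) * TP (Real.pi / 2) := by
          set τ := Real.pi / 2 with hτ
          have hdet := H.det hpi
          have key := (core_bound hn (projX_transpose _ _) (projX_mul_self hdet) (uv e)
            ((W + Matrix.vecMulVec (z0Path e z0 g τ) a) *ᵥ (b τ - β))
            (vX (W + Matrix.vecMulVec (z0Path e z0 g τ) a) (suppF (b τ)) a) (z0Path e z0 g τ)
            (zdotPath e z0 g τ)
            (wPath C e z0 g τ) (uv_dp_self e) (uv_idem e) C L M1 M2 m4 M5 (a ⬝ᵥ (b τ - β)) _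
            (suppF (b τ)).card (Real.sin τ)
            (Real.cos τ) hL.le hC hM1 hM2 hm4 hM5 (Real.abs_sin_le_one τ) (Real.abs_cos_le_one τ)
            (perp_wPath C e z0 g τ) (H.hα τ hpi) (H.hv τ hpi) (H.hr τ hpi) (H.hz τ hpi) rfl
            (perp (uv e) z0) (perp_z0_eq e z0 g τ)).2.2
          -- at `π/2` the design has decoupled from `P_e^⊥ z0`, which is minus the velocity there
          have h1 : x0 = -zdotPath e z0 g τ := by
            rw [hx0, perp_z0_eq e z0 g τ, hτ, Real.cos_pi_div_two, Real.sin_pi_div_two, zero_smul,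
              one_smul, zero_sub]
          have h2 : f τ = -(zdotPath e z0 g τ ⬝ᵥ
              ((W + Matrix.vecMulVec (z0Path e z0 g τ) a) *ᵥ (b τ - β)
                - (a ⬝ᵥ (b τ - β)) • z0Path e z0 g τ)) := by
            rw [hft, h1, neg_dotProduct, rankone_mulVec, add_sub_cancel_right]
          rw [h2, mul_neg, abs_neg]
          exact key
        have hf0 : f (Real.pi / 2) - f 0 = ∫ s in (0 : ℝ)..(Real.pi / 2), deriv f s :=
          acf.integral_deriv_eq_sub.symm
        have hGI : (∫ t in (0 : ℝ)..(Real.pi / 2), G t) = C ^ 2 * (f (Real.pi / 2) - f 0) - I := by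
          rw [hf0, hI, ← intervalIntegral.integral_const_mul]
          exact intervalIntegral.integral_sub (If'.const_mul _) Iα
        have hGabs : |∫ t in (0 : ℝ)..(Real.pi / 2), G t| ≤ ∫ t in (0 : ℝ)..(Real.pi / 2), |G t| :=
          intervalIntegral.abs_integral_le_integral_abs hpi
        have hBeq : n * (α 0 - z0 ⬝ᵥ ((W + Matrix.vecMulVec z0 a) *ᵥ (b 0 - β)) / l2 z0 ^ 2) - I
            = -(ρ * C * (C * (uv e ⬝ᵥ z0)) * (uv e ⬝ᵥ W *ᵥ (b 0 - β)))
              - ρ * C * (C * f (Real.pi / 2)) + ρ * (∫ t in (0 : ℝ)..(Real.pi / 2), G t)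
              + (ρ - 1) * I := by
          have h1 : z0 ⬝ᵥ ((W + Matrix.vecMulVec z0 a) *ᵥ (b 0 - β))
              = z0 ⬝ᵥ W *ᵥ (b 0 - β) + α 0 * l2 z0 ^ 2 := by
            rw [rankone_mulVec, dotProduct_add, dotProduct_smul, smul_eq_mul, l2_sq]
          have h2 : z0 ⬝ᵥ W *ᵥ (b 0 - β)
              = (uv e ⬝ᵥ z0) * (uv e ⬝ᵥ W *ᵥ (b 0 - β)) + f 0 := by
            rw [hft, hx0, perp, sub_dotProduct, smul_dotProduct, smul_eq_mul]; ring
          have h3 : (n : ℝ) * (α 0 - (z0 ⬝ᵥ W *ᵥ (b 0 - β) + α 0 * l2 z0 ^ 2) / l2 z0 ^ 2)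
              = -(ρ * C ^ 2 * (z0 ⬝ᵥ W *ᵥ (b 0 - β))) := by
            rw [hρ]; field_simp; ring
          rw [h1, h3, h2, hGI]; ring
        rw [hBeq]
        set P := TP (Real.pi / 2) with hP
        have hP0 : 0 ≤ P := hTP0 _
        set m := M1 + M2 * M5 with hm
        have hm0 : 0 < m := by positivity
        have b1 : |ρ * C * (C * (uv e ⬝ᵥ z0)) * (uv e ⬝ᵥ W *ᵥ (b 0 - β))|
            ≤ M5 ^ 2 * C * T0 * (m * √n * L) := by
          rw [abs_mul, abs_mul, abs_of_nonneg (mul_nonneg hρ0 hC.le)]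
          gcongr
        have b2 : |ρ * C * (C * f (Real.pi / 2))| ≤ M5 ^ 2 * C * (L * √n * m * P) := by
          rw [abs_mul, abs_of_nonneg (mul_nonneg hρ0 hC.le)]
          gcongr
        have b3 : |ρ * (∫ t in (0 : ℝ)..(Real.pi / 2), G t)|
            ≤ M5 ^ 2 * ∫ t in (0 : ℝ)..(Real.pi / 2), |G t| := by
          rw [abs_mul, abs_of_nonneg hρ0]
          gcongr
        have b4 : |(ρ - 1) * I| ≤ M5 ^ 2 * T0 * (2 * √n * (C * M2 * L)) := by
          rw [abs_mul]
          calc _ ≤ |ρ - 1| * (2 * (n * (C * M2 * L))) := by gcongr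
            _ = |ρ - 1| * √n * (2 * √n * (C * M2 * L)) := by
              linear_combination (-2 * |ρ - 1| * (C * M2 * L)) * hSS
            _ ≤ _ := by gcongr
        refine (abs_add_le _ _).trans ?_
        refine (add_le_add (abs_add_le _ _) le_rfl).trans ?_
        refine (add_le_add (add_le_add (abs_sub _ _) le_rfl) le_rfl).trans ?_
        rw [abs_neg]
        have c1 : C * L * √n * ((M5 ^ 2 * m + 2 * M5 ^ 2 * M2) * T0)
            ≤ C * L * √n * (KK M1 M2 m4 M5 * T0) := by
          gcongr
          unfold KK
          have : 0 ≤ M5 ^ 2 * K1 M1 M2 m4 M5 + 2 * (m4 ^ 2 * M1 + M2 * m4) + 3 * M2 := by positivity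
          linarith
        have c2 : C * L * √n * ((M5 ^ 2 * m) * P) ≤ C * L * √n * (KK M1 M2 m4 M5 * P) := by
          gcongr
          unfold KK
          have : 0 ≤ 2 * M5 ^ 2 * M2 + M5 ^ 2 * K1 M1 M2 m4 M5 + 2 * (m4 ^ 2 * M1 + M2 * m4)
            + 3 * M2 := by positivity
          linarith
        have c3 : M5 ^ 2 * C * T0 * (m * √n * L) + M5 ^ 2 * T0 * (2 * √n * (C * M2 * L))
            = C * L * √n * ((M5 ^ 2 * m + 2 * M5 ^ 2 * M2) * T0) := by ring
        have c4 : M5 ^ 2 * C * (L * √n * m * P) = C * L * √n * ((M5 ^ 2 * m) * P) := by ring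
        rw [mul_add]
        linarith
    intro R hR
    have h1 := hRI R hR
    rw [mul_add, hintE]
    have h2 := abs_add_le (n * (α 0 - z0 ⬝ᵥ ((W + Matrix.vecMulVec z0 a) *ᵥ (b 0 - β)) / l2 z0 ^ 2)
      - I) (I - R)
    rw [sub_add_sub_cancel] at h2
    linarith
end path

/-! ### The path hypotheses on the events -/

/-- The part `XQ₀` of the design which stays fixed along the path. -/
def Wmat {n p : ℕ} (X : Fin n → Fin p → ℝ) (Sig : Matrix (Fin p) (Fin p) ℝ) (a : Fin p → ℝ) :
    Matrix (Fin n) (Fin p) ℝ := Matrix.of X - Matrix.vecMulVec (z0vec X Sig a) a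

lemma XPath_eq {n p : ℕ} (X : Fin n → Fin p → ℝ) (Sig : Matrix (Fin p) (Fin p) ℝ) (a : Fin p → ℝ)
    (e g : Fin n → ℝ) (t : ℝ) : Matrix.of (XPath X Sig a e g t) =
      Wmat X Sig a + Matrix.vecMulVec (z0Path e (z0vec X Sig a) g t) a := by
  ext i j
  simp [XPath, Wmat, Matrix.vecMulVec_apply]

lemma quadA0_pos {p : ℕ} {Sig : Matrix (Fin p) (Fin p) ℝ} (hS : Sig.PosDef) {a : Fin p → ℝ}
    (ha : a ≠ 0) : 0 < quadA0 Sig a := by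
  have := hS.inv.dotProduct_mulVec_pos ha
  simpa [quadA0, dot_eq] using this

lemma C0_pos {p : ℕ} {Sig : Matrix (Fin p) (Fin p) ℝ} (hS : Sig.PosDef) {a : Fin p → ℝ}
    (ha : a ≠ 0) : 0 < C0 Sig a := Real.sqrt_pos.2 (quadA0_pos hS ha)

/-- Cauchy–Schwarz in the inner product of `Σ`. -/
lemma abs_dp_le_C0 {p : ℕ} {Sig A : Matrix (Fin p) (Fin p) ℝ} (hS : Sig.PosDef)
    (hA : A.transpose * A = Sig) (a h : Fin p → ℝ) :
    |a ⬝ᵥ h| ≤ C0 Sig a * √(quadForm Sig h) := by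
  have hu : Sig *ᵥ (Sig⁻¹ *ᵥ a) = a := by
    rw [Matrix.mulVec_mulVec, Matrix.mul_nonsing_inv _ (posDef_isUnit hS), Matrix.one_mulVec]
  have hAx : ∀ x y : Fin p → ℝ, (A *ᵥ x) ⬝ᵥ (A *ᵥ y) = x ⬝ᵥ Sig *ᵥ y := fun x y => by
    rw [dp_mulVec, Matrix.mulVec_mulVec, hA]
  have h1 : a ⬝ᵥ h = (A *ᵥ h) ⬝ᵥ (A *ᵥ (Sig⁻¹ *ᵥ a)) := by rw [hAx, hu, dotProduct_comm]
  rw [h1]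
  refine (abs_dp_le _ _).trans (le_of_eq ?_)
  rw [mul_comm, l2_eq_sqrt, l2_eq_sqrt, hAx, hAx, hu, quadForm_eq, C0, quadA0, dot_eq,
    dotProduct_comm a]

/-- The path hypotheses hold on `Ω₁ ∩ Ω₂`. -/
lemma pathHyp_of {n p : ℕ} (hn : 0 < n) {Sig A : Matrix (Fin p) (Fin p) ℝ} (hS : Sig.PosDef)
    (hA : A.transpose * A = Sig) {a β : Fin p → ℝ} (ha : a ≠ 0) {X : Fin n → Fin p → ℝ}
    {e g : Fin n → ℝ} {b : ℝ → Fin p → ℝ} {lam σ lam0v M1 M2 M4 M5 : ℝ} {sstar : ℕ}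
    (hlam : 0 ≤ lam) (hM4 : 0 < M4) (hsn : sstar ≤ n)
    (hb : ∀ t, IsLasso (fun i => e i + mulVec' (XPath X Sig a e g t) β i) (XPath X Sig a e g t)
      lam (b t))
    (h1 : ∃ c : ℝ, 0 < c ∧ ∀ t, 0 ≤ t → ∀ t', 0 ≤ t' →
      c ≤ rayleighMin ((n : ℝ)⁻¹ • gramOf (XPath X Sig a e g t)) (suppF (b t) ∪ suppF (b t')))
    (h2 : ∀ t, 0 ≤ t →
      l2 (mulVec' (XPath X Sig a e g t) (fun j => b t j - β j))
          ≤ M1 * Real.sqrt ((n : ℝ) * sstar) * σ * lam0v ∧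
      Real.sqrt (quadForm Sig (fun j => b t j - β j))
          ≤ M2 * Real.sqrt (sstar : ℝ) * σ * lam0v ∧
      (suppF (b t)).card ≤ sstar ∧
      (∀ w : Fin p → ℝ,
        subBilinInv ((n : ℝ)⁻¹ • gramOf (XPath X Sig a e g t)) (suppF (b t)) w w
          ≤ M4 * subBilinInv Sig (suppF (b t)) w w) ∧
      max (max (l2 e / σ) (C0 Sig a * l2 (z0Path e (z0vec X Sig a) g t)))
          ((n : ℝ) / (C0 Sig a * l2 (z0Path e (z0vec X Sig a) g t)))
        ≤ M5 * Real.sqrt (n : ℝ)) :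
    PathHyp (Wmat X Sig a) a β e (z0vec X Sig a) g b (n * lam) (σ * (lam0v * √(sstar : ℝ)))
      (C0 Sig a) M1 M2 (√M4) M5 := by
  have hn' : (0 : ℝ) < n := by exact_mod_cast hn
  have hS' : 0 < √(n : ℝ) := Real.sqrt_pos.2 hn'
  have hC := C0_pos hS ha
  have hdet : ∀ t, 0 ≤ t → IsUnit (subMat ((Matrix.of (XPath X Sig a e g t))ᵀ *
      Matrix.of (XPath X Sig a e g t)) (suppF (b t))).det := by
    intro t ht
    obtain ⟨c, hc, h⟩ := h1
    exact det_of_coercive _ (mul_pos hc hn') fun v hv =>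
      coercive_of_rayleigh hn (h t ht t ht) v (by simpa using hv)
  constructor
  · intro t
    have := kkt_of_lasso hn hlam (hb t)
    rw [XPath_eq] at this
    exact this
  · obtain ⟨c, hc, h⟩ := h1
    refine ⟨√(c * n), Real.sqrt_pos.2 (mul_pos hc hn'), fun t ht t' ht' v hv => ?_⟩
    rw [Real.sq_sqrt (mul_pos hc hn').le, ← XPath_eq]
    exact coercive_of_rayleigh hn (h t ht t' ht') v hv
  · intro t ht
    have := (h2 t ht).1
    rw [mulVec'_eq, XPath_eq] at this
    refine this.trans (le_of_eq ?_)
    rw [Real.sqrt_mul hn'.le]; ring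
  · intro t ht
    refine (abs_dp_le_C0 hS hA _ _).trans ?_
    calc _ ≤ C0 Sig a * (M2 * Real.sqrt (sstar : ℝ) * σ * lam0v) :=
        mul_le_mul_of_nonneg_left (h2 t ht).2.1 hC.le
      _ = _ := by ring
  · exact fun t ht => (h2 t ht).2.2.1.trans hsn
  · intro t ht
    have h3 := (h2 t ht).2.2.2.1 a
    rw [subBilinInv_eq, subBilinInv_eq, selN_smul _ (inv_ne_zero hn'.ne'), gramOf_eq, inv_inv,
      Matrix.smul_mulVec, dotProduct_smul, ← vX_dp_self (hdet t ht), smul_eq_mul, XPath_eq] at h3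
    have h4 := selN_le_quadA0 hS (suppF (b t)) a
    have h5 : 0 ≤ quadA0 Sig a := (quadA0_pos hS ha).le
    rw [l2_eq_sqrt, le_div_iff₀ hS', C0, ← Real.sqrt_mul (dp_nonneg _), ← Real.sqrt_mul hM4.le]
    apply Real.sqrt_le_sqrt
    rw [mul_comm]
    exact h3.trans (mul_le_mul_of_nonneg_left h4 hM4.le)
  · intro t ht
    exact ((le_max_right _ _).trans (le_max_left _ _)).trans (h2 t ht).2.2.2.2
  · have := (le_max_right _ _).trans (h2 0 le_rfl).2.2.2.2
    rwa [z0Path_zero] at this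

/-- The noise term of the estimator cancels against `T_n`, leaving the bias. -/
lemma pivot_sub_T {n p : ℕ} (hn : 0 < n) (σ : ℝ) (Sig : Matrix (Fin p) (Fin p) ℝ)
    (a β b : Fin p → ℝ) (X : Fin n → Fin p → ℝ) (e : Fin n → ℝ) :
    pivot n σ Sig a β b X e 0 - TofModel n σ Sig a X e = √(Fisher σ Sig a / n) *
      (n * (a ⬝ᵥ (b - β) - z0vec X Sig a ⬝ᵥ
        ((Wmat X Sig a + Matrix.vecMulVec (z0vec X Sig a) a) *ᵥ (b - β)) / l2 (z0vec X Sig a) ^ 2)) := by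
  have hn' : (0 : ℝ) < n := by exact_mod_cast hn
  have h1 : √((n : ℝ) * Fisher σ Sig a) = √(Fisher σ Sig a / n) * n := by
    have : (n : ℝ) * Fisher σ Sig a = Fisher σ Sig a / n * n ^ 2 := by field_simp
    rw [this, Real.sqrt_mul' _ (by positivity), Real.sqrt_sq hn'.le]
  have h2 : Wmat X Sig a + Matrix.vecMulVec (z0vec X Sig a) a = Matrix.of X := by
    rw [Wmat, sub_add_cancel]
  have h3 : residOf X e β b = e - Matrix.of X *ᵥ (b - β) := by
    rw [Matrix.mulVec_sub]
    funext i
    simp only [residOf, mulVec'_eq, Pi.sub_apply]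
    ring
  rw [pivot, TofModel, Tstat, thetaHat, h1, h2, h3]
  simp only [dot_eq, zero_div, sub_zero, mul_one, dotProduct_sub]
  ring

lemma sqrt_fisher_mul {n p : ℕ} (hn : 0 < n) {σ : ℝ} (hσ : 0 < σ) {Sig : Matrix (Fin p) (Fin p) ℝ}
    (hS : Sig.PosDef) {a : Fin p → ℝ} (ha : a ≠ 0) (Λ : ℝ) :
    √(Fisher σ Sig a / n) * (C0 Sig a * (σ * Λ) * √n) = Λ := by
  have hn' : (0 : ℝ) < n := by exact_mod_cast hn
  have hS' : 0 < √(n : ℝ) := Real.sqrt_pos.2 hn'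
  have hC := C0_pos hS ha
  have hq := quadA0_pos hS ha
  have : √(Fisher σ Sig a / n) = 1 / (σ * C0 Sig a * √n) := by
    rw [Fisher, div_div, Real.sqrt_div zero_le_one, Real.sqrt_one, Real.sqrt_mul (by positivity),
      Real.sqrt_mul (by positivity), Real.sqrt_sq hσ.le, C0]
  rw [this]
  field_simp

/-! ### A measurable dominating functional -/

/-- The support of a sign pattern. -/
def AS {p : ℕ} (s : Fin p → SignType) : Finset (Fin p) := Finset.univ.filter fun j => s j ≠ 0

/-- The only candidate for a Lasso solution with sign pattern `s` and injective active design. -/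
def bS {n p : ℕ} (X : Matrix (Fin n) (Fin p) ℝ) (e : Fin n → ℝ) (β : Fin p → ℝ) (l : ℝ)
    (s : Fin p → SignType) : Fin p → ℝ :=
  selN (Xᵀ * X) (AS s) *ᵥ (Xᵀ *ᵥ (e + X *ᵥ β) - l • fun j => ((s j : SignType) : ℝ))

/-- The sign pattern `s` is that of a Lasso solution with at most `N` active variables and
injective active design. -/
def Valid {n p : ℕ} (X : Matrix (Fin n) (Fin p) ℝ) (e : Fin n → ℝ) (β : Fin p → ℝ) (l : ℝ) (N : ℕ)
    (s : Fin p → SignType) : Prop :=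
  (subMat (Xᵀ * X) (AS s)).det ≠ 0 ∧ (AS s).card ≤ N ∧ IsKKT X (e + X *ᵥ β) l (bS X e β l s) ∧
    ∀ j, SignType.sign (bS X e β l s j) = s j

open Classical in
/-- The exponential of the functional `TPath`, summed over the valid sign patterns. As opposed to the
given Lasso solutions, this is a measurable function of the data. -/
def Psi {n p : ℕ} (τ l : ℝ) (N : ℕ) (a β u : Fin p → ℝ) (X : Matrix (Fin n) (Fin p) ℝ)
    (e w : Fin n → ℝ) : ℝ≥0∞ :=
  ∑ s : Fin p → SignType, if Valid X e β l N s then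
    ENNReal.ofReal (Real.exp (τ * TPath X a β e (X *ᵥ u) w (AS s) (bS X e β l s))) else 0

lemma bS_eq {n p : ℕ} {X : Matrix (Fin n) (Fin p) ℝ} {e : Fin n → ℝ} {β b : Fin p → ℝ} {l : ℝ}
    (hk : IsKKT X (e + X *ᵥ β) l b) (hdet : IsUnit (subMat (Xᵀ * X) (suppF b)).det) :
    AS (fun j => SignType.sign (b j)) = suppF b ∧
      bS X e β l (fun j => SignType.sign (b j)) = b := by
  have hA : AS (fun j => SignType.sign (b j)) = suppF b := by
    ext j; simp [AS, suppF, sign_eq_zero_iff]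
  refine ⟨hA, ?_⟩
  rw [bS, hA]
  have h1 : selN (Xᵀ * X) (suppF b) *ᵥ
      (Xᵀ *ᵥ (e + X *ᵥ β) - l • fun j => ((SignType.sign (b j) : SignType) : ℝ))
      = selN (Xᵀ * X) (suppF b) *ᵥ ((Xᵀ * X) *ᵥ b) := by
    apply selN_mulVec_congr
    intro j hj
    have hbj : b j ≠ 0 := by simpa [suppF] using hj
    have h2 := hk.2 j
    rw [Matrix.mulVec_sub, Matrix.mulVec_mulVec] at h2
    simp only [Pi.sub_apply, Pi.smul_apply, smul_eq_mul] at h2 ⊢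
    have h3 : ((SignType.sign (b j) : SignType) : ℝ) * b j = |b j| := sign_mul_self (b j)
    have h4 : ((Xᵀ *ᵥ (e + X *ᵥ β)) j - ((Xᵀ * X) *ᵥ b) j
        - l * ((SignType.sign (b j) : SignType) : ℝ)) * b j = 0 := by
      rw [sub_mul, h2, mul_assoc, h3, sub_self]
    have h5 := (mul_eq_zero.1 h4).resolve_right hbj
    linarith
  rw [h1, selN_mulVec_gram hdet]
  intro j hj
  simpa [suppF] using hj

/-- The functional at any sparse Lasso solution is one of the terms of `Psi`. -/
lemma le_Psi {n p : ℕ} {X : Matrix (Fin n) (Fin p) ℝ} {e : Fin n → ℝ} {β b : Fin p → ℝ} {l : ℝ}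
    (hk : IsKKT X (e + X *ᵥ β) l b) (hdet : IsUnit (subMat (Xᵀ * X) (suppF b)).det) {N : ℕ}
    (hN : (suppF b).card ≤ N) (τ : ℝ) (a u : Fin p → ℝ) (w : Fin n → ℝ) :
    ENNReal.ofReal (Real.exp (τ * TPath X a β e (X *ᵥ u) w (suppF b) b))
      ≤ Psi τ l N a β u X e w := by
  classical
  obtain ⟨h1, h2⟩ := bS_eq hk hdet
  have hV : Valid X e β l N (fun j => SignType.sign (b j)) := by
    refine ⟨by rw [h1]; exact hdet.ne_zero, by rw [h1]; exact hN, by rw [h2]; exact hk, fun j => ?_⟩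
    rw [h2]
  have := Finset.single_le_sum (f := fun s : Fin p → SignType => if Valid X e β l N s then
    ENNReal.ofReal (Real.exp (τ * TPath X a β e (X *ᵥ u) w (AS s) (bS X e β l s))) else 0)
    (fun _ _ => zero_le) (Finset.mem_univ fun j => SignType.sign (b j))
  simp only [if_pos hV] at this
  rw [h1, h2] at this
  unfold Psi
  convert this

/-- If the design is injective on `2N`-sparse vectors, at most one sign pattern is valid, by uniqueness of
the fitted values. -/
lemma valid_unique {n p : ℕ} {X : Matrix (Fin n) (Fin p) ℝ} {e : Fin n → ℝ} {β : Fin p → ℝ} {l : ℝ}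
    {N : ℕ} (hX : ∀ B : Finset (Fin p), B.card ≤ 2 * N → ∀ v : Fin p → ℝ, (∀ j ∉ B, v j = 0) →
      X *ᵥ v = 0 → v = 0) {s s' : Fin p → SignType} (h : Valid X e β l N s)
    (h' : Valid X e β l N s') : s = s' := by
  have h1 := kkt_fit_unique h.2.2.1 h'.2.2.1
  have h2 := hX (AS s ∪ AS s') (by
    have := Finset.card_union_le (AS s) (AS s')
    have := h.2.1
    have := h'.2.1
    omega) _ (by
    intro j hj
    rw [Finset.mem_union, not_or] at hj
    rw [Pi.sub_apply, bS, bS, selN_mulVec_off _ hj.1, selN_mulVec_off _ hj.2, sub_zero]) h1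
  funext j
  rw [← h.2.2.2 j, ← h'.2.2.2 j, sub_eq_zero.1 h2]

/-- For a fixed generic design, only one sign pattern contributes to `Psi`, and it does not depend on
`w`; the bound for a fixed projection applies. -/
lemma lintegral_Psi_le {n p : ℕ} (hn : 0 < n) {X : Matrix (Fin n) (Fin p) ℝ} {e : Fin n → ℝ}
    {β : Fin p → ℝ} {l : ℝ} {N : ℕ} (hN : N ≤ n)
    (hX : ∀ B : Finset (Fin p), B.card ≤ 2 * N → ∀ v : Fin p → ℝ, (∀ j ∉ B, v j = 0) →
      X *ᵥ v = 0 → v = 0) (a u : Fin p → ℝ) (τ : ℝ) (hτ : 0 ≤ τ) (hτ' : τ ≤ √n / 52) :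
    ∫⁻ w, Psi τ l N a β u X e w ∂(stdG (Fin n)) ≤ ENNReal.ofReal (2 * Real.exp (338 * τ ^ 2)) := by
  classical
  by_cases h : ∃ s, Valid X e β l N s
  · obtain ⟨s, hs⟩ := h
    have hdet : IsUnit (subMat (Xᵀ * X) (AS s)).det := hs.1.isUnit
    have h1 : ∀ w, Psi τ l N a β u X e w =
        ENNReal.ofReal (Real.exp (τ * TPath X a β e (X *ᵥ u) w (AS s) (bS X e β l s))) := by
      intro w
      unfold Psi
      rw [Finset.sum_eq_single s]
      · exact if_pos hs
      · intro s' _ hne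
        exact if_neg fun hs' => hne (valid_unique hX hs' hs)
      · simp
    simp only [h1]
    have hPs := projX_transpose X (AS s)
    have hPi := projX_mul_self hdet
    exact lintegral_exp_Tfun hn _ _ _ (etaV_dp _ _ _ _ _ (uv_dp_self e)) hPs
      (fun x => by rw [proj_quad hPs hPi]; exact dp_nonneg _) (proj_quad_le hPs hPi)
      (projX_trace hdet) (by exact_mod_cast hs.2.1.trans hN) τ hτ hτ'
  · have h1 : ∀ w, Psi τ l N a β u X e w = 0 := by
      intro w
      unfold Psi
      exact Finset.sum_eq_zero fun s _ => if_neg fun hs => h ⟨s, hs⟩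
    simp [h1]

section meas
variable {α : Type*} [MeasurableSpace α] {ι κ μ : Type*}

lemma meas_mul [Fintype κ] {M : α → Matrix ι κ ℝ} {M' : α → Matrix κ μ ℝ}
    (h : ∀ i j, Measurable fun x => M x i j) (h' : ∀ i j, Measurable fun x => M' x i j) :
    ∀ i j, Measurable fun x => (M x * M' x) i j := by
  intro i j
  simp only [Matrix.mul_apply]
  exact Finset.measurable_sum _ fun k _ => (h i k).mul (h' k j)

lemma meas_dp [Fintype ι] {v v' : α → ι → ℝ} (h : ∀ i, Measurable fun x => v x i)
    (h' : ∀ i, Measurable fun x => v' x i) : Measurable fun x => v x ⬝ᵥ v' x :=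
  Finset.measurable_sum _ fun k _ => (h k).mul (h' k)

lemma meas_mulVec [Fintype κ] {M : α → Matrix ι κ ℝ} {v : α → κ → ℝ}
    (h : ∀ i j, Measurable fun x => M x i j) (h' : ∀ i, Measurable fun x => v x i) :
    ∀ i, Measurable fun x => (M x *ᵥ v x) i :=
  fun i => meas_dp (h i) h'

lemma meas_det [Fintype ι] [DecidableEq ι] {M : α → Matrix ι ι ℝ} (h : ∀ i j, Measurable fun x => M x i j) :
    Measurable fun x => (M x).det := by
  simp only [Matrix.det_apply]
  refine Finset.measurable_sum _ fun s _ => ?_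
  exact (Finset.measurable_prod _ fun k _ => h _ _).const_smul _

lemma meas_inv [Fintype ι] [DecidableEq ι] {M : α → Matrix ι ι ℝ} (h : ∀ i j, Measurable fun x => M x i j) :
    ∀ i j, Measurable fun x => ((M x)⁻¹) i j := by
  intro i j
  simp only [Matrix.inv_def, Matrix.smul_apply, smul_eq_mul, Ring.inverse_eq_inv',
    Matrix.adjugate_apply]
  refine (meas_det h).inv.mul (meas_det fun k l => ?_)
  simp only [Matrix.updateRow_apply]
  split_ifs
  · exact measurable_const
  · exact h k l

lemma meas_selN {p : ℕ} {H : α → Matrix (Fin p) (Fin p) ℝ}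
    (h : ∀ i j, Measurable fun x => H x i j) (A : Finset (Fin p)) :
    ∀ i j, Measurable fun x => selN (H x) A i j :=
  meas_mul (meas_mul (fun _ _ => measurable_const) (meas_inv fun i j => h i.1 j.1))
    fun _ _ => measurable_const

variable {n p : ℕ}

lemma meas_l2 {v : α → Fin n → ℝ} (h : ∀ i, Measurable fun x => v x i) :
    Measurable fun x => l2 (v x) := by
  simp only [l2_eq_sqrt]
  exact (meas_dp h h).sqrt

lemma meas_uv {v : α → Fin n → ℝ} (h : ∀ i, Measurable fun x => v x i) :
    ∀ i, Measurable fun x => uv (v x) i := by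
  intro i
  simp only [uv, Pi.smul_apply, smul_eq_mul]
  exact (meas_l2 h).inv.mul (h i)

lemma meas_perp {q v : α → Fin n → ℝ} (hq : ∀ i, Measurable fun x => q x i)
    (h : ∀ i, Measurable fun x => v x i) : ∀ i, Measurable fun x => perp (q x) (v x) i := by
  intro i
  simp only [perp, Pi.sub_apply, Pi.smul_apply, smul_eq_mul]
  exact (h i).sub ((meas_dp hq h).mul (hq i))

lemma meas_Tfun {P : α → Matrix (Fin n) (Fin n) ℝ} {η : α → Fin 6 → Fin n → ℝ} {w : α → Fin n → ℝ}
    (d : ℝ) (hP : ∀ i j, Measurable fun x => P x i j) (hη : ∀ k i, Measurable fun x => η x k i)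
    (hw : ∀ i, Measurable fun x => w x i) : Measurable fun x => Tfun (P x) d (η x) (w x) := by
  unfold Tfun
  refine (Measurable.add ?_ ?_).add ?_
  · exact Finset.measurable_sum _ fun k _ => (meas_dp hw (hη k)).abs
  · exact Finset.measurable_sum _ fun k _ => ((meas_dp hw (hη k)).pow_const 2).div_const _
  · exact ((meas_dp hw (meas_mulVec hP hw)).sub_const d).abs.div_const _

lemma meas_bS {X : α → Matrix (Fin n) (Fin p) ℝ} {e : α → Fin n → ℝ}
    (hX : ∀ i j, Measurable fun x => X x i j) (he : ∀ i, Measurable fun x => e x i)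
    (β : Fin p → ℝ) (l : ℝ) (s : Fin p → SignType) :
    ∀ j, Measurable fun x => bS (X x) (e x) β l s j := by
  have hXt : ∀ i j, Measurable fun x => (X x)ᵀ i j := fun i j => hX j i
  refine meas_mulVec (meas_selN (meas_mul hXt hX) _) fun i => ?_
  simp only [Pi.sub_apply]
  refine (meas_mulVec hXt (fun k => ?_) i).sub measurable_const
  simp only [Pi.add_apply]
  exact (he k).add (meas_mulVec (v := fun _ => β) hX (fun _ => measurable_const) k)

lemma meas_TPath {X : α → Matrix (Fin n) (Fin p) ℝ} {e z w : α → Fin n → ℝ} {b : α → Fin p → ℝ}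
    (hX : ∀ i j, Measurable fun x => X x i j) (he : ∀ i, Measurable fun x => e x i)
    (hz : ∀ i, Measurable fun x => z x i) (hw : ∀ i, Measurable fun x => w x i)
    (hb : ∀ i, Measurable fun x => b x i) (a β : Fin p → ℝ) (A : Finset (Fin p)) :
    Measurable fun x => TPath (X x) a β (e x) (z x) (w x) A (b x) := by
  have hXt : ∀ i j, Measurable fun x => (X x)ᵀ i j := fun i j => hX j i
  have hN := meas_selN (meas_mul hXt hX) A
  have hP : ∀ i j, Measurable fun x => projX (X x) A i j := meas_mul (meas_mul hX hN) hXt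
  have hq := meas_uv he
  have hr : ∀ i, Measurable fun x => (X x *ᵥ (b x - β)) i :=
    meas_mulVec hX fun i => (hb i).sub_const _
  have hv : ∀ i, Measurable fun x => vX (X x) A a i :=
    meas_mulVec hX (meas_mulVec hN fun _ => measurable_const)
  refine meas_Tfun _ hP ?_ hw
  intro k
  fin_cases k
  · exact meas_uv (meas_perp hq hr)
  · exact meas_uv (meas_perp hq hv)
  · exact meas_uv (meas_perp hq (meas_mulVec hP (meas_perp hq hz)))
  · exact meas_uv (meas_perp hq hz)
  · exact hq
  · exact meas_uv (meas_mulVec hP hq)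

lemma meas_Valid {X : α → Matrix (Fin n) (Fin p) ℝ} {e : α → Fin n → ℝ}
    (hX : ∀ i j, Measurable fun x => X x i j) (he : ∀ i, Measurable fun x => e x i)
    (β : Fin p → ℝ) (l : ℝ) (N : ℕ) (s : Fin p → SignType) :
    MeasurableSet {x | Valid (X x) (e x) β l N s} := by
  have hXt : ∀ i j, Measurable fun x => (X x)ᵀ i j := fun i j => hX j i
  have hb := meas_bS hX he β l s
  have hy : ∀ i, Measurable fun x => (e x + X x *ᵥ β - X x *ᵥ bS (X x) (e x) β l s) i := by
    intro i
    simp only [Pi.add_apply, Pi.sub_apply]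
    exact ((he i).add (meas_mulVec (v := fun _ => β) hX (fun _ => measurable_const) i)).sub (meas_mulVec hX hb i)
  have hg := meas_mulVec hXt hy
  have hdet : Measurable fun x => (subMat ((X x)ᵀ * X x) (AS s)).det :=
    meas_det fun i j => meas_mul hXt hX i.1 j.1
  refine MeasurableSet.inter (s₁ := {x | (subMat ((X x)ᵀ * X x) (AS s)).det ≠ 0})
    (hdet (measurableSet_singleton (0 : ℝ)).compl) ?_
  refine MeasurableSet.inter (s₁ := {x | (AS s).card ≤ N}) (MeasurableSet.const _) ?_
  refine MeasurableSet.inter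
    (s₁ := {x | IsKKT (X x) (e x + X x *ᵥ β) l (bS (X x) (e x) β l s)}) ?_ ?_
  · have h1 : MeasurableSet
        {x | ∀ j, |((X x)ᵀ *ᵥ (e x + X x *ᵥ β - X x *ᵥ bS (X x) (e x) β l s)) j| ≤ l} := by
      rw [Set.ofPred_forall]
      exact MeasurableSet.iInter fun j => measurableSet_le (hg j).abs measurable_const
    have h2 : MeasurableSet
        {x | ∀ j, ((X x)ᵀ *ᵥ (e x + X x *ᵥ β - X x *ᵥ bS (X x) (e x) β l s)) j
          * bS (X x) (e x) β l s j = l * |bS (X x) (e x) β l s j|} := by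
      rw [Set.ofPred_forall]
      exact MeasurableSet.iInter fun j =>
        measurableSet_eq_fun ((hg j).mul (hb j)) ((hb j).abs.const_mul l)
    exact h1.inter h2
  · show MeasurableSet {x | ∀ j, SignType.sign (bS (X x) (e x) β l s j) = s j}
    rw [Set.ofPred_forall]
    refine MeasurableSet.iInter fun j => ?_
    have h3 : MeasurableSet {y : ℝ | SignType.sign y = s j} := by
      rcases s j with _ | _ | _
      · have : {y : ℝ | SignType.sign y = SignType.zero} = {0} := by
          ext y; exact sign_eq_zero_iff
        rw [this]; exact measurableSet_singleton _
      · have : {y : ℝ | SignType.sign y = SignType.neg} = Set.Iio 0 := by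
          ext y; exact sign_eq_neg_one_iff
        rw [this]; exact measurableSet_Iio
      · have : {y : ℝ | SignType.sign y = SignType.pos} = Set.Ioi 0 := by
          ext y; exact sign_eq_one_iff
        rw [this]; exact measurableSet_Ioi
    exact hb j h3

lemma meas_Psi {X : α → Matrix (Fin n) (Fin p) ℝ} {e w : α → Fin n → ℝ}
    (hX : ∀ i j, Measurable fun x => X x i j) (he : ∀ i, Measurable fun x => e x i)
    (hw : ∀ i, Measurable fun x => w x i) (τ l : ℝ) (N : ℕ) (a β u : Fin p → ℝ) :
    Measurable fun x => Psi τ l N a β u (X x) (e x) (w x) := by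
  classical
  unfold Psi
  refine Finset.measurable_sum _ fun s _ => ?_
  have hz : ∀ i, Measurable fun x => (X x *ᵥ u) i :=
    meas_mulVec (v := fun _ => u) hX fun _ => measurable_const
  have hT := meas_TPath hX he hz hw (meas_bS hX he β l s) a β (AS s)
  have hE : Measurable fun x => ENNReal.ofReal (Real.exp (τ * TPath (X x) a β (e x) (X x *ᵥ u) (w x)
      (AS s) (bS (X x) (e x) β l s))) := ((hT.const_mul τ).exp).ennreal_ofReal
  exact Measurable.ite (meas_Valid hX he β l N s) hE measurable_const

end meas

/-! ### Generic injectivity of sparse submatrices -/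

/-- Frobenius inner product with `E`. -/
def ipL {n p : ℕ} (E : Fin n → Fin p → ℝ) : (Fin n → Fin p → ℝ) →ₗ[ℝ] ℝ :=
  ∑ i, ∑ j, E i j • ((LinearMap.proj j : (Fin p → ℝ) →ₗ[ℝ] ℝ) ∘ₗ
    (LinearMap.proj i : (Fin n → Fin p → ℝ) →ₗ[ℝ] (Fin p → ℝ)))

lemma ipL_apply {n p : ℕ} (E G : Fin n → Fin p → ℝ) : ipL E G = ∑ i, ∑ j, E i j * G i j := by
  simp [ipL]

/-- Reflection exchanging the `E`-coordinate of a matrix with a coordinate of a vector. -/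
def swapE {n p : ℕ} (E : Fin n → Fin p → ℝ) (i0 : Fin n) :
    (Fin n → Fin p → ℝ) × (Fin n → ℝ) →ₗ[ℝ] (Fin n → Fin p → ℝ) × (Fin n → ℝ) :=
  let d : (Fin n → Fin p → ℝ) × (Fin n → ℝ) →ₗ[ℝ] ℝ :=
    (LinearMap.proj i0 : (Fin n → ℝ) →ₗ[ℝ] ℝ) ∘ₗ LinearMap.snd ℝ _ _ - ipL E ∘ₗ LinearMap.fst ℝ _ _
  LinearMap.prod (LinearMap.fst ℝ _ _ + d.smulRight E)
    (LinearMap.snd ℝ _ _ - d.smulRight (Pi.single i0 1))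

/-- The reflection preserves the Gaussian law; it lets the coordinate of `G` along `E` be treated as a
Gaussian variable independent of the rest. -/
lemma swapE_map {n p : ℕ} (E : Fin n → Fin p → ℝ) (i0 : Fin n) (hE : ∑ i, ∑ j, E i j ^ 2 = 1) :
    ((stdGM n p).prod (stdG (Fin n))).map (swapE E i0) = (stdGM n p).prod (stdG (Fin n)) := by
  apply stdGM_map_isometry
  rintro ⟨G, γ⟩
  have h1 : (swapE E i0 (G, γ)).1 = G + (γ i0 - ipL E G) • E := rfl
  have h2 : (swapE E i0 (G, γ)).2 = γ - (γ i0 - ipL E G) • Pi.single i0 1 := rfl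
  rw [h1, h2]
  generalize hd : γ i0 - ipL E G = d
  have h3 : ∑ i, ∑ j, ((G + d • E) i j) ^ 2 = ∑ i, ∑ j, G i j ^ 2 + 2 * d * ipL E G + d ^ 2 := by
    have : ∀ i j, ((G + d • E) i j) ^ 2 = G i j ^ 2 + (2 * d) * (E i j * G i j) + d ^ 2 * E i j ^ 2 := by
      intro i j
      simp only [Pi.add_apply, Pi.smul_apply, smul_eq_mul]; ring
    simp only [this, Finset.sum_add_distrib, ← Finset.mul_sum, hE, ipL_apply]
    ring
  have h4 : ∑ i, ((γ - d • (Pi.single i0 1 : Fin n → ℝ)) i) ^ 2 = ∑ i, γ i ^ 2 - 2 * d * γ i0 + d ^ 2 := by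
    have : ∀ i, ((γ - d • (Pi.single i0 1 : Fin n → ℝ)) i) ^ 2
        = γ i ^ 2 + (if i = i0 then - 2 * d * γ i + d ^ 2 else 0) := by
      intro i
      simp only [Pi.sub_apply, Pi.smul_apply, smul_eq_mul, Pi.single_apply]
      split_ifs <;> ring
    simp only [this, Finset.sum_add_distrib, Finset.sum_ite_eq', Finset.mem_univ, if_true]
    ring
  rw [h3, h4]
  linear_combination (-2 * d) * hd

lemma finite_det_zero {ι : Type*} [Fintype ι] [DecidableEq ι] (M : Matrix ι ι ℝ) {c : ℝ}
    (hc : c ≠ 0) : {s : ℝ | (M + (s * c) • (1 : Matrix ι ι ℝ)).det = 0}.Finite := by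
  have h1 : {r : ℝ | (-M).charpoly.IsRoot r}.Finite :=
    Polynomial.finite_setOfPred_isRoot (Matrix.charpoly_monic _).ne_zero
  refine (h1.preimage (f := fun s : ℝ => s * c) (mul_left_injective₀ hc).injOn).subset ?_
  intro s hs
  show (-M).charpoly.eval (s * c) = 0
  rw [Matrix.eval_charpoly, Matrix.scalar_apply, sub_neg_eq_add, add_comm]
  rw [← hs]
  congr 2
  ext i j
  simp [Matrix.diagonal_apply, Matrix.one_apply]

/-- Almost surely, a Gaussian matrix times an invertible one is injective on the vectors supported in
a given set of at most `n` coordinates. -/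
lemma ae_inj {n p : ℕ} {A : Matrix (Fin p) (Fin p) ℝ} (hA : IsUnit A.det) (B : Finset (Fin p))
    (hB : B.card ≤ n) : ∀ᵐ G ∂(stdGM n p), ∀ v : Fin p → ℝ, (∀ j ∉ B, v j = 0) →
      (Matrix.of G * A) *ᵥ v = 0 → v = 0 := by
  classical
  rcases B.eq_empty_or_nonempty with rfl | ⟨j0, hj0⟩
  · exact Eventually.of_forall fun G v hv _ => funext fun j => hv j (by simp)
  obtain ⟨ι⟩ : Nonempty (B ↪ Fin n) := Function.Embedding.nonempty_of_card_le (by simpa using hB)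
  let i0 : Fin n := ι ⟨j0, hj0⟩
  let D : (Fin n → Fin p → ℝ) → Matrix B B ℝ := fun G => Matrix.of fun i j =>
    (Matrix.of G * A) (ι i) j.1
  have hDm : Measurable fun G => (D G).det := by
    apply meas_det
    intro i j
    exact meas_mul (M := fun G : Fin n → Fin p → ℝ => Matrix.of G) (M' := fun _ => A)
      (fun i j => (measurable_pi_apply j).comp (measurable_pi_apply i))
      (fun _ _ => measurable_const) (ι i) j.1
  suffices h : ∀ᵐ G ∂(stdGM n p), (D G).det ≠ 0 by
    filter_upwards [h] with G hG v hv h0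
    have h1 : D G *ᵥ (fun j : B => v j.1) = 0 := by
      funext i
      have h2 : ∑ j, (Matrix.of G * A) (ι i) j * v j = 0 := congrFun h0 (ι i)
      rw [← Finset.sum_subset (Finset.subset_univ B) fun j _ hj => by rw [hv j hj, mul_zero],
        ← Finset.sum_coe_sort] at h2
      exact h2
    have h2 := Matrix.eq_zero_of_mulVec_eq_zero hG h1
    funext j
    by_cases hj : j ∈ B
    · exact congrFun h2 ⟨j, hj⟩
    · exact hv j hj
  -- the direction `E0 = R A⁻¹`, along which the minor `D` moves by multiples of the identity, so
  -- that its determinant vanishes only at finitely many points of the line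
  let R : Matrix (Fin n) (Fin p) ℝ := Matrix.of fun i j => if h : j ∈ B then (if i = ι ⟨j, h⟩ then 1 else 0) else 0
  let E0 : Matrix (Fin n) (Fin p) ℝ := R * A⁻¹
  have hE0 : E0 * A = R := by
    show R * A⁻¹ * A = R
    rw [Matrix.mul_assoc, Matrix.nonsing_inv_mul _ hA, Matrix.mul_one]
  let q : ℝ := ∑ i, ∑ j, E0 i j ^ 2
  have hq : 0 < q := by
    rcases (Finset.sum_nonneg fun i _ => Finset.sum_nonneg fun j _ => sq_nonneg (E0 i j) :
      0 ≤ q).lt_or_eq with h | h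
    · exact h
    · exfalso
      have h0 : E0 = 0 := by
        ext i j
        have h1 := (Finset.sum_eq_zero_iff_of_nonneg fun i _ =>
          Finset.sum_nonneg fun j _ => sq_nonneg (E0 i j)).1 h.symm i (Finset.mem_univ _)
        have h2 := (Finset.sum_eq_zero_iff_of_nonneg fun j _ => sq_nonneg (E0 i j)).1 h1 j
          (Finset.mem_univ _)
        exact pow_eq_zero_iff (two_ne_zero) |>.1 h2
      rw [h0, Matrix.zero_mul] at hE0
      have := congrFun (congrFun hE0 i0) j0
      simp [R, hj0, i0] at this
  let c : ℝ := (√q)⁻¹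
  have hc : c ≠ 0 := inv_ne_zero (Real.sqrt_pos.2 hq).ne'
  let E : Fin n → Fin p → ℝ := fun i j => c * E0 i j
  have hE : ∑ i, ∑ j, E i j ^ 2 = 1 := by
    simp only [E, mul_pow, ← Finset.mul_sum]
    show c ^ 2 * q = 1
    rw [inv_pow, Real.sq_sqrt hq.le, inv_mul_cancel₀ hq.ne']
  have hDE : ∀ (G : Fin n → Fin p → ℝ) (s : ℝ), D (G + s • E) = D G + (s * c) • 1 := by
    intro G s
    have h1 : Matrix.of (G + s • E) * A = Matrix.of G * A + (s * c) • R := by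
      rw [← hE0, ← Matrix.smul_mul, ← Matrix.add_mul]
      congr 1
      ext i j
      simp [E, mul_assoc]
    ext i j
    simp only [D, Matrix.of_apply]
    rw [h1]
    have : R (ι i) j.1 = (1 : Matrix B B ℝ) i j := by
      simp [R, Matrix.one_apply]
    rw [Matrix.add_apply, Matrix.add_apply, Matrix.smul_apply, Matrix.smul_apply, this]
    rfl
  have hS : MeasurableSet {y : (Fin n → Fin p → ℝ) × (Fin n → ℝ) | (D y.1).det ≠ 0} :=
    (hDm.comp measurable_fst) (measurableSet_singleton (0 : ℝ)).compl
  have h2 : ∀ᵐ y ∂((stdGM n p).prod (stdG (Fin n))), (D y.1).det ≠ 0 := by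
    rw [← swapE_map E i0 hE]
    have hTm : Measurable (swapE E i0) :=
      (LinearMap.continuous_of_finiteDimensional _).measurable
    rw [ae_map_iff hTm.aemeasurable hS]
    refine (Measure.ae_prod_iff_ae_ae (p := fun y => (D (swapE E i0 y).1).det ≠ 0) (hTm hS)).2 ?_
    refine Eventually.of_forall fun G => ?_
    have h3 : ∀ γ : Fin n → ℝ, (swapE E i0 (G, γ)).1 = (G - ipL E G • E) + (γ i0) • E := by
      intro γ
      show G + (γ i0 - ipL E G) • E = _
      rw [sub_smul]; abel
    simp only [h3, hDE]
    have := nullSingletonClass_gaussianReal (μ := 0) (v := 1) one_ne_zero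
    have h4 := (finite_det_zero (D (G - ipL E G • E)) hc).countable.ae_notMem (gaussianReal 0 1)
    exact (measurePreserving_eval (fun _ : Fin n => gaussianReal 0 1) i0).quasiMeasurePreserving.ae h4
  exact (Measure.ae_prod_iff_ae_ae hS).1 h2 |>.mono fun G hG => by
    obtain ⟨γ, hγ⟩ := hG.exists
    exact hγ

/-! ### Invariance of the Gaussian law along the path -/

/-- The linear map sending `(X(0), w(0))` to `(X(t), w(t))`, in coordinates where the rows of the
design are standard Gaussian; `q` is the normalized direction carrying `z₀`. -/
def rotL {n p : ℕ} (e : Fin n → ℝ) (q : Fin p → ℝ) (t : ℝ) :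
    (Fin n → Fin p → ℝ) × (Fin n → ℝ) →ₗ[ℝ] (Fin n → Fin p → ℝ) × (Fin n → ℝ) where
  toFun y := (fun i j => y.1 i j + ((Real.cos t - 1) * perp (uv e) (Matrix.of y.1 *ᵥ q) i
      + Real.sin t * perp (uv e) y.2 i) * q j,
    fun i => (uv e ⬝ᵥ y.2) * uv e i - Real.sin t * perp (uv e) (Matrix.of y.1 *ᵥ q) i
      + Real.cos t * perp (uv e) y.2 i)
  map_add' y y' := by
    have h : Matrix.of (y.1 + y'.1) *ᵥ q = Matrix.of y.1 *ᵥ q + Matrix.of y'.1 *ᵥ q :=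
      Matrix.add_mulVec _ _ _
    refine Prod.ext (funext fun i => funext fun j => ?_) (funext fun i => ?_)
    · simp only [Prod.fst_add, Prod.snd_add, h, perp_add, Pi.add_apply]; ring
    · simp only [Prod.fst_add, Prod.snd_add, h, perp_add, Pi.add_apply, dotProduct_add]; ring
  map_smul' c y := by
    have h : Matrix.of (c • y.1) *ᵥ q = c • (Matrix.of y.1 *ᵥ q) :=
      Matrix.smul_mulVec c (Matrix.of y.1) q
    refine Prod.ext (funext fun i => funext fun j => ?_) (funext fun i => ?_)
    · simp only [Prod.smul_fst, Prod.smul_snd, h, perp_smul, Pi.smul_apply, smul_eq_mul,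
        RingHom.id_apply]; ring
    · simp only [Prod.smul_fst, Prod.smul_snd, h, perp_smul, Pi.smul_apply, dotProduct_smul,
        smul_eq_mul, RingHom.id_apply]; ring

lemma rotL_fst {n p : ℕ} (e : Fin n → ℝ) (q : Fin p → ℝ) (t : ℝ)
    (y : (Fin n → Fin p → ℝ) × (Fin n → ℝ)) : Matrix.of (rotL e q t y).1 =
      Matrix.of y.1 + Matrix.vecMulVec
        (z0Path e (Matrix.of y.1 *ᵥ q) y.2 t - Matrix.of y.1 *ᵥ q) q := by
  ext i j
  simp only [rotL, LinearMap.coe_mk, AddHom.coe_mk, Matrix.of_apply, Matrix.add_apply,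
    Matrix.vecMulVec_apply, z0Path_eq, perp, Pi.sub_apply, Pi.add_apply, Pi.smul_apply, smul_eq_mul]
  ring

lemma rotL_snd {n p : ℕ} (e : Fin n → ℝ) (q : Fin p → ℝ) (t : ℝ)
    (y : (Fin n → Fin p → ℝ) × (Fin n → ℝ)) : (rotL e q t y).2 =
      projOn e y.2 + zdotPath e (Matrix.of y.1 *ᵥ q) y.2 t := by
  funext i
  simp only [rotL, LinearMap.coe_mk, AddHom.coe_mk, projOn_eq, zdotPath_eq, Pi.add_apply,
    Pi.smul_apply, smul_eq_mul]
  ring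

lemma sum_sq_eq_dp {n : ℕ} (v : Fin n → ℝ) : ∑ i, v i ^ 2 = v ⬝ᵥ v := by
  simp only [dotProduct, sq]

/-- `rotL` is an isometry, so `(X(t), w(t))` has the same law for every `t`; in particular `w(t)` is a
standard Gaussian vector independent of `X(t)`. -/
lemma rotL_map {n p : ℕ} (e : Fin n → ℝ) {q : Fin p → ℝ} (hq : q ⬝ᵥ q = 1) (t : ℝ) :
    ((stdGM n p).prod (stdG (Fin n))).map (rotL e q t) = (stdGM n p).prod (stdG (Fin n)) := by
  apply stdGM_map_isometry
  rintro ⟨G, γ⟩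
  set z := Matrix.of G *ᵥ q with hz
  set x := uv e with hx
  have hxz : x ⬝ᵥ perp x z = 0 := uv_perp e z
  have hxγ : x ⬝ᵥ perp x γ = 0 := uv_perp e γ
  have h1 : ∀ δ : Fin n → ℝ, ∑ i, ∑ j, (G i j + δ i * q j) ^ 2
      = ∑ i, ∑ j, G i j ^ 2 + 2 * (δ ⬝ᵥ z) + δ ⬝ᵥ δ := by
    intro δ
    have h2 : ∀ i, ∑ j, (G i j + δ i * q j) ^ 2
        = ∑ j, G i j ^ 2 + 2 * (δ i * z i) + δ i * δ i := by
      intro i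
      have h3 : z i = ∑ j, G i j * q j := rfl
      have h4 : ∑ j, q j * q j = 1 := hq
      have h5 : ∀ j, (G i j + δ i * q j) ^ 2
          = G i j ^ 2 + 2 * δ i * (G i j * q j) + δ i * δ i * (q j * q j) := fun j => by ring
      simp only [h5, Finset.sum_add_distrib, ← Finset.mul_sum, h4, ← h3]
      ring
    simp only [h2, Finset.sum_add_distrib, ← Finset.mul_sum]
    rfl
  have h6 : ∑ i, ∑ j, ((rotL e q t (G, γ)).1 i j) ^ 2
      = ∑ i, ∑ j, (G i j + ((Real.cos t - 1) • perp x z + Real.sin t • perp x γ) i * q j) ^ 2 := rfl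
  have h7 : (rotL e q t (G, γ)).2
      = (x ⬝ᵥ γ) • x - Real.sin t • perp x z + Real.cos t • perp x γ := rfl
  have h8 : z = (x ⬝ᵥ z) • x + perp x z := by unfold perp; abel
  have h9 : γ = (x ⬝ᵥ γ) • x + perp x γ := by unfold perp; abel
  rw [h6, h7, h1, sum_sq_eq_dp, sum_sq_eq_dp]
  generalize perp x z = P at *
  generalize perp x γ = Q at *
  have h10 : P ⬝ᵥ z = P ⬝ᵥ P := by
    rw [h8, dotProduct_add, dotProduct_smul, dotProduct_comm P x, hxz]; simp
  have h11 : Q ⬝ᵥ z = P ⬝ᵥ Q := by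
    rw [h8, dotProduct_add, dotProduct_smul, dotProduct_comm Q x, hxγ, dotProduct_comm Q P]; simp
  have h12 : γ ⬝ᵥ γ = (x ⬝ᵥ γ) ^ 2 * (x ⬝ᵥ x) + Q ⬝ᵥ Q := by
    conv_lhs => rw [h9]
    simp only [add_dotProduct, dotProduct_add, smul_dotProduct, dotProduct_smul, smul_eq_mul,
      dotProduct_comm Q x, hxγ]
    ring
  simp only [add_dotProduct, dotProduct_add, sub_dotProduct, dotProduct_sub, smul_dotProduct,
    dotProduct_smul, smul_eq_mul, h10, h11, h12, dotProduct_comm Q x, dotProduct_comm P x,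
    dotProduct_comm Q P, hxz, hxγ]
  linear_combination (P ⬝ᵥ P + Q ⬝ᵥ Q) * Real.cos_sq_add_sin_sq t

/-! ### Exponential moments under the model -/

lemma gauss_scale (n : ℕ) (c : ℝ) : (Measure.pi fun _ : Fin n => gaussianReal 0 (Real.toNNReal (c ^ 2)))
    = (stdG (Fin n)).map fun γ => c • γ := by
  have h := Measure.pi_map_pi (μ := fun _ : Fin n => gaussianReal 0 1)
    (f := fun _ x => c * x) (fun _ => (measurable_const_mul c).aemeasurable)
  rw [stdG]
  show _ = Measure.map (fun γ : Fin n → ℝ => fun i => c * γ i) _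
  rw [h]
  congr 1
  funext i
  rw [gaussianReal_map_const_mul, mul_zero, mul_one]
  congr 1
  ext
  simp [Real.coe_toNNReal _ (sq_nonneg c)]

/-- Expectations of functions of `((X, ε), g)` as iterated integrals: over the noise, then over a
standard Gaussian pair `(G, γ)` with `X = G A` and `g = c γ`. -/
lemma law_lintegral {Ω : Type} [MeasureSpace Ω] [IsProbabilityMeasure (volume : Measure Ω)]
    {n p : ℕ} {A : Matrix (Fin p) (Fin p) ℝ} {v c : ℝ} (hv : v = c ^ 2)
    {X : Ω → Fin n → Fin p → ℝ} {eps g : Ω → Fin n → ℝ} (hX : Measurable X)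
    (hXl : Measure.map X volume =
      Measure.map (fun (G : Fin n → Fin p → ℝ) (i : Fin n) (j : Fin p) => ∑ l, G i l * A l j)
        (Measure.pi fun _ : Fin n => Measure.pi fun _ : Fin p => gaussianReal 0 1))
    (he : Measurable eps) (hg : IsoGaussVec n v g) (h1 : IndepFun X eps)
    (h2 : IndepFun (fun ω => (X ω, eps ω)) g)
    {F : ((Fin n → Fin p → ℝ) × (Fin n → ℝ)) × (Fin n → ℝ) → ℝ≥0∞} (hF : Measurable F) :
    ∫⁻ ω, F ((X ω, eps ω), g ω) = ∫⁻ e, ∫⁻ y, F ((Matrix.of.symm (Matrix.of y.1 * A), e), c • y.2)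
      ∂((stdGM n p).prod (stdG (Fin n))) ∂(Measure.map eps volume) := by
  have hprob : IsProbabilityMeasure (Measure.map eps volume) :=
    Measure.isProbabilityMeasure_map he.aemeasurable
  have hmA : Measurable fun G : Fin n → Fin p → ℝ => Matrix.of.symm (Matrix.of G * A) := by
    refine measurable_pi_iff.2 fun i => measurable_pi_iff.2 fun j => ?_
    exact meas_mul (M := fun G : Fin n → Fin p → ℝ => Matrix.of G) (M' := fun _ => A)
      (fun i j => (measurable_pi_apply j).comp (measurable_pi_apply i))
      (fun _ _ => measurable_const) i j
  have hXl' : Measure.map X volume = (stdGM n p).map fun G => Matrix.of.symm (Matrix.of G * A) := hXl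
  have hgl : Measure.map g volume = (stdG (Fin n)).map fun γ => c • γ := by
    rw [hg.2, hv, gauss_scale]
  have hjoint : Measure.map (fun ω => ((X ω, eps ω), g ω)) volume
      = ((Measure.map X volume).prod (Measure.map eps volume)).prod (Measure.map g volume) := by
    rw [h2.map_prod_eq_prod_map_map (hX.prodMk he).aemeasurable hg.1.aemeasurable,
      h1.map_prod_eq_prod_map_map hX.aemeasurable he.aemeasurable]
  have hmc : Measurable fun γ : Fin n → ℝ => c • γ := measurable_const_smul c
  have hF' : Measurable fun x : ((Fin n → Fin p → ℝ) × (Fin n → ℝ)) × (Fin n → ℝ) =>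
      F ((Matrix.of.symm (Matrix.of x.1.1 * A), x.1.2), c • x.2) :=
    hF.comp (((hmA.comp (measurable_fst.comp measurable_fst)).prodMk
      (measurable_snd.comp measurable_fst)).prodMk (hmc.comp measurable_snd))
  calc ∫⁻ ω, F ((X ω, eps ω), g ω)
      = ∫⁻ x, F x ∂(Measure.map (fun ω => ((X ω, eps ω), g ω)) volume) :=
        (lintegral_map hF ((hX.prodMk he).prodMk hg.1)).symm
    _ = ∫⁻ x, F ((Matrix.of.symm (Matrix.of x.1.1 * A), x.1.2), c • x.2)
          ∂(((stdGM n p).prod (Measure.map eps volume)).prod (stdG (Fin n))) := by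
        rw [hjoint, hXl', hgl]
        have h3 : (Measure.map (fun G => Matrix.of.symm (Matrix.of G * A)) (stdGM n p)).prod
            (Measure.map eps volume) = ((stdGM n p).prod (Measure.map eps volume)).map
              (Prod.map (fun G => Matrix.of.symm (Matrix.of G * A)) id) := by
          rw [← Measure.map_prod_map _ _ hmA measurable_id, Measure.map_id]
        rw [h3, Measure.map_prod_map _ _ (hmA.prodMap measurable_id) hmc,
          lintegral_map hF ((hmA.prodMap measurable_id).prodMap hmc)]
        rfl
    _ = _ := by
        rw [lintegral_prod _ hF'.aemeasurable, lintegral_prod _ hF'.lintegral_prod_right'.aemeasurable,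
          lintegral_lintegral_swap hF'.lintegral_prod_right'.aemeasurable]
        refine lintegral_congr fun e => ?_
        rw [lintegral_prod]
        exact (hF'.comp ((measurable_fst.prodMk measurable_const).prodMk measurable_snd)).aemeasurable

section model
variable {n p : ℕ} {Sig A : Matrix (Fin p) (Fin p) ℝ} {a : Fin p → ℝ}

lemma A_isUnit (hS : Sig.PosDef) (hA : A.transpose * A = Sig) : IsUnit A.det := by
  have h := posDef_isUnit hS
  rw [← hA, Matrix.det_mul, Matrix.det_transpose] at h
  exact isUnit_of_mul_isUnit_left h

/-- The unit vector `q` with `C₀ z₀ = G q` when `X = G A`. -/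
def qhat (A Sig : Matrix (Fin p) (Fin p) ℝ) (a : Fin p → ℝ) : Fin p → ℝ :=
  C0 Sig a • (A *ᵥ u0vec Sig a)

lemma u0vec_eq : u0vec Sig a = (quadA0 Sig a)⁻¹ • (Sig⁻¹ *ᵥ a) := by
  funext j; simp [u0vec, div_eq_inv_mul]

lemma Sig_u0 (hS : Sig.PosDef) : Sig *ᵥ u0vec Sig a = (quadA0 Sig a)⁻¹ • a := by
  rw [u0vec_eq, Matrix.mulVec_smul, Matrix.mulVec_mulVec,
    Matrix.mul_nonsing_inv _ (posDef_isUnit hS), Matrix.one_mulVec]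

lemma a_u0 (hS : Sig.PosDef) (ha : a ≠ 0) : a ⬝ᵥ u0vec Sig a = 1 := by
  rw [u0vec_eq, dotProduct_smul, smul_eq_mul, ← dot_eq]
  exact inv_mul_cancel₀ (quadA0_pos hS ha).ne'

lemma C0_sq (hS : Sig.PosDef) (ha : a ≠ 0) : C0 Sig a ^ 2 = quadA0 Sig a :=
  Real.sq_sqrt (quadA0_pos hS ha).le

lemma qhat_vecMul (hS : Sig.PosDef) (ha : a ≠ 0) (hA : A.transpose * A = Sig) :
    qhat A Sig a ᵥ* A = (C0 Sig a)⁻¹ • a := by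
  have hC := (C0_pos hS ha).ne'
  rw [← Matrix.mulVec_transpose, qhat, Matrix.mulVec_smul, Matrix.mulVec_mulVec, hA, Sig_u0 hS,
    smul_smul, ← C0_sq hS ha]
  congr 1
  field_simp

lemma qhat_dp (hS : Sig.PosDef) (ha : a ≠ 0) (hA : A.transpose * A = Sig) :
    qhat A Sig a ⬝ᵥ qhat A Sig a = 1 := by
  have hC := (C0_pos hS ha).ne'
  conv_lhs => arg 2; rw [qhat]
  rw [dotProduct_smul, Matrix.dotProduct_mulVec, qhat_vecMul hS ha hA, smul_dotProduct, a_u0 hS ha]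
  simp [hC]

lemma z0vec_model (G : Fin n → Fin p → ℝ) :
    C0 Sig a • z0vec (Matrix.of.symm (Matrix.of G * A)) Sig a = Matrix.of G *ᵥ qhat A Sig a := by
  rw [z0vec, mulVec'_eq, qhat, Matrix.mulVec_smul, Matrix.mulVec_mulVec]
  rfl

lemma z0Path_smul (e z g : Fin n → ℝ) (c t : ℝ) :
    z0Path e (c • z) (c • g) t = c • z0Path e z g t := by
  funext i
  simp only [z0Path_eq, perp_smul, dotProduct_smul, Pi.add_apply, Pi.smul_apply, smul_eq_mul]
  ring

lemma zdotPath_smul (e z g : Fin n → ℝ) (c t : ℝ) :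
    zdotPath e (c • z) (c • g) t = c • zdotPath e z g t := by
  simp only [zdotPath_eq, perp_smul, smul_add, smul_smul]
  congr 2 <;> ring

lemma projOn_smul (e g : Fin n → ℝ) (c : ℝ) : projOn e (c • g) = c • projOn e g := by
  simp only [projOn_eq, dotProduct_smul, smul_smul, smul_eq_mul]

lemma XPath_model (hS : Sig.PosDef) (ha : a ≠ 0) (hA : A.transpose * A = Sig)
    (y : (Fin n → Fin p → ℝ) × (Fin n → ℝ)) (e : Fin n → ℝ) (t : ℝ) :
    Matrix.of (XPath (Matrix.of.symm (Matrix.of y.1 * A)) Sig a e ((C0 Sig a)⁻¹ • y.2) t)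
      = Matrix.of (rotL e (qhat A Sig a) t y).1 * A := by
  have hC := (C0_pos hS ha).ne'
  have hz : z0vec (Matrix.of.symm (Matrix.of y.1 * A)) Sig a
      = (C0 Sig a)⁻¹ • (Matrix.of y.1 *ᵥ qhat A Sig a) := by
    rw [← z0vec_model, smul_smul, inv_mul_cancel₀ hC, one_smul]
  rw [rotL_fst, Matrix.add_mul, Matrix.vecMulVec_mul, qhat_vecMul hS ha hA]
  ext i j
  simp only [XPath, hz, z0Path_smul, Matrix.of_apply, Matrix.of_symm_apply, Matrix.add_apply,
    Matrix.vecMulVec_apply, Pi.smul_apply, Pi.sub_apply, smul_eq_mul]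
  ring

lemma wPath_model (hS : Sig.PosDef) (ha : a ≠ 0)
    (y : (Fin n → Fin p → ℝ) × (Fin n → ℝ)) (e : Fin n → ℝ) (t : ℝ) :
    wPath (C0 Sig a) e (z0vec (Matrix.of.symm (Matrix.of y.1 * A)) Sig a) ((C0 Sig a)⁻¹ • y.2) t
      = (rotL e (qhat A Sig a) t y).2 := by
  have hC := (C0_pos hS ha).ne'
  have hz : z0vec (Matrix.of.symm (Matrix.of y.1 * A)) Sig a
      = (C0 Sig a)⁻¹ • (Matrix.of y.1 *ᵥ qhat A Sig a) := by
    rw [← z0vec_model, smul_smul, inv_mul_cancel₀ hC, one_smul]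
  rw [rotL_snd, wPath, hz, zdotPath_smul, projOn_smul, ← smul_add, smul_smul, mul_inv_cancel₀ hC,
    one_smul]
end model

section moments
variable {n p : ℕ} {Sig A : Matrix (Fin p) (Fin p) ℝ} {a : Fin p → ℝ}

/-- The dominating functional `Psi` at time `t`, as a function of the data `((X, ε), g)`. -/
def PsiP (τ l : ℝ) (N : ℕ) (Sig : Matrix (Fin p) (Fin p) ℝ) (a β : Fin p → ℝ) (t : ℝ)
    (x : ((Fin n → Fin p → ℝ) × (Fin n → ℝ)) × (Fin n → ℝ)) : ℝ≥0∞ :=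
  Psi τ l N a β (u0vec Sig a) (Matrix.of (XPath x.1.1 Sig a x.1.2 x.2 t)) x.1.2
    (wPath (C0 Sig a) x.1.2 (z0vec x.1.1 Sig a) x.2 t)

/-- The exponential moment factor coming from `z₀` itself. -/
def ThetaP (τ : ℝ) (Sig : Matrix (Fin p) (Fin p) ℝ) (a : Fin p → ℝ)
    (x : ((Fin n → Fin p → ℝ) × (Fin n → ℝ)) × (Fin n → ℝ)) : ℝ≥0∞ :=
  ENNReal.ofReal (Real.exp (τ * Tfun 1 n (fun _ => uv x.1.2) (C0 Sig a • z0vec x.1.1 Sig a)))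

/-- The random variable dominating the exponential of the normalized remainders. -/
def Hdom (τ l : ℝ) (N : ℕ) (Sig : Matrix (Fin p) (Fin p) ℝ) (a β : Fin p → ℝ)
    (x : ((Fin n → Fin p → ℝ) × (Fin n → ℝ)) × (Fin n → ℝ)) : ℝ≥0∞ :=
  ENNReal.ofReal (1 / 3) * (ThetaP τ Sig a x + PsiP τ l N Sig a β (Real.pi / 2) x
    + ENNReal.ofReal (2 / Real.pi) * ∫⁻ t in Set.Ioc 0 (Real.pi / 2), PsiP τ l N Sig a β t x)

lemma meas_data_X (i : Fin n) (j : Fin p) :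
    Measurable fun z : ℝ × (((Fin n → Fin p → ℝ) × (Fin n → ℝ)) × (Fin n → ℝ)) => z.2.1.1 i j :=
  (measurable_pi_apply j).comp ((measurable_pi_apply i).comp
    (measurable_fst.comp (measurable_fst.comp measurable_snd)))

lemma meas_data_e (i : Fin n) :
    Measurable fun z : ℝ × (((Fin n → Fin p → ℝ) × (Fin n → ℝ)) × (Fin n → ℝ)) => z.2.1.2 i :=
  (measurable_pi_apply i).comp (measurable_snd.comp (measurable_fst.comp measurable_snd))

lemma meas_data_g (i : Fin n) :
    Measurable fun z : ℝ × (((Fin n → Fin p → ℝ) × (Fin n → ℝ)) × (Fin n → ℝ)) => z.2.2 i :=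
  (measurable_pi_apply i).comp (measurable_snd.comp measurable_snd)

lemma meas_data_z0 (Sig : Matrix (Fin p) (Fin p) ℝ) (a : Fin p → ℝ) (i : Fin n) :
    Measurable fun z : ℝ × (((Fin n → Fin p → ℝ) × (Fin n → ℝ)) × (Fin n → ℝ)) =>
      z0vec z.2.1.1 Sig a i := by
  simp only [z0vec, mulVec']
  exact Finset.measurable_sum _ fun j _ => (meas_data_X i j).mul_const _

lemma meas_PsiP (τ l : ℝ) (N : ℕ) (Sig : Matrix (Fin p) (Fin p) ℝ) (a β : Fin p → ℝ) :
    Measurable fun z : ℝ × (((Fin n → Fin p → ℝ) × (Fin n → ℝ)) × (Fin n → ℝ)) =>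
      PsiP τ l N Sig a β z.1 z.2 := by
  have hz := meas_data_z0 (n := n) Sig a
  have he := meas_data_e (n := n) (p := p)
  have hg := meas_data_g (n := n) (p := p)
  have hue := meas_uv he
  have hc : Measurable fun z : ℝ × (((Fin n → Fin p → ℝ) × (Fin n → ℝ)) × (Fin n → ℝ)) =>
    Real.cos z.1 := Real.measurable_cos.comp measurable_fst
  have hs : Measurable fun z : ℝ × (((Fin n → Fin p → ℝ) × (Fin n → ℝ)) × (Fin n → ℝ)) =>
    Real.sin z.1 := Real.measurable_sin.comp measurable_fst
  refine meas_Psi (fun i j => ?_) he (fun i => ?_) τ l N a β _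
  · simp only [Matrix.of_apply, XPath, z0Path_eq, Pi.add_apply, Pi.smul_apply, smul_eq_mul]
    exact ((meas_data_X i j).sub ((hz i).mul_const _)).add
      (((((meas_dp hue hz).mul (hue i)).add (hc.mul (meas_perp hue hz i))).add
        (hs.mul (meas_perp hue hg i))).mul_const _)
  · simp only [wPath, projOn_eq, zdotPath_eq, Pi.add_apply, Pi.smul_apply, smul_eq_mul]
    exact Measurable.const_mul (((meas_dp hue hg).mul (hue i)).add
      ((hs.neg.mul (meas_perp hue hz i)).add (hc.mul (meas_perp hue hg i)))) _

lemma meas_ThetaP (τ : ℝ) (Sig : Matrix (Fin p) (Fin p) ℝ) (a : Fin p → ℝ) :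
    Measurable fun x : ((Fin n → Fin p → ℝ) × (Fin n → ℝ)) × (Fin n → ℝ) => ThetaP τ Sig a x := by
  have hz : ∀ i, Measurable fun x : ((Fin n → Fin p → ℝ) × (Fin n → ℝ)) × (Fin n → ℝ) =>
      (C0 Sig a • z0vec x.1.1 Sig a) i := fun i =>
    ((meas_data_z0 Sig a i).comp (measurable_prodMk_left (x := (0 : ℝ)))).const_mul _
  have he : ∀ i, Measurable fun x : ((Fin n → Fin p → ℝ) × (Fin n → ℝ)) × (Fin n → ℝ) =>
      x.1.2 i := fun i => (meas_data_e i).comp (measurable_prodMk_left (x := (0 : ℝ)))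
  exact ((meas_Tfun (P := fun _ => 1) n (fun _ _ => measurable_const)
    (fun _ i => meas_uv he i) hz).const_mul τ).exp.ennreal_ofReal

lemma meas_Hdom (τ l : ℝ) (N : ℕ) (Sig : Matrix (Fin p) (Fin p) ℝ) (a β : Fin p → ℝ) :
    Measurable fun x : ((Fin n → Fin p → ℝ) × (Fin n → ℝ)) × (Fin n → ℝ) =>
      Hdom τ l N Sig a β x := by
  have h := meas_PsiP (n := n) τ l N Sig a β
  refine Measurable.const_mul (((meas_ThetaP τ Sig a).add
    (h.comp (measurable_prodMk_left (x := Real.pi / 2)))).add (Measurable.const_mul ?_ _)) _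
  exact h.lintegral_prod_left'

lemma meas_slice {D : Type} [MeasurableSpace D] {f : ℝ → D → ℝ≥0∞}
    (hm : Measurable fun z : ℝ × D => f z.1 z.2) (t : ℝ) : Measurable fun x => f t x :=
  hm.comp (measurable_prodMk_left (x := t))

lemma lintegral_rotL (e : Fin n → ℝ) {q : Fin p → ℝ} (hq : q ⬝ᵥ q = 1) (t : ℝ)
    {F : (Fin n → Fin p → ℝ) × (Fin n → ℝ) → ℝ≥0∞} (hF : Measurable F) :
    ∫⁻ y, F (rotL e q t y) ∂((stdGM n p).prod (stdG (Fin n)))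
      = ∫⁻ y, F y ∂((stdGM n p).prod (stdG (Fin n))) := by
  have hT : Measurable (rotL e q t) := (LinearMap.continuous_of_finiteDimensional _).measurable
  conv_rhs => rw [← rotL_map e hq t]
  rw [lintegral_map hF hT]

lemma moment_ThetaP (hn : 0 < n) (hS : Sig.PosDef) (ha : a ≠ 0) (hA : A.transpose * A = Sig)
    {τ : ℝ} (hτ : 0 ≤ τ) (hτ' : τ ≤ √n / 52) (e : Fin n → ℝ) :
    ∫⁻ y, ThetaP τ Sig a ((Matrix.of.symm (Matrix.of y.1 * A), e), (C0 Sig a)⁻¹ • y.2)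
      ∂((stdGM n p).prod (stdG (Fin n))) ≤ ENNReal.ofReal (2 * Real.exp (338 * τ ^ 2)) := by
  have hF : Measurable fun y : (Fin n → Fin p → ℝ) × (Fin n → ℝ) =>
      ENNReal.ofReal (Real.exp (τ * Tfun 1 n (fun _ => uv e) y.2)) :=
    ((meas_Tfun (P := fun _ => 1) (η := fun _ _ => uv e)
      (w := fun y : (Fin n → Fin p → ℝ) × (Fin n → ℝ) => y.2) n (fun _ _ => measurable_const)
      (fun _ _ => measurable_const)
      (fun i => (measurable_pi_apply i).comp measurable_snd)).const_mul τ).exp.ennreal_ofReal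
  -- the rotation by `-π/2` without a fixed direction exchanges `C₀ z₀` and the independent copy
  have hrot : ∀ y : (Fin n → Fin p → ℝ) × (Fin n → ℝ),
      C0 Sig a • z0vec (Matrix.of.symm (Matrix.of y.1 * A)) Sig a
        = (rotL 0 (qhat A Sig a) (-(Real.pi / 2)) y).2 := by
    intro y
    rw [z0vec_model, rotL_snd, projOn_eq, zdotPath_eq]
    have h0 : uv (0 : Fin n → ℝ) = 0 := by simp [uv]
    simp [h0, perp]
  simp only [ThetaP, hrot]
  rw [lintegral_rotL 0 (qhat_dp hS ha hA) _ hF, lintegral_prod _ hF.aemeasurable]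
  have h1 := lintegral_exp_Tfun hn (1 : Matrix (Fin n) (Fin n) ℝ) n (fun _ => uv e)
    (fun _ => uv_dp_self e) Matrix.transpose_one (fun x => by rw [Matrix.one_mulVec]; exact dp_nonneg _)
    (fun x => by rw [Matrix.one_mulVec]) (by simp) le_rfl τ hτ hτ'
  simpa using h1

/-- The bound is uniform in `t` by invariance of the law, and conditional on the noise `e`. -/
lemma moment_PsiP (hn : 0 < n) (hS : Sig.PosDef) (ha : a ≠ 0) (hA : A.transpose * A = Sig)
    {τ : ℝ} (hτ : 0 ≤ τ) (hτ' : τ ≤ √n / 52)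
    {N : ℕ} (hN : 2 * N ≤ n) (l : ℝ) (β : Fin p → ℝ) (t : ℝ) (e : Fin n → ℝ) :
    ∫⁻ y, PsiP τ l N Sig a β t ((Matrix.of.symm (Matrix.of y.1 * A), e), (C0 Sig a)⁻¹ • y.2)
      ∂((stdGM n p).prod (stdG (Fin n))) ≤ ENNReal.ofReal (2 * Real.exp (338 * τ ^ 2)) := by
  have hmA : ∀ i j, Measurable fun y : (Fin n → Fin p → ℝ) × (Fin n → ℝ) =>
      (Matrix.of y.1 * A) i j :=
    meas_mul (M := fun y : (Fin n → Fin p → ℝ) × (Fin n → ℝ) => Matrix.of y.1) (M' := fun _ => A)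
      (fun i j => (measurable_pi_apply j).comp ((measurable_pi_apply i).comp measurable_fst))
      (fun _ _ => measurable_const)
  have hF : Measurable fun y : (Fin n → Fin p → ℝ) × (Fin n → ℝ) =>
      Psi τ l N a β (u0vec Sig a) (Matrix.of y.1 * A) e y.2 :=
    meas_Psi (e := fun _ => e) (w := fun y : (Fin n → Fin p → ℝ) × (Fin n → ℝ) => y.2) hmA
      (fun _ => measurable_const) (fun i => (measurable_pi_apply i).comp measurable_snd) _ _ _ _ _ _
  simp only [PsiP, XPath_model hS ha hA, wPath_model hS ha]
  rw [lintegral_rotL e (qhat_dp hS ha hA) t hF, lintegral_prod _ hF.aemeasurable]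
  have hgen : ∀ᵐ G ∂(stdGM n p), ∀ B : Finset (Fin p), B.card ≤ 2 * N → ∀ v : Fin p → ℝ,
      (∀ j ∉ B, v j = 0) → (Matrix.of G * A) *ᵥ v = 0 → v = 0 := by
    rw [ae_all_iff]
    intro B
    by_cases hB : B.card ≤ 2 * N
    · exact (ae_inj (A_isUnit hS hA) B (hB.trans hN)).mono fun G h _ => h
    · exact Eventually.of_forall fun G h => absurd h hB
  calc _ ≤ ∫⁻ _, ENNReal.ofReal (2 * Real.exp (338 * τ ^ 2)) ∂(stdGM n p) :=
        lintegral_mono_ae (hgen.mono fun G h =>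
          lintegral_Psi_le hn (by omega) h a (u0vec Sig a) τ hτ hτ')
    _ = _ := by simp

/-- If the three ingredients have integral at most `K`, so has their convex combination. -/
lemma lintegral_combo {Ω D : Type} [MeasureSpace Ω] [IsProbabilityMeasure (volume : Measure Ω)]
    [MeasurableSpace D] {d : Ω → D} (hd : Measurable d) {Th : D → ℝ≥0∞} {f : ℝ → D → ℝ≥0∞}
    (hm : Measurable fun z : ℝ × D => f z.1 z.2) {K : ℝ≥0∞}
    (hth : ∫⁻ ω, Th (d ω) ≤ K) (hpsi : ∀ t, ∫⁻ ω, f t (d ω) ≤ K) :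
    ∫⁻ ω, ENNReal.ofReal (1 / 3) * (Th (d ω) + f (Real.pi / 2) (d ω)
      + ENNReal.ofReal (2 / Real.pi) * ∫⁻ t in Set.Ioc 0 (Real.pi / 2), f t (d ω)) ≤ K := by
  have hmt : ∀ t, Measurable fun ω => f t (d ω) := fun t =>
    hm.comp (measurable_const.prodMk hd)
  have hInt : ∫⁻ ω, ∫⁻ t in Set.Ioc 0 (Real.pi / 2), f t (d ω)
      ≤ K * ENNReal.ofReal (Real.pi / 2) := by
    rw [lintegral_lintegral_swap]
    · calc _ ≤ ∫⁻ _ in Set.Ioc 0 (Real.pi / 2), K := lintegral_mono fun t => hpsi t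
        _ = _ := by simp
    · exact (hm.comp (measurable_snd.prodMk (hd.comp measurable_fst))).aemeasurable
  have hm3 : Measurable fun ω => ∫⁻ t in Set.Ioc 0 (Real.pi / 2), f t (d ω) :=
    (hm.lintegral_prod_left' (μ := volume.restrict (Set.Ioc 0 (Real.pi / 2)))).comp hd
  have hπ : ENNReal.ofReal (2 / Real.pi) * ENNReal.ofReal (Real.pi / 2) = 1 := by
    rw [← ENNReal.ofReal_mul (by positivity), show 2 / Real.pi * (Real.pi / 2) = 1 by
      field_simp, ENNReal.ofReal_one]
  have h3 : ENNReal.ofReal (1 / 3) * 3 = 1 := by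
    rw [show (3 : ℝ≥0∞) = ENNReal.ofReal 3 by simp, ← ENNReal.ofReal_mul (by norm_num)]
    norm_num
  rw [lintegral_const_mul' _ _ ENNReal.ofReal_ne_top, lintegral_add_right _ (hm3.const_mul _),
    lintegral_add_right _ (hmt _), lintegral_const_mul' _ _ ENNReal.ofReal_ne_top]
  calc _ ≤ ENNReal.ofReal (1 / 3) * (K + K
        + ENNReal.ofReal (2 / Real.pi) * (K * ENNReal.ofReal (Real.pi / 2))) := by
        gcongr
        exact hpsi _
    _ = (ENNReal.ofReal (1 / 3) * 3) * K := by
        rw [mul_left_comm _ K, hπ]; ring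
    _ = K := by rw [h3, one_mul]

lemma lintegral_Hdom (hn : 0 < n) (hS : Sig.PosDef) (ha : a ≠ 0) (hA : A.transpose * A = Sig)
    {τ : ℝ} (hτ : 0 ≤ τ) (hτ' : τ ≤ √n / 52)
    {N : ℕ} (hN : 2 * N ≤ n) {Ω : Type} [MeasureSpace Ω] [IsProbabilityMeasure (volume : Measure Ω)]
    {X : Ω → Fin n → Fin p → ℝ} {eps g : Ω → Fin n → ℝ} (hX : Measurable X)
    (hXl : Measure.map X volume =
      Measure.map (fun (G : Fin n → Fin p → ℝ) (i : Fin n) (j : Fin p) => ∑ l, G i l * A l j)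
        (Measure.pi fun _ : Fin n => Measure.pi fun _ : Fin p => gaussianReal 0 1))
    (he : Measurable eps) (hg : IsoGaussVec n (quadA0 Sig a)⁻¹ g) (h1 : IndepFun X eps)
    (h2 : IndepFun (fun ω => (X ω, eps ω)) g) (l : ℝ) (β : Fin p → ℝ) :
    ∫⁻ ω, Hdom τ l N Sig a β ((X ω, eps ω), g ω) ≤ ENNReal.ofReal (2 * Real.exp (338 * τ ^ 2)) := by
  have hprob : IsProbabilityMeasure (Measure.map eps volume) :=
    Measure.isProbabilityMeasure_map he.aemeasurable
  have hv : (quadA0 Sig a)⁻¹ = ((C0 Sig a)⁻¹) ^ 2 := by rw [inv_pow, C0_sq hS ha]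
  have hm := meas_PsiP (n := n) τ l N Sig a β
  have hmt : ∀ t, Measurable fun x : ((Fin n → Fin p → ℝ) × (Fin n → ℝ)) × (Fin n → ℝ) =>
    PsiP τ l N Sig a β t x := fun t => meas_slice (f := fun t x => PsiP τ l N Sig a β t x) hm t
  have hd : Measurable fun ω => ((X ω, eps ω), g ω) := (hX.prodMk he).prodMk hg.1
  have hcomb := lintegral_combo (d := fun ω => ((X ω, eps ω), g ω)) hd
    (Th := fun x => ThetaP τ Sig a x) (f := fun t x => PsiP τ l N Sig a β t x) hm
    (K := ENNReal.ofReal (2 * Real.exp (338 * τ ^ 2)))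
  refine hcomb ?_ ?_
  · rw [law_lintegral hv hX hXl he hg h1 h2 (meas_ThetaP τ Sig a)]
    refine (lintegral_mono fun e => moment_ThetaP hn hS ha hA hτ hτ' e).trans ?_
    rw [lintegral_const, measure_univ, mul_one]
  · intro t
    rw [law_lintegral hv hX hXl he hg h1 h2 (hmt t)]
    refine (lintegral_mono fun e => moment_PsiP hn hS ha hA hτ hτ' hN l β t e).trans ?_
    rw [lintegral_const, measure_univ, mul_one]

end moments

/-! ### Domination of the remainders -/

/-- Jensen's inequality for the exponential and the uniform law on `(0, π/2]`, proved by integrating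
the tangent line of the exponential at the mean; no integrability of the right side is needed. -/
lemma exp_integral_le {E : ℝ → ℝ} (hE : IntervalIntegrable E volume 0 (Real.pi / 2)) (c : ℝ)
    {f : ℝ → ℝ≥0∞}
    (hf : ∀ᵐ t : ℝ, 0 < t → ENNReal.ofReal (Real.exp (c * (Real.pi / 2) * E t)) ≤ f t) :
    ENNReal.ofReal (Real.exp (c * ∫ t in (0 : ℝ)..(Real.pi / 2), E t))
      ≤ ENNReal.ofReal (2 / Real.pi) * ∫⁻ t in Set.Ioc 0 (Real.pi / 2), f t := by
  have hpi : (0 : ℝ) ≤ Real.pi / 2 := by positivity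
  obtain ⟨m, hm⟩ : ∃ m, m = c * ∫ t in (0 : ℝ)..(Real.pi / 2), E t := ⟨_, rfl⟩
  rw [← hm]
  have hEi : IntegrableOn E (Set.Ioc 0 (Real.pi / 2)) :=
    (intervalIntegrable_iff_integrableOn_Ioc_of_le hpi).1 hE
  have hi : IntegrableOn (fun t => Real.exp m * (1 - m) + Real.exp m * (c * (Real.pi / 2)) * E t)
      (Set.Ioc 0 (Real.pi / 2)) :=
    (integrableOn_const (by simp)).add (hEi.const_mul _)
  have hval : ∫ t in Set.Ioc 0 (Real.pi / 2),
      (Real.exp m * (1 - m) + Real.exp m * (c * (Real.pi / 2)) * E t)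
        = Real.pi / 2 * Real.exp m := by
    rw [integral_add (integrable_const _) (hEi.const_mul _),
      integral_const_mul (Real.exp m * (c * (Real.pi / 2))) E]
    have : Real.exp m * (c * (Real.pi / 2)) * (∫ t in (0 : ℝ)..(Real.pi / 2), E t)
        = Real.exp m * (Real.pi / 2) * m := by rw [hm]; ring
    rw [intervalIntegral.integral_of_le hpi] at this
    rw [this]
    simp [hpi]
    ring
  have h1 : ENNReal.ofReal (Real.pi / 2 * Real.exp m)
      ≤ ∫⁻ t in Set.Ioc 0 (Real.pi / 2), f t := by
    rw [← hval]
    refine le_trans ?_ (lintegral_mono_ae (f := fun t => ENNReal.ofReal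
      (Real.exp m * (1 - m) + Real.exp m * (c * (Real.pi / 2)) * E t)) ?_)
    · rw [integral_eq_lintegral_pos_part_sub_lintegral_neg_part hi]
      exact ENNReal.ofReal_le_of_le_toReal (sub_le_self _ ENNReal.toReal_nonneg)
    filter_upwards [ae_restrict_mem measurableSet_Ioc, ae_restrict_of_ae hf] with t ht h
    refine le_trans (ENNReal.ofReal_le_ofReal ?_) (h ht.1)
    have h2 := Real.add_one_le_exp (c * (Real.pi / 2) * E t - m)
    have h3 : Real.exp (c * (Real.pi / 2) * E t)
        = Real.exp m * Real.exp (c * (Real.pi / 2) * E t - m) := by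
      rw [← Real.exp_add]; ring_nf
    rw [h3]
    calc _ = Real.exp m * (c * (Real.pi / 2) * E t - m + 1) := by ring
      _ ≤ _ := mul_le_mul_of_nonneg_left h2 (Real.exp_pos _).le
  calc ENNReal.ofReal (Real.exp m)
      = ENNReal.ofReal (2 / Real.pi) * ENNReal.ofReal (Real.pi / 2 * Real.exp m) := by
        rw [← ENNReal.ofReal_mul (by positivity)]
        congr 1
        field_simp
    _ ≤ _ := by gcongr

/-- Convexity of the exponential over the average of three terms. -/
lemma exp_third (x y z : ℝ) : Real.exp (x + y + z)
    ≤ 1 / 3 * (Real.exp (3 * x) + Real.exp (3 * y) + Real.exp (3 * z)) := by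
  have key : ∀ w : ℝ, Real.exp (x + y + z) * (3 * w - (x + y + z) + 1) ≤ Real.exp (3 * w) := by
    intro w
    have h2 := Real.add_one_le_exp (3 * w - (x + y + z))
    have h3 : Real.exp (3 * w) = Real.exp (x + y + z) * Real.exp (3 * w - (x + y + z)) := by
      rw [← Real.exp_add]; ring_nf
    rw [h3]
    exact mul_le_mul_of_nonneg_left h2 (Real.exp_pos _).le
  nlinarith [key x, key y, key z]

lemma Wmat_u0 {n p : ℕ} (X : Fin n → Fin p → ℝ) {Sig : Matrix (Fin p) (Fin p) ℝ} (hS : Sig.PosDef)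
    {a : Fin p → ℝ} (ha : a ≠ 0) (z : Fin n → ℝ) :
    (Wmat X Sig a + Matrix.vecMulVec z a) *ᵥ u0vec Sig a = z := by
  rw [Wmat, Matrix.add_mulVec, Matrix.sub_mulVec, Matrix.vecMulVec_mulVec, Matrix.vecMulVec_mulVec,
    a_u0 hS ha]
  funext i
  simp [z0vec, mulVec'_eq]

/-- On the event where the path hypotheses hold, the exponential of each normalized remainder is
dominated by `Hdom`. -/
lemma exp_rem_le {n p : ℕ} (hn : 0 < n) {Sig : Matrix (Fin p) (Fin p) ℝ} (hS : Sig.PosDef)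
    {a β : Fin p → ℝ} (ha : a ≠ 0) {X : Fin n → Fin p → ℝ} {e g : Fin n → ℝ}
    {b : ℝ → Fin p → ℝ} {l σ Λ M1 M2 m4 M5 : ℝ} (hσ : 0 < σ) (hΛ : 0 < Λ)
    (hM1 : 0 < M1) (hM2 : 0 < M2) (hm4 : 0 < m4) (hM5 : 0 < M5)
    (H : PathHyp (Wmat X Sig a) a β e (z0vec X Sig a) g b l (σ * Λ) (C0 Sig a) M1 M2 m4 M5)
    {N : ℕ} (hN : ∀ t, 0 ≤ t → (suppF (b t)).card ≤ N) (hK : 0 ≤ KK M1 M2 m4 M5) (u R : ℝ)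
    (hR : (R = ∫ t in (0 : ℝ)..(Real.pi / 2),
            Real.sin t * ((suppF (b t)).card : ℝ) * (a ⬝ᵥ (b t - β))) ∨
          (R = (a ⬝ᵥ (b 0 - β)) * ∫ t in (0 : ℝ)..(Real.pi / 2),
            Real.sin t * ((suppF (b t)).card : ℝ))) :
    ENNReal.ofReal (Real.exp (u * (pivot n σ Sig a β (b 0) X e 0 - TofModel n σ Sig a X e
      - √(Fisher σ Sig a / n) * R) / Λ))
      ≤ Hdom (6 * |u| * KK M1 M2 m4 M5) l N Sig a β ((X, e), g) := by
  obtain ⟨E, hE, hET, hB⟩ := H.rem_bound hn (mul_pos hσ hΛ) (C0_pos hS ha) hM1 hM2 hm4 hM5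
  have hB := hB R hR
  obtain ⟨K, hKK⟩ : ∃ K, K = KK M1 M2 m4 M5 := ⟨_, rfl⟩
  obtain ⟨T0, hT0⟩ : ∃ T0, T0 = Tfun 1 n (fun _ => uv e) (C0 Sig a • z0vec X Sig a) := ⟨_, rfl⟩
  obtain ⟨TP, hTP⟩ : ∃ TP : ℝ → ℝ, ∀ t, TP t =
      TPath (Wmat X Sig a + Matrix.vecMulVec (z0Path e (z0vec X Sig a) g t) a) a β e
        (z0Path e (z0vec X Sig a) g t) (wPath (C0 Sig a) e (z0vec X Sig a) g t)
        (suppF (b t)) (b t) := ⟨_, fun _ => rfl⟩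
  obtain ⟨I, hI⟩ : ∃ I, I = ∫ t in (0 : ℝ)..(Real.pi / 2), E t := ⟨_, rfl⟩
  simp only [← hTP, ← hKK, ← hT0, ← hI] at hB hET hK ⊢
  have hT0' : 0 ≤ T0 := hT0 ▸ Tfun_nonneg _ _ _ _
  have hTP' : ∀ t, 0 ≤ TP t := fun t => by rw [hTP]; exact Tfun_nonneg _ _ _ _
  obtain ⟨Q, hQ⟩ : ∃ Q, Q = pivot n σ Sig a β (b 0) X e 0 - TofModel n σ Sig a X e
      - √(Fisher σ Sig a / n) * R := ⟨_, rfl⟩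
  rw [← hQ]
  have hQb : |Q| ≤ Λ * (K * T0 + K * TP (Real.pi / 2) + I) := by
    rw [hQ, pivot_sub_T hn, ← mul_sub, abs_mul, abs_of_nonneg (Real.sqrt_nonneg _)]
    refine (mul_le_mul_of_nonneg_left hB (Real.sqrt_nonneg _)).trans (le_of_eq ?_)
    rw [← mul_assoc, sqrt_fisher_mul hn hσ hS ha]
  have hexp : u * Q / Λ ≤ |u| * (K * T0) + |u| * (K * TP (Real.pi / 2)) + |u| * I := by
    rw [div_le_iff₀ hΛ]
    calc u * Q ≤ |u| * |Q| := by rw [← abs_mul]; exact le_abs_self _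
      _ ≤ |u| * (Λ * (K * T0 + K * TP (Real.pi / 2) + I)) :=
          mul_le_mul_of_nonneg_left hQb (abs_nonneg _)
      _ = _ := by ring
  have hPsi : ∀ t, 0 ≤ t → ENNReal.ofReal (Real.exp (6 * |u| * K * TP t))
      ≤ PsiP (6 * |u| * K) l N Sig a β t ((X, e), g) := by
    intro t ht
    have := le_Psi (H.kkt t) (H.det ht) (hN t ht) (6 * |u| * K) a (u0vec Sig a)
      (wPath (C0 Sig a) e (z0vec X Sig a) g t)
    rw [Wmat_u0 X hS ha] at this
    rw [hTP, PsiP, XPath_eq]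
    exact this
  have huK : 0 ≤ |u| * K := mul_nonneg (abs_nonneg _) hK
  have h3 : ENNReal.ofReal (Real.exp (3 * (|u| * I))) ≤ ENNReal.ofReal (2 / Real.pi) *
      ∫⁻ t in Set.Ioc 0 (Real.pi / 2), PsiP (6 * |u| * K) l N Sig a β t ((X, e), g) := by
    have := exp_integral_le hE (3 * |u|)
      (f := fun t => PsiP (6 * |u| * K) l N Sig a β t ((X, e), g)) ?_
    · rw [← hI] at this
      rw [← mul_assoc]
      exact this
    · filter_upwards [hET] with t h ht
      refine le_trans (ENNReal.ofReal_le_ofReal (Real.exp_le_exp.2 ?_)) (hPsi t ht.le)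
      have hp : 3 * |u| * (Real.pi / 2) ≤ 6 * |u| := by
        nlinarith [Real.pi_le_four, abs_nonneg u]
      calc 3 * |u| * (Real.pi / 2) * E t ≤ 3 * |u| * (Real.pi / 2) * (K * TP t) :=
            mul_le_mul_of_nonneg_left (h ht) (by positivity)
        _ ≤ 6 * |u| * (K * TP t) := mul_le_mul_of_nonneg_right hp (mul_nonneg hK (hTP' t))
        _ = _ := by ring
  calc ENNReal.ofReal (Real.exp (u * Q / Λ))
      ≤ ENNReal.ofReal (1 / 3 * (Real.exp (3 * (|u| * (K * T0)))
          + Real.exp (3 * (|u| * (K * TP (Real.pi / 2)))) + Real.exp (3 * (|u| * I)))) :=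
        ENNReal.ofReal_le_ofReal ((Real.exp_le_exp.2 hexp).trans (exp_third _ _ _))
    _ = ENNReal.ofReal (1 / 3) * (ENNReal.ofReal (Real.exp (3 * (|u| * (K * T0))))
          + ENNReal.ofReal (Real.exp (3 * (|u| * (K * TP (Real.pi / 2)))))
          + ENNReal.ofReal (Real.exp (3 * (|u| * I)))) := by
        rw [ENNReal.ofReal_mul (by norm_num), ENNReal.ofReal_add (by positivity) (by positivity),
          ENNReal.ofReal_add (by positivity) (by positivity)]
    _ ≤ Hdom (6 * |u| * K) l N Sig a β ((X, e), g) := by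
        unfold Hdom
        refine mul_le_mul_right (add_le_add (add_le_add ?_ ?_) h3) _
        · rw [ThetaP]
          refine ENNReal.ofReal_le_ofReal (Real.exp_le_exp.2 ?_)
          show _ ≤ 6 * |u| * K * Tfun 1 n (fun _ => uv e) (C0 Sig a • z0vec X Sig a)
          rw [← hT0]
          nlinarith [mul_nonneg huK hT0']
        · refine le_trans (ENNReal.ofReal_le_ofReal (Real.exp_le_exp.2 ?_))
            (hPsi _ (by positivity))
          nlinarith [mul_nonneg huK (hTP' (Real.pi / 2))]

/-- A set integral of a nonnegative function over a possibly nonmeasurable set is bounded through a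
measurable dominating function. -/
lemma setIntegral_le_of_dom {Ω : Type} [MeasureSpace Ω] {s : Set Ω} {f : Ω → ℝ} {h : Ω → ℝ≥0∞}
    (hf : ∀ ω, 0 ≤ f ω) (hh : Measurable h) {K : ℝ} (hK : 0 ≤ K)
    (hfh : ∀ ω ∈ s, ENNReal.ofReal (f ω) ≤ h ω) (hInt : ∫⁻ ω, h ω ≤ ENNReal.ofReal K) :
    ∫ ω in s, f ω ≤ K := by
  by_cases hi : IntegrableOn f s
  · rw [← ENNReal.ofReal_le_ofReal_iff hK,
      ofReal_integral_eq_lintegral_ofReal hi (Eventually.of_forall hf)]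
    exact ((setLIntegral_mono_ae hh.aemeasurable (Eventually.of_forall hfh)).trans
      (setLIntegral_le_lintegral _ _)).trans hInt
  · rw [integral_undef hi]
    exact hK

lemma KK_pos {M1 M2 m4 M5 : ℝ} (hM1 : 0 < M1) (hM2 : 0 < M2) (hm4 : 0 < m4) (hM5 : 0 < M5) :
    0 < KK M1 M2 m4 M5 := by
  unfold KK K1
  positivity

end proof

end BZ

namespace BZ

/-- exponential moment bounds for the remainders `Rem_I` and `Rem_II`
along the Gaussian interpolation path, on the event `Ω₁ ∩ Ω₂`, with a constant `M̄`
depending only on `(M₁, M₂, M₄, M₅)`. -/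
theorem statement_11 (M1 M2 M4 M5 : ℝ)
    (hM1 : 0 < M1) (hM2 : 0 < M2) (hM4 : 0 < M4) (hM5 : 0 < M5) :
    ∃ Mbar : ℝ, 0 < Mbar ∧
    ∀ (Ω : Type) [MeasureSpace Ω] [IsProbabilityMeasure (volume : Measure Ω)]
      (n p m k : ℕ) (M3 ρs η2 η3 e1 e2 e3 e4 σ lam : ℝ)
      (Sig : Matrix (Fin p) (Fin p) ℝ) (β a0 : Fin p → ℝ)
      (X : Ω → Fin n → Fin p → ℝ) (eps g : Ω → Fin n → ℝ)
      (bpath bnl : ℝ → Ω → Fin p → ℝ),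
      0 < M3 →
      AssumptionM n p m k ρs η2 η3 e1 e2 e3 e4 σ lam Sig (suppF β) →
      Sig.PosDef → a0 ≠ 0 →
      GaussDesign n p Sig X →
      GaussNoise n σ eps →
      IsoGaussVec n (quadA0 Sig a0)⁻¹ g →
      IndepFun X eps →
      IndepFun (fun ω => (X ω, eps ω)) g →
      (∀ (t : ℝ) (ω : Ω), IsLasso
        (fun i => eps ω i + mulVec' (XPath (X ω) Sig a0 (eps ω) (g ω) t) β i)
        (XPath (X ω) Sig a0 (eps ω) (g ω) t) lam (bpath t ω)) →
      (∀ (t : ℝ) (ω : Ω), IsLasso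
        (mulVec' (XPath (X ω) Sig a0 (eps ω) (g ω) t) β)
        (XPath (X ω) Sig a0 (eps ω) (g ω) t) lam (bnl t ω)) →
      ∀ u : ℝ, |u| ≤ Real.sqrt (n : ℝ) / Mbar →
        (∫ ω in OmegaOne X Sig a0 eps g bpath ∩
            OmegaTwo X Sig a0 β eps g bpath bnl σ (lam0 n p k) M1 M2 M3 M4 M5
              (l0 β + m + k) (l0 β + k),
            Real.exp (u * RemI σ Sig a0 β X eps bpath ω /
              (lam0 n p k * Real.sqrt ((l0 β + m + k : ℕ) : ℝ))))
          ≤ 2 * Real.exp (Mbar ^ 2 * u ^ 2) ∧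
        (∫ ω in OmegaOne X Sig a0 eps g bpath ∩
            OmegaTwo X Sig a0 β eps g bpath bnl σ (lam0 n p k) M1 M2 M3 M4 M5
              (l0 β + m + k) (l0 β + k),
            Real.exp (u * RemII σ Sig a0 β X eps bpath ω /
              (lam0 n p k * Real.sqrt ((l0 β + m + k : ℕ) : ℝ))))
          ≤ 2 * Real.exp (Mbar ^ 2 * u ^ 2) := by
  have hKK : 0 < KK M1 M2 (√M4) M5 := KK_pos hM1 hM2 (Real.sqrt_pos.2 hM4) hM5
  -- the functionals enter with the factor `τ = 6 |u| KK`; `312 = 6 · 52` turns the constraint on `u`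
  -- into `τ ≤ √n / 52`, and `338 τ² ≤ (312 KK)² u²`
  refine ⟨312 * KK M1 M2 (√M4) M5, by positivity, ?_⟩
  intro Ω _ _ n p m k M3 ρs η2 η3 e1 e2 e3 e4 σ lam Sig β a0 X eps g bpath bnl _ hM hS ha hX heps hg
    hi1 hi2 hb _ u hu
  obtain ⟨hXm, A, hA, hXl⟩ := hX
  have hcard : (suppF β).card = l0 β := rfl
  have hn : 0 < n := hM.hn
  have hn' : (0 : ℝ) < n := by exact_mod_cast hn
  have hσ := hM.hσ
  have hk := hM.hk
  have hN : 2 * (l0 β + m + k) ≤ n := by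
    have h1 := hM.hsize2
    rw [hcard] at h1
    have he : e1 ^ 2 ≤ 1 := by nlinarith [hM.he1, hM.he2, hM.he12]
    have h2 : ((l0 β + m + k + 1 : ℕ) : ℝ) ≤ n / 2 := by
      refine h1.trans ?_
      nlinarith
    have h3 : ((2 * (l0 β + m + k) : ℕ) : ℝ) ≤ n := by
      push_cast at h2 ⊢
      linarith
    exact_mod_cast h3
  have hlam0 : 0 < lam0 n p k := by
    have hk' : (0 : ℝ) < k := by exact_mod_cast hk
    have hkp : (k : ℝ) ≤ p := by
      have := hM.hsize1
      exact_mod_cast (by omega : k ≤ p)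
    refine Real.sqrt_pos.2 (mul_pos (by positivity) (Real.log_pos ?_))
    rw [lt_div_iff₀ hk']
    linarith
  have hlam : 0 ≤ lam := by
    have h2 := hM.hη2.1
    have h3 := hM.hη3.1
    rw [hM.hlam]
    positivity
  have hs : (0 : ℝ) < ((l0 β + m + k : ℕ) : ℝ) := by exact_mod_cast (by omega : 0 < l0 β + m + k)
  have hΛ : 0 < lam0 n p k * √((l0 β + m + k : ℕ) : ℝ) := mul_pos hlam0 (Real.sqrt_pos.2 hs)
  have hτ : 0 ≤ 6 * |u| * KK M1 M2 (√M4) M5 := by positivity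
  have hτ' : 6 * |u| * KK M1 M2 (√M4) M5 ≤ √n / 52 := by
    rw [le_div_iff₀ (by positivity)] at hu ⊢
    linarith
  have hdom := lintegral_Hdom hn hS ha hA hτ hτ' hN hXm hXl heps.1 hg hi1 hi2 (n * lam) β
  have hd : Measurable fun ω => ((X ω, eps ω), g ω) := (hXm.prodMk heps.1).prodMk hg.1
  have hHm := (meas_Hdom (n := n) (6 * |u| * KK M1 M2 (√M4) M5) (n * lam) (l0 β + m + k) Sig a0
    β).comp hd
  have hfin : ENNReal.ofReal (2 * Real.exp (338 * (6 * |u| * KK M1 M2 (√M4) M5) ^ 2))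
      ≤ ENNReal.ofReal (2 * Real.exp ((312 * KK M1 M2 (√M4) M5) ^ 2 * u ^ 2)) := by
    refine ENNReal.ofReal_le_ofReal (mul_le_mul_of_nonneg_left (Real.exp_le_exp.2 ?_) (by norm_num))
    rw [mul_pow, mul_pow, sq_abs, mul_pow]
    nlinarith [mul_nonneg (sq_nonneg u) (sq_nonneg (KK M1 M2 (√M4) M5))]
  have hpath : ∀ ω ∈ OmegaOne X Sig a0 eps g bpath ∩
      OmegaTwo X Sig a0 β eps g bpath bnl σ (lam0 n p k) M1 M2 M3 M4 M5 (l0 β + m + k) (l0 β + k),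
      PathHyp (Wmat (X ω) Sig a0) a0 β (eps ω) (z0vec (X ω) Sig a0) (g ω) (fun t => bpath t ω)
        (n * lam) (σ * (lam0 n p k * √((l0 β + m + k : ℕ) : ℝ))) (C0 Sig a0) M1 M2 (√M4) M5 ∧
      ∀ t, 0 ≤ t → (suppF (bpath t ω)).card ≤ l0 β + m + k := by
    rintro ω ⟨h1, h2⟩
    refine ⟨pathHyp_of hn hS hA ha hlam hM4 (by omega) (fun t => hb t ω) h1 fun t ht => ?_,
      fun t ht => (h2 t ht).2.2.2.1.1⟩
    obtain ⟨h3, _, h4, h5, h6, h7⟩ := h2 t ht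
    exact ⟨h3, h4, h5.1, h6, h7⟩
  refine ⟨setIntegral_le_of_dom (fun _ => (Real.exp_pos _).le) hHm (by positivity) (fun ω hω => ?_)
      (hdom.trans hfin),
    setIntegral_le_of_dom (fun _ => (Real.exp_pos _).le) hHm (by positivity) (fun ω hω => ?_)
      (hdom.trans hfin)⟩
  · obtain ⟨H, hc⟩ := hpath ω hω
    exact exp_rem_le hn hS ha hσ hΛ hM1 hM2 (Real.sqrt_pos.2 hM4) hM5 H hc hKK.le u _ (Or.inl rfl)
  · obtain ⟨H, hc⟩ := hpath ω hω
    have := exp_rem_le hn hS ha hσ hΛ hM1 hM2 (Real.sqrt_pos.2 hM4) hM5 H hc hKK.le u _ (Or.inr rfl)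
    rw [← mul_assoc] at this
    exact this

end BZ
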